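/- Let d ≥ 1, let V : ℝ^d → ℝ be smooth with e^{−V} Lebesgue-integrable, let μ be the probability measure on ℝ^d with density proportional to e^{−V}, and assume there exists ρ ∈ ℝ such that ∇²V(x) ≥ ρ I_d for all x (as symmetric matrices). Let a : ℝ^d → ℝ be smooth and positive, and assume a, a^{−1} and |∇a| are bounded. Define κ_a = inf_{x ∈ ℝ^d} { 2ρ_−(∇²V(x)) − a(x)·L(a^{−1})(x) }, where ρ_−(A) denotes the smallest eigenvalue of a symmetric matrix A and Lg = Δg − ∇V·∇g. If κ_a > 0, then for every compactly supported smooth function f : ℝ^d → ℝ one has Ent_μ(f²) ≤ (4 ‖a‖_∞ ‖a^{−1}‖_∞ / κ_a) ∫_{ℝ^d} |∇f|² dμ. -/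

import Mathlib

open Real MeasureTheory Finset Matrix Set

noncomputable section

/-- Partial derivative of `f` in the `i`-th coordinate direction. -/
def pd {d : ℕ} (i : Fin d) (f : EuclideanSpace ℝ (Fin d) → ℝ)
    (x : EuclideanSpace ℝ (Fin d)) : ℝ :=
  fderiv ℝ f x (EuclideanSpace.single i 1)

/-- Laplacian of `f`. -/
def lap {d : ℕ} (f : EuclideanSpace ℝ (Fin d) → ℝ) (x : EuclideanSpace ℝ (Fin d)) : ℝ :=
  ∑ i, pd i (fun y => pd i f y) x

/-- Diffusion operator `L f = Δ f - ∇V ⋅ ∇f` associated with the potential `V`. -/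
def diffOp {d : ℕ} (V f : EuclideanSpace ℝ (Fin d) → ℝ) (x : EuclideanSpace ℝ (Fin d)) : ℝ :=
  lap f x - ∑ i, pd i V x * pd i f x

/-- Hessian matrix of `V` at `x`. -/
def hess {d : ℕ} (V : EuclideanSpace ℝ (Fin d) → ℝ) (x : EuclideanSpace ℝ (Fin d)) :
    Matrix (Fin d) (Fin d) ℝ :=
  Matrix.of fun i j => pd i (fun y => pd j V y) x

/-- Smallest (real) eigenvalue of a matrix: the infimum of its real spectrum. -/
def minEig {d : ℕ} (A : Matrix (Fin d) (Fin d) ℝ) : ℝ :=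
  sInf (spectrum ℝ A)

/-- The probability measure with density proportional to `exp (-V)` w.r.t. Lebesgue measure. -/
def gibbs {d : ℕ} (V : EuclideanSpace ℝ (Fin d) → ℝ) : Measure (EuclideanSpace ℝ (Fin d)) :=
  (∫⁻ x, ENNReal.ofReal (Real.exp (-V x)))⁻¹ •
    volume.withDensity fun x => ENNReal.ofReal (Real.exp (-V x))

/-- Entropy of `g` with respect to the measure `μ`. -/
def entropy {d : ℕ} (μ : Measure (EuclideanSpace ℝ (Fin d)))
    (g : EuclideanSpace ℝ (Fin d) → ℝ) : ℝ :=
  ∫ x, g x * Real.log (g x) ∂μ - (∫ x, g x ∂μ) * Real.log (∫ x, g x ∂μ)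

/-- Squared Euclidean norm of the gradient of `f` at `x`. -/
def gradSq {d : ℕ} (f : EuclideanSpace ℝ (Fin d) → ℝ) (x : EuclideanSpace ℝ (Fin d)) : ℝ :=
  ∑ i, (pd i f x) ^ 2

end


/-! Let `P t` be the semigroup of `diffOp V`, `u = P t g` with `g > 0`, and `b = a⁻¹`. By Bochner's
formula `φ = |∇u|² / u` satisfies `∂ₜφ ≤ diffOp V φ - 2 (minEig (hess V)) φ`, so testing against `b`
gives
`d/dt ∫ b φ ∂μ ≤ ∫ (diffOp V b - 2 (minEig (hess V)) b) φ ∂μ ≤ -κ ∫ b φ ∂μ`. Hence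
`∫₀^∞ ∫ b φ ∂μ dt ≤ κ⁻¹ ∫ b |∇g|² / g ∂μ`. Since `-d/dt ∫ u log u ∂μ = ∫ φ ∂μ ≤ ‖a‖ ∫ b φ ∂μ`, this
bounds the entropy of `g`, and `g = f² + ε`, for which `|∇g|² / g ≤ 4 |∇f|²`, gives the inequality.

The semigroup is never constructed. For potentials with bounded derivatives it is replaced by a
random walk with finitely many jumps, along which the differential inequalities hold up to
`O(η³)` per step of duration `η²`, and a Poincaré inequality on balls replaces the convergence to
equilibrium. A general `V` is exhausted by such potentials with a common lower bound on the Hessian,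
and `b` is localised by cutoffs: its drift along `∇V` is controlled because cutoffs are almost
subharmonic for semiconvex potentials. -/

open scoped ContDiff BigOperators

local notation "ℝ^" d:max => EuclideanSpace ℝ (Fin d)

noncomputable section

variable {d : ℕ}

/-- Smooth real functions on `ℝᵈ`, the class on which iterated partial derivatives are computed. -/
abbrev Smooth (u : ℝ^d → ℝ) : Prop := ContDiff ℝ ∞ u

/-- The carré du champ `Γ(u, v) = ∇u ⋅ ∇v` of the operators `diffOp V`. -/
def gradDot (u v : ℝ^d → ℝ) (x : ℝ^d) : ℝ := ∑ i, pd i u x * pd i v x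

/-- The gradient as a vector field. -/
def gradVec (u : ℝ^d → ℝ) (x : ℝ^d) : ℝ^d := WithLp.toLp 2 fun i => pd i u x

/-- The Hessian of `u` at `x` as a quadratic form in `v`. -/
def hessForm (u : ℝ^d → ℝ) (x : ℝ^d) (v : Fin d → ℝ) : ℝ :=
  ∑ i, ∑ j, v i * pd i (pd j u) x * v j

section Calculus

variable {u v : ℝ^d → ℝ}

theorem Smooth.differentiable (hu : Smooth u) : Differentiable ℝ u :=
  ContDiff.differentiable hu (by simp)

protected theorem Smooth.pd (hu : Smooth u) (i : Fin d) : Smooth (pd i u) :=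
  (ContDiff.fderiv_right hu (by simp)).clm_apply contDiff_const

theorem pd_const (i : Fin d) (c : ℝ) : pd i (fun _ : ℝ^d => c) = fun _ => 0 := by
  funext x
  simp [pd]

theorem pd_comp {φ φ' : ℝ → ℝ} (hu : Differentiable ℝ u)
    (hφ : ∀ x, HasDerivAt φ (φ' (u x)) (u x)) (i : Fin d) :
    pd i (fun x => φ (u x)) = fun x => φ' (u x) * pd i u x := by
  funext x
  have := (hφ x).comp_hasFDerivAt x (hu x).hasFDerivAt
  simp [pd, show (fun x => φ (u x)) = φ ∘ u from rfl, this.fderiv]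

theorem pd_add (hu : Differentiable ℝ u) (hv : Differentiable ℝ v) (i : Fin d) :
    pd i (fun x => u x + v x) = fun x => pd i u x + pd i v x := by
  funext x
  simp [pd, fderiv_fun_add (hu x) (hv x)]

theorem pd_mul (hu : Differentiable ℝ u) (hv : Differentiable ℝ v) (i : Fin d) :
    pd i (fun x => u x * v x) = fun x => pd i u x * v x + u x * pd i v x := by
  funext x
  simp only [pd, fderiv_fun_mul (hu x) (hv x), _root_.add_apply, _root_.smul_apply, smul_eq_mul]
  ring

theorem pd_const_mul (hu : Differentiable ℝ u) (c : ℝ) (i : Fin d) :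
    pd i (fun x => c * u x) = fun x => c * pd i u x := by
  simp [pd_mul (differentiable_const c) hu, pd_const]

theorem pd_sum {ι : Type*} {s : Finset ι} {w : ι → ℝ^d → ℝ} (hw : ∀ j ∈ s, Differentiable ℝ (w j))
    (i : Fin d) : pd i (fun x => ∑ j ∈ s, w j x) = fun x => ∑ j ∈ s, pd i (w j) x := by
  funext x
  simp [pd, fderiv_fun_sum fun j hj => hw j hj x]

theorem pd_inv (hu : Differentiable ℝ u) (h : ∀ x, u x ≠ 0) (i : Fin d) :
    pd i (fun x => (u x)⁻¹) = fun x => -(u x ^ 2)⁻¹ * pd i u x :=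
  pd_comp (φ := fun s => s⁻¹) (φ' := fun s => -(s ^ 2)⁻¹) hu (fun x => hasDerivAt_inv (h x)) i

theorem pd_congr_nhds {x : ℝ^d} (h : u =ᶠ[nhds x] v) (i : Fin d) : pd i u x = pd i v x := by
  simp only [pd, h.fderiv_eq]

theorem pd_eventuallyEq {x : ℝ^d} (h : u =ᶠ[nhds x] v) (i : Fin d) :
    pd i u =ᶠ[nhds x] pd i v := by
  filter_upwards [h.eventuallyEq_nhds] with y hy using pd_congr_nhds hy i

theorem fderiv_eq_sum (u : ℝ^d → ℝ) (x y : ℝ^d) : fderiv ℝ u x y = ∑ i, y i * pd i u x := by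
  have hy : y = ∑ i, y i • EuclideanSpace.single i (1 : ℝ) := by
    ext j
    simp [Finset.sum_apply, Pi.single_apply]
  conv_lhs => rw [hy]
  simp [pd]

theorem gradDot_comm (u v : ℝ^d → ℝ) (x : ℝ^d) : gradDot u v x = gradDot v u x :=
  Finset.sum_congr rfl fun _ _ => mul_comm _ _

theorem gradSq_eq_gradDot (u : ℝ^d → ℝ) (x : ℝ^d) : gradSq u x = gradDot u u x :=
  Finset.sum_congr rfl fun _ _ => sq _

theorem gradSq_nonneg (u : ℝ^d → ℝ) (x : ℝ^d) : 0 ≤ gradSq u x :=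
  Finset.sum_nonneg fun _ _ => sq_nonneg _

theorem diffOp_eq (V u : ℝ^d → ℝ) (x : ℝ^d) : diffOp V u x = lap u x - gradDot V u x := rfl

protected theorem Smooth.gradDot (hu : Smooth u) (hv : Smooth v) : Smooth (gradDot u v) :=
  ContDiff.sum fun i _ => (hu.pd i).mul (hv.pd i)

protected theorem Smooth.gradSq (hu : Smooth u) : Smooth (gradSq u) :=
  ContDiff.sum fun i _ => (hu.pd i).pow 2

protected theorem Smooth.lap (hu : Smooth u) : Smooth (lap u) :=
  ContDiff.sum fun i _ => (hu.pd i).pd i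

protected theorem Smooth.diffOp {V : ℝ^d → ℝ} (hV : Smooth V) (hu : Smooth u) :
    Smooth (diffOp V u) :=
  hu.lap.sub (hV.gradDot hu)

theorem gradDot_comp_right {φ φ' : ℝ → ℝ} (hv : Differentiable ℝ v)
    (hφ : ∀ x, HasDerivAt φ (φ' (v x)) (v x)) (x : ℝ^d) :
    gradDot u (fun y => φ (v y)) x = φ' (v x) * gradDot u v x := by
  simp only [gradDot, pd_comp hv hφ, Finset.mul_sum]
  exact Finset.sum_congr rfl fun i _ => by ring

theorem gradSq_comp {φ φ' : ℝ → ℝ} (hu : Differentiable ℝ u)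
    (hφ : ∀ x, HasDerivAt φ (φ' (u x)) (u x)) (x : ℝ^d) :
    gradSq (fun y => φ (u y)) x = φ' (u x) ^ 2 * gradSq u x := by
  simp only [gradSq, pd_comp hu hφ, mul_pow, Finset.mul_sum]

theorem pd_pd_comp {φ φ' φ'' : ℝ → ℝ} (hu : Smooth u) (hφ : ∀ s, HasDerivAt φ (φ' s) s)
    (hφ' : ∀ s, HasDerivAt φ' (φ'' s) s) (i j : Fin d) (x : ℝ^d) :
    pd i (pd j fun y => φ (u y)) x
      = φ'' (u x) * pd i u x * pd j u x + φ' (u x) * pd i (pd j u) x := by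
  have hd := hu.differentiable
  have hφ'u : Differentiable ℝ fun y => φ' (u y) := fun y =>
    (hφ' (u y)).differentiableAt.comp y (hd y)
  rw [pd_comp hd (fun y => hφ (u y)), pd_mul hφ'u (hu.pd j).differentiable,
    pd_comp hd (fun y => hφ' (u y))]

theorem hessForm_comp {φ φ' φ'' : ℝ → ℝ} (hu : Smooth u) (hφ : ∀ s, HasDerivAt φ (φ' s) s)
    (hφ' : ∀ s, HasDerivAt φ' (φ'' s) s) (x : ℝ^d) (w : Fin d → ℝ) :
    hessForm (fun y => φ (u y)) x w
      = φ'' (u x) * (∑ i, pd i u x * w i) ^ 2 + φ' (u x) * hessForm u x w := by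
  rw [sq, Finset.sum_mul_sum]
  simp only [hessForm, pd_pd_comp hu hφ hφ', Finset.mul_sum, ← Finset.sum_add_distrib]
  exact Finset.sum_congr rfl fun i _ => Finset.sum_congr rfl fun j _ => by ring

theorem diffOp_comp {V : ℝ^d → ℝ} {φ φ' φ'' : ℝ → ℝ} (hu : Smooth u)
    (hφ : ∀ s, HasDerivAt φ (φ' s) s) (hφ' : ∀ s, HasDerivAt φ' (φ'' s) s) (x : ℝ^d) :
    diffOp V (fun y => φ (u y)) x = φ' (u x) * diffOp V u x + φ'' (u x) * gradSq u x := by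
  have hlap : lap (fun y => φ (u y)) x = φ'' (u x) * gradSq u x + φ' (u x) * lap u x := by
    simp only [lap, gradSq, Finset.mul_sum, ← Finset.sum_add_distrib]
    exact Finset.sum_congr rfl fun i _ => by rw [pd_pd_comp hu hφ hφ']; ring
  rw [diffOp_eq, hlap, gradDot_comp_right hu.differentiable (fun y => hφ (u y)), diffOp_eq]
  ring

theorem diffOp_mul {V : ℝ^d → ℝ} (hu : Smooth u) (hv : Smooth v) (x : ℝ^d) :
    diffOp V (fun y => u y * v y) x
      = u x * diffOp V v x + v x * diffOp V u x + 2 * gradDot u v x := by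
  have hpd (i : Fin d) : pd i (pd i fun y => u y * v y) x
      = u x * pd i (pd i v) x + v x * pd i (pd i u) x + 2 * (pd i u x * pd i v x) := by
    rw [pd_mul hu.differentiable hv.differentiable,
      pd_add ((hu.pd i).differentiable.fun_mul hv.differentiable)
        (hu.differentiable.fun_mul (hv.pd i).differentiable),
      pd_mul (hu.pd i).differentiable hv.differentiable,
      pd_mul hu.differentiable (hv.pd i).differentiable]
    ring
  have hlap : lap (fun y => u y * v y) x
      = u x * lap v x + v x * lap u x + 2 * gradDot u v x := by
    simp only [lap, hpd, gradDot, Finset.mul_sum, Finset.sum_add_distrib]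
  have hdot : gradDot V (fun y => u y * v y) x
      = u x * gradDot V v x + v x * gradDot V u x := by
    simp only [gradDot, pd_mul hu.differentiable hv.differentiable, Finset.mul_sum,
      ← Finset.sum_add_distrib]
    exact Finset.sum_congr rfl fun i _ => by ring
  simp only [diffOp_eq, hlap, hdot]
  ring

end Calculus

/-- All partial derivatives of `u` of order at most `k` are bounded by `S`. -/
def CkBound : ℕ → ℝ → (ℝ^d → ℝ) → Prop
  | 0, S, u => ∀ x, |u x| ≤ S
  | k + 1, S, u => (∀ x, |u x| ≤ S) ∧ ∀ i, CkBound k S (pd i u)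

namespace CkBound

variable {k l : ℕ} {S S' c : ℝ} {u v : ℝ^d → ℝ}

protected theorem abs_le (h : CkBound k S u) (x : ℝ^d) : |u x| ≤ S := by
  cases k with
  | zero => exact h x
  | succ k => exact h.1 x

protected theorem nonneg (h : CkBound k S u) : 0 ≤ S := (abs_nonneg _).trans (h.abs_le 0)

protected theorem pd (h : CkBound (k + 1) S u) (i : Fin d) : CkBound k S (pd i u) := h.2 i

protected theorem mono (h : CkBound k S u) (hS : S ≤ S') : CkBound k S' u := by
  induction k generalizing u with
  | zero => exact fun x => (h x).trans hS
  | succ k ih => exact ⟨fun x => (h.1 x).trans hS, fun i => ih (h.2 i)⟩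

theorem pred (h : CkBound (k + 1) S u) : CkBound k S u := by
  induction k generalizing u with
  | zero => exact h.1
  | succ k ih => exact ⟨h.1, fun i => ih (h.2 i)⟩

theorem of_le (h : CkBound k S u) (hlk : l ≤ k) : CkBound l S u := by
  induction hlk with
  | refl => exact h
  | step _ ih => exact ih h.pred

protected theorem const (h : |c| ≤ S) : CkBound k S fun _ : ℝ^d => c := by
  induction k generalizing c with
  | zero => exact fun _ => h
  | succ k ih =>
    refine ⟨fun _ => h, fun i => ?_⟩
    rw [pd_const]
    exact ih (by simpa using (abs_nonneg c).trans h)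

protected theorem add (hu : Smooth u) (hv : Smooth v) (h : CkBound k S u) (h' : CkBound k S' v) :
    CkBound k (S + S') fun x => u x + v x := by
  induction k generalizing u v with
  | zero => exact fun x => (abs_add_le _ _).trans (add_le_add (h x) (h' x))
  | succ k ih =>
    refine ⟨fun x => (abs_add_le _ _).trans (add_le_add (h.1 x) (h'.1 x)), fun i => ?_⟩
    rw [pd_add hu.differentiable hv.differentiable]
    exact ih (hu.pd i) (hv.pd i) (h.2 i) (h'.2 i)

protected theorem mul (hu : Smooth u) (hv : Smooth v) (h : CkBound k S u) (h' : CkBound k S' v) :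
    CkBound k (2 ^ k * (S * S')) fun x => u x * v x := by
  have hS := h.nonneg
  have hSS' := mul_nonneg hS h'.nonneg
  have habs {f g : ℝ^d → ℝ} (hf : ∀ x, |f x| ≤ S) (hg : ∀ x, |g x| ≤ S') (x : ℝ^d) :
      |f x * g x| ≤ S * S' := by
    rw [abs_mul]
    exact mul_le_mul (hf x) (hg x) (abs_nonneg _) hS
  induction k generalizing u v with
  | zero => simpa [CkBound] using habs h h'
  | succ k ih =>
    have htwo : (1 : ℝ) ≤ 2 ^ (k + 1) := one_le_pow₀ one_le_two
    refine ⟨fun x => (habs h.1 h'.1 x).trans (le_mul_of_one_le_left hSS' htwo), fun i => ?_⟩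
    rw [pd_mul hu.differentiable hv.differentiable]
    exact (CkBound.add ((hu.pd i).mul hv) (hu.mul (hv.pd i)) (ih (hu.pd i) hv (h.2 i) h'.pred)
      (ih hu (hv.pd i) h.pred (h'.2 i))).mono (by rw [pow_succ]; linarith)

protected theorem sum {ι : Type*} {s : Finset ι} {S : ι → ℝ} {u : ι → ℝ^d → ℝ}
    (hu : ∀ j ∈ s, Smooth (u j)) (h : ∀ j ∈ s, CkBound k (S j) (u j)) :
    CkBound k (∑ j ∈ s, S j) fun x => ∑ j ∈ s, u j x := by
  classical
  induction s using Finset.induction_on with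
  | empty => simpa using CkBound.const (by simp)
  | insert a s ha ih =>
    simp only [Finset.sum_insert ha]
    exact CkBound.add (hu a (by simp)) (ContDiff.sum fun j hj => hu j (by simp [hj]))
      (h a (by simp)) (ih (fun j hj => hu j (by simp [hj])) fun j hj => h j (by simp [hj]))

protected theorem const_mul (hu : Smooth u) (h : CkBound k S u) :
    CkBound k (|c| * S) fun x => c * u x := by
  have hmul {f : ℝ^d → ℝ} (hf : ∀ x, |f x| ≤ S) (x : ℝ^d) : |c * f x| ≤ |c| * S := by
    rw [abs_mul]
    exact mul_le_mul_of_nonneg_left (hf x) (abs_nonneg c)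
  induction k generalizing u with
  | zero => exact hmul h
  | succ k ih =>
    refine ⟨hmul h.1, fun i => ?_⟩
    rw [pd_const_mul hu.differentiable]
    exact ih (hu.pd i) (h.2 i)

theorem exists_inv (k : ℕ) (S : ℝ) {ε : ℝ} (hε : 0 < ε) : ∃ S', ∀ u : ℝ^d → ℝ,
    Smooth u → (∀ x, ε ≤ u x) → CkBound k S u → CkBound k S' fun x => (u x)⁻¹ := by
  have habs (u : ℝ^d → ℝ) (hu : ∀ x, ε ≤ u x) (x : ℝ^d) : |(u x)⁻¹| ≤ ε⁻¹ := by
    rw [abs_of_pos (inv_pos.2 (hε.trans_le (hu x)))]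
    exact inv_anti₀ hε (hu x)
  induction k with
  | zero => exact ⟨ε⁻¹, fun u _ hu _ => habs u hu⟩
  | succ k ih =>
    obtain ⟨S', hS'⟩ := ih
    refine ⟨max ε⁻¹ (|(-1)| * (2 ^ k * ((2 ^ k * (S' * S')) * S))), fun u hu hεu hb => ?_⟩
    have hne (x : ℝ^d) : u x ≠ 0 := (hε.trans_le (hεu x)).ne'
    have hinv := ContDiff.inv hu hne
    have hb' := hS' u hu hεu hb.pred
    refine ⟨fun x => (habs u hεu x).trans (le_max_left _ _), fun i => ?_⟩
    have heq : pd i (fun x => (u x)⁻¹)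
        = fun x => -1 * (((u x)⁻¹ * (u x)⁻¹) * pd i u x) := by
      rw [pd_inv hu.differentiable hne]
      funext x
      ring
    rw [heq]
    exact (CkBound.const_mul ((hinv.mul hinv).mul (hu.pd i)) (CkBound.mul (hinv.mul hinv) (hu.pd i)
      (CkBound.mul hinv hinv hb' hb') (hb.2 i))).mono (le_max_right _ _)

theorem exists_of_eq_const_outside {r : ℝ} (k : ℕ) (hu : Smooth u)
    (h : ∀ x, r < ‖x‖ → u x = c) : ∃ S, CkBound k S u := by
  have hbdd {f : ℝ^d → ℝ} {c : ℝ} (hf : Smooth f) (h : ∀ x, r < ‖x‖ → f x = c) :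
      ∃ S, ∀ x, |f x| ≤ S := by
    obtain ⟨C, hC⟩ := (isCompact_closedBall (0 : ℝ^d) r).exists_bound_of_continuousOn
      hf.continuous.continuousOn
    refine ⟨max C |c|, fun x => ?_⟩
    by_cases hx : r < ‖x‖
    · exact (h x hx).symm ▸ le_max_right _ _
    · exact (hC x (by simpa using hx)).trans (le_max_left _ _)
  induction k generalizing u c with
  | zero => exact hbdd hu h
  | succ k ih =>
    obtain ⟨S₀, hS₀⟩ := hbdd hu h
    have hpd (i : Fin d) : ∃ S, CkBound k S (pd i u) := by
      refine ih (c := 0) (hu.pd i) fun x hx => ?_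
      have hux : u =ᶠ[nhds x] fun _ => c := by
        filter_upwards [(isOpen_lt continuous_const continuous_norm).mem_nhds hx] using h
      rw [pd_congr_nhds hux, pd_const]
    choose S hS using hpd
    refine ⟨max S₀ (∑ i, |S i|), fun x => (hS₀ x).trans (le_max_left _ _), fun i => ?_⟩
    exact (hS i).mono ((le_abs_self _).trans ((Finset.single_le_sum (f := fun i => |S i|)
      (fun _ _ => abs_nonneg _) (Finset.mem_univ i)).trans (le_max_right _ _)))

end CkBound

theorem mul_sum_sq_sub_le {H : Fin d → Fin d → ℝ} {h β q K : ℝ} (h0 : 0 ≤ h)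
    (hβ : 0 ≤ β) (hK : ∀ i j, |H i j| ≤ K) (hq : ∀ v : Fin d → ℝ,
      q * ∑ i, v i ^ 2 ≤ 2 * β * ∑ i, ∑ j, v i * H i j * v j) (v : Fin d → ℝ) :
    β * ∑ i, (v i + -h * ∑ j, H i j * v j) ^ 2
      ≤ (β - h * q + h ^ 2 * (d * (d * K ^ 2)) * β) * ∑ i, v i ^ 2 := by
  have hHv (i : Fin d) : (∑ j, H i j * v j) ^ 2 ≤ d * K ^ 2 * ∑ j, v j ^ 2 := by
    refine (sum_mul_sq_le_sq_mul_sq univ (H i) v).trans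
      (mul_le_mul_of_nonneg_right ?_ (sum_nonneg fun j _ => sq_nonneg _))
    simpa using sum_le_card_nsmul univ (fun j => H i j ^ 2) (K ^ 2)
      fun j _ => sq_le_sq' (abs_le.1 (hK i j)).1 (abs_le.1 (hK i j)).2
  have hHv_sum : ∑ i, (∑ j, H i j * v j) ^ 2 ≤ d * (d * K ^ 2) * ∑ j, v j ^ 2 := by
    simpa [mul_assoc] using sum_le_card_nsmul univ _ _ fun i _ => hHv i
  have hexpand : ∑ i, (v i + -h * ∑ j, H i j * v j) ^ 2 = ∑ i, v i ^ 2
      - 2 * h * ∑ i, ∑ j, v i * H i j * v j + h ^ 2 * ∑ i, (∑ j, H i j * v j) ^ 2 := by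
    have hterm (i : Fin d) : (v i + -h * ∑ j, H i j * v j) ^ 2 = v i ^ 2
        - 2 * h * ∑ j, v i * H i j * v j + h ^ 2 * (∑ j, H i j * v j) ^ 2 := by
      simp only [mul_assoc, ← mul_sum]
      ring
    simp only [hterm, sum_add_distrib, sum_sub_distrib, ← mul_sum]
  have hlin := mul_le_mul_of_nonneg_left (hq v) h0
  have hquad := mul_le_mul_of_nonneg_left hHv_sum (mul_nonneg (sq_nonneg h) hβ)
  rw [hexpand]
  linarith

section EulerChain

variable {ι : Type*} [Fintype ι] {U u : ℝ^d → ℝ} {z : ι → ℝ^d} {h : ℝ}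

/-- One explicit Euler step of size `h` along the gradient flow of `U`. -/
def eulerStep (h : ℝ) (U : ℝ^d → ℝ) (x : ℝ^d) : ℝ^d := x - h • gradVec U x

/-- Transition operator of the random walk which makes an Euler step and then jumps by one of the
finitely many vectors `z p`, chosen uniformly. -/
def eulerAvg (z : ι → ℝ^d) (h : ℝ) (U u : ℝ^d → ℝ) (x : ℝ^d) : ℝ :=
  𝔼 p, u (eulerStep h U x + z p)

/-- The Fisher information density `|∇u|² / u`. -/
def fisher (u : ℝ^d → ℝ) (x : ℝ^d) : ℝ := gradSq u x / u x

theorem contDiff_eulerStep (hU : Smooth U) (h : ℝ) : ContDiff ℝ ∞ (eulerStep h U) :=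
  contDiff_id.sub (((contDiff_euclidean (f := gradVec U)).2 fun i => hU.pd i).const_smul h)

theorem Smooth.comp_eulerStep_add (hU : Smooth U) (hu : Smooth u) (h : ℝ) (y : ℝ^d) :
    Smooth fun x => u (eulerStep h U x + y) :=
  ContDiff.comp hu ((contDiff_eulerStep hU h).add contDiff_const)

theorem eulerAvg_eq_sum (z : ι → ℝ^d) (h : ℝ) (U u : ℝ^d → ℝ) :
    eulerAvg z h U u = fun x => (Fintype.card ι : ℝ)⁻¹ * ∑ p, u (eulerStep h U x + z p) := by
  funext x
  rw [eulerAvg, Fintype.expect_eq_sum_div_card, div_eq_inv_mul]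

protected theorem Smooth.eulerAvg (hU : Smooth U) (hu : Smooth u) (h : ℝ) (z : ι → ℝ^d) :
    Smooth (eulerAvg z h U u) := by
  rw [eulerAvg_eq_sum]
  exact contDiff_const.mul (ContDiff.sum fun p _ => hU.comp_eulerStep_add hu h (z p))

theorem pd_comp_eulerStep_add (hU : Smooth U) (hu : Smooth u) (h : ℝ) (y : ℝ^d) (i : Fin d)
    (x : ℝ^d) : pd i (fun x => u (eulerStep h U x + y)) x
      = pd i u (eulerStep h U x + y)
        - h * ∑ j, pd i (pd j U) x * pd j u (eulerStep h U x + y) := by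
  have hT : HasFDerivAt (fun x => eulerStep h U x + y) (fderiv ℝ (eulerStep h U) x) x :=
    ((contDiff_eulerStep hU h).differentiable (by simp) x).hasFDerivAt.add_const y
  have hTi (j : Fin d) : fderiv ℝ (eulerStep h U) x (EuclideanSpace.single i 1) j
      = (if j = i then 1 else 0) - h * pd i (pd j U) x := by
    have hj : HasFDerivAt (fun x => x j - h * pd j U x)
        (EuclideanSpace.proj (𝕜 := ℝ) j - h • fderiv ℝ (pd j U) x) x :=
      (EuclideanSpace.proj (𝕜 := ℝ) j).hasFDerivAt.sub
        (((hU.pd j).differentiable x).hasFDerivAt.const_mul h)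
    have := ((EuclideanSpace.proj (𝕜 := ℝ) j).hasFDerivAt.comp x
      ((contDiff_eulerStep hU h).differentiable (by simp) x).hasFDerivAt).unique hj
    simpa [pd, Pi.single_apply] using DFunLike.congr_fun this (EuclideanSpace.single i 1)
  have hcomp : pd i (fun x => u (eulerStep h U x + y)) x = fderiv ℝ u (eulerStep h U x + y)
      (fderiv ℝ (eulerStep h U) x (EuclideanSpace.single i 1)) := by
    exact DFunLike.congr_fun ((hu.differentiable _).hasFDerivAt.comp x hT).fderiv _
  rw [hcomp, fderiv_eq_sum]
  simp [hTi, sub_mul, Finset.mul_sum, mul_assoc]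

theorem pd_eulerAvg (hU : Smooth U) (hu : Smooth u) (z : ι → ℝ^d) (h : ℝ) (i : Fin d) :
    pd i (eulerAvg z h U u) = fun x => eulerAvg z h U (pd i u) x
      + -h * ∑ j, pd i (pd j U) x * eulerAvg z h U (pd j u) x := by
  have hsm (p : ι) := hU.comp_eulerStep_add hu h (z p)
  rw [eulerAvg_eq_sum, pd_const_mul (ContDiff.differentiable (ContDiff.sum fun p _ => hsm p)
    (by simp)), pd_sum fun p _ => (hsm p).differentiable]
  funext x
  rw [← div_eq_inv_mul, ← Fintype.expect_eq_sum_div_card]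
  simp only [pd_comp_eulerStep_add hU hu, eulerAvg, expect_sub_distrib, ← mul_expect,
    expect_sum_comm]
  ring

theorem Smooth.eulerAvg_iterate (hU : Smooth U) (hu : Smooth u) (k : ℕ) :
    Smooth ((eulerAvg z h U)^[k] u) := by
  induction k with
  | zero => exact hu
  | succ k ih => simpa only [Function.iterate_succ_apply'] using hU.eulerAvg ih h z

variable [Nonempty ι]

theorem le_eulerAvg {m : ℝ} (hu : ∀ x, m ≤ u x) (x : ℝ^d) : m ≤ eulerAvg z h U u x :=
  le_expect univ_nonempty fun _ _ => hu _

theorem eulerAvg_le {M : ℝ} (hu : ∀ x, u x ≤ M) (x : ℝ^d) : eulerAvg z h U u x ≤ M :=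
  expect_le univ_nonempty fun _ _ => hu _

theorem abs_eulerAvg_le {S : ℝ} (hu : ∀ x, |u x| ≤ S) (x : ℝ^d) : |eulerAvg z h U u x| ≤ S :=
  abs_le.2 ⟨le_eulerAvg (fun y => (abs_le.1 (hu y)).1) x,
    eulerAvg_le (fun y => (abs_le.1 (hu y)).2) x⟩

theorem CkBound.exists_eulerAvg {k : ℕ} {K : ℝ} (hU : Smooth U)
    (hK : ∀ i j, CkBound k K (pd i (pd j U))) :
    ∃ C, 0 ≤ C ∧ ∀ (z : ι → ℝ^d) (h : ℝ), 0 ≤ h → h ≤ 1 → ∀ u S, Smooth u → CkBound k S u →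
      CkBound k ((1 + C * h) * S) (eulerAvg z h U u) := by
  induction k with
  | zero => exact ⟨0, le_rfl, fun z h _ _ u S _ hS x => by simpa using abs_eulerAvg_le hS x⟩
  | succ k ih =>
    obtain ⟨C, hC, ih⟩ := ih fun i j => (hK i j).pred
    refine ⟨C + d * (2 ^ k * |K| * (1 + C)), by positivity, fun z h h0 h1 u S hu hS => ?_⟩
    have hS0 := hS.nonneg
    refine ⟨fun x => (abs_eulerAvg_le hS.1 x).trans ?_, fun i => ?_⟩
    · exact le_mul_of_one_le_left hS0 (le_add_of_nonneg_right (by positivity))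
    · rw [pd_eulerAvg hU hu]
      have hsm (j : Fin d) := hU.eulerAvg (hu.pd j) h z
      have hb (j : Fin d) := ih z h h0 h1 (pd j u) S (hu.pd j) (hS.2 j)
      have hp (j : Fin d) : Smooth fun x => pd i (pd j U) x * eulerAvg z h U (pd j u) x :=
        ((hU.pd j).pd i).mul (hsm j)
      have hpb (j : Fin d) : CkBound k (2 ^ k * (|K| * ((1 + C * h) * S)))
          fun x => pd i (pd j U) x * eulerAvg z h U (pd j u) x :=
        CkBound.mul ((hU.pd j).pd i) (hsm j) ((hK i j).pred.mono (le_abs_self K)) (hb j)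
      have hsum := (CkBound.sum (s := Finset.univ) (fun j _ => hp j) fun j _ => hpb j)
      refine (CkBound.add (hsm i) (contDiff_const.mul (ContDiff.sum fun j _ => hp j)) (hb i)
        (CkBound.const_mul (ContDiff.sum fun j _ => hp j) hsum)).mono ?_
      simp only [abs_neg, abs_of_nonneg h0, sum_const, card_univ, Fintype.card_fin, nsmul_eq_mul]
      have hCh := mul_le_mul_of_nonneg_left (mul_le_of_le_one_right hC h1)
        (show 0 ≤ h * (d * (2 ^ k * |K| * S)) by positivity)
      linarith

theorem le_eulerAvg_iterate {m : ℝ} (hu : ∀ x, m ≤ u x) (k : ℕ) (x : ℝ^d) :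
    m ≤ (eulerAvg z h U)^[k] u x := by
  induction k generalizing x with
  | zero => exact hu x
  | succ k ih => simpa only [Function.iterate_succ_apply'] using le_eulerAvg ih x

theorem eulerAvg_iterate_le {M : ℝ} (hu : ∀ x, u x ≤ M) (k : ℕ) (x : ℝ^d) :
    (eulerAvg z h U)^[k] u x ≤ M := by
  induction k generalizing x with
  | zero => exact hu x
  | succ k ih => simpa only [Function.iterate_succ_apply'] using eulerAvg_le ih x

theorem CkBound.exists_eulerAvg_iterate {l : ℕ} {K S : ℝ} (hU : Smooth U)
    (hK : ∀ i j, CkBound l K (pd i (pd j U))) (hu : Smooth u) (hS : CkBound l S u) (t : ℝ) :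
    ∃ S', ∀ (z : ι → ℝ^d) (h : ℝ), 0 ≤ h → h ≤ 1 → ∀ k : ℕ, k * h ≤ t →
      CkBound l S' ((eulerAvg z h U)^[k] u) := by
  obtain ⟨C, hC, hAvg⟩ := exists_eulerAvg (ι := ι) hU hK
  refine ⟨exp (C * t) * S, fun z h h0 h1 k hk => ?_⟩
  have hpow (k : ℕ) : CkBound l ((1 + C * h) ^ k * S) ((eulerAvg z h U)^[k] u) := by
    induction k with
    | zero => simpa using hS
    | succ k ih =>
      simpa only [Function.iterate_succ_apply', pow_succ', mul_assoc] using
        hAvg z h h0 h1 _ _ (hU.eulerAvg_iterate hu k) ih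
  refine (hpow k).mono (mul_le_mul_of_nonneg_right ?_ hS.nonneg)
  calc (1 + C * h) ^ k ≤ exp (C * h) ^ k :=
        pow_le_pow_left₀ (by positivity) (by linarith [add_one_le_exp (C * h)]) k
    _ = exp (C * (k * h)) := by rw [← exp_nat_mul]; ring_nf
    _ ≤ exp (C * t) := exp_le_exp.2 (mul_le_mul_of_nonneg_left hk hC)

theorem fisher_nonneg (hu : ∀ x, 0 < u x) (x : ℝ^d) : 0 ≤ fisher u x :=
  div_nonneg (gradSq_nonneg u x) (hu x).le

protected theorem Smooth.fisher (hu : Smooth u) (hpos : ∀ x, 0 < u x) : Smooth (fisher u) :=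
  hu.gradSq.div hu fun x => (hpos x).ne'

theorem CkBound.exists_fisher (k : ℕ) (S : ℝ) {ε : ℝ} (hε : 0 < ε) :
    ∃ S', ∀ u : ℝ^d → ℝ, Smooth u → (∀ x, ε ≤ u x) → CkBound (k + 1) S u →
      CkBound k S' (fisher u) := by
  obtain ⟨R, hR⟩ := exists_inv (d := d) k S hε
  refine ⟨2 ^ k * ((∑ _i : Fin d, 2 ^ k * (S * S)) * R), fun u hu hεu hS => ?_⟩
  have hpd (i : Fin d) : Smooth fun x => pd i u x * pd i u x := (hu.pd i).mul (hu.pd i)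
  have heq : fisher u = fun x => (∑ i, pd i u x * pd i u x) * (u x)⁻¹ := by
    funext x
    simp only [fisher, gradSq, sq, div_eq_mul_inv]
  rw [heq]
  exact CkBound.mul (ContDiff.sum fun i _ => hpd i) (hu.inv fun x => (hε.trans_le (hεu x)).ne')
    (CkBound.sum (fun i _ => hpd i) fun i _ => CkBound.mul (hu.pd i) (hu.pd i) (hS.2 i) (hS.2 i))
    (hR u hu hεu hS.pred)

theorem sq_expect_div_expect_le (f : ι → ℝ) {g : ι → ℝ} (hg : ∀ p, 0 < g p) :
    (𝔼 p, f p) ^ 2 / 𝔼 p, g p ≤ 𝔼 p, f p ^ 2 / g p := by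
  have hcard : (0 : ℝ) < Fintype.card ι := by exact_mod_cast Fintype.card_pos
  have hsum : 0 < ∑ p, g p := sum_pos (fun p _ => hg p) univ_nonempty
  have hsq : (∑ p, f p) ^ 2 / ∑ p, g p ≤ ∑ p, f p ^ 2 / g p :=
    sq_sum_div_le_sum_sq_div _ _ fun p _ => hg p
  simp only [Fintype.expect_eq_sum_div_card]
  calc ((∑ p, f p) / Fintype.card ι) ^ 2 / ((∑ p, g p) / Fintype.card ι)
      = (∑ p, f p) ^ 2 / (∑ p, g p) / Fintype.card ι := by field_simp
    _ ≤ _ := div_le_div_of_nonneg_right hsq hcard.le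

theorem sum_sq_eulerAvg_pd_div_le (hpos : ∀ x, 0 < u x) (x : ℝ^d) :
    (∑ i, eulerAvg z h U (pd i u) x ^ 2) / eulerAvg z h U u x
      ≤ eulerAvg z h U (fisher u) x := by
  simp only [sum_div, eulerAvg, fisher, gradSq, expect_sum_comm]
  exact sum_le_sum fun i _ => sq_expect_div_expect_le _ fun p => hpos _

/-- The coefficient on the right is nonnegative because it bounds a square, so the pointwise
Cauchy-Schwarz inequality may be multiplied by it. -/
theorem mul_fisher_eulerAvg_le [NeZero d] (hU : Smooth U) (hu : Smooth u)
    (hpos : ∀ x, 0 < u x) (h0 : 0 ≤ h) (z : ι → ℝ^d) {x : ℝ^d} {β q K : ℝ} (hβ : 0 ≤ β)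
    (hK : ∀ i j, |pd i (pd j U) x| ≤ K)
    (hq : ∀ v : Fin d → ℝ, q * ∑ i, v i ^ 2 ≤ 2 * β * hessForm U x v) :
    β * fisher (eulerAvg z h U u) x
      ≤ (β - h * q + h ^ 2 * (d * (d * K ^ 2)) * β) * eulerAvg z h U (fisher u) x := by
  have hvec := mul_sum_sq_sub_le h0 hβ hK hq
  have hcoeff : 0 ≤ β - h * q + h ^ 2 * (d * (d * K ^ 2)) * β := by
    have := (mul_nonneg hβ (sum_nonneg fun i _ => sq_nonneg _)).trans
      (hvec (Pi.single 0 1))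
    simpa [Pi.single_apply] using this
  have hAvg : 0 < eulerAvg z h U u x := expect_pos (fun p _ => hpos _) univ_nonempty
  calc β * fisher (eulerAvg z h U u) x
      = β * gradSq (eulerAvg z h U u) x / eulerAvg z h U u x := (mul_div_assoc _ _ _).symm
    _ ≤ (β - h * q + h ^ 2 * (d * (d * K ^ 2)) * β) * (∑ i, eulerAvg z h U (pd i u) x ^ 2)
          / eulerAvg z h U u x := by
        refine div_le_div_of_nonneg_right ?_ hAvg.le
        simpa only [gradSq, pd_eulerAvg hU hu] using hvec fun i => eulerAvg z h U (pd i u) x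
    _ ≤ _ := by
        rw [mul_div_assoc]
        exact mul_le_mul_of_nonneg_left (sum_sq_eulerAvg_pd_div_le hpos x) hcoeff

end EulerChain

section Taylor

variable {u : ℝ^d → ℝ} {S : ℝ}

theorem abs_sub_le_of_abs_deriv_le {f f' : ℝ → ℝ} {C : ℝ} (hf : ∀ t, HasDerivAt f (f' t) t)
    (hC : ∀ t ∈ Icc (0 : ℝ) 1, |f' t| ≤ C) {t : ℝ} (ht : t ∈ Icc (0 : ℝ) 1) :
    |f t - f 0| ≤ C := by
  have hC0 : 0 ≤ C := (abs_nonneg _).trans (hC t ht)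
  have := norm_image_sub_le_of_norm_deriv_le_segment' (fun s _ => (hf s).hasDerivWithinAt)
    (fun s hs => hC s ⟨hs.1, hs.2.le⟩) t ht
  exact this.trans (mul_le_of_le_one_right hC0 (by linarith [ht.2]))

theorem abs_taylor_two_remainder_le {f f₁ f₂ f₃ : ℝ → ℝ} {C : ℝ}
    (hf : ∀ t, HasDerivAt f (f₁ t) t) (hf₁ : ∀ t, HasDerivAt f₁ (f₂ t) t)
    (hf₂ : ∀ t, HasDerivAt f₂ (f₃ t) t) (hC : ∀ t, |f₃ t| ≤ C) :
    |f 1 - f 0 - f₁ 0 - f₂ 0 / 2| ≤ C := by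
  have h₂ {t : ℝ} (ht : t ∈ Icc (0 : ℝ) 1) : |f₂ t - f₂ 0| ≤ C :=
    abs_sub_le_of_abs_deriv_le hf₂ (fun s _ => hC s) ht
  have h₁ {t : ℝ} (ht : t ∈ Icc (0 : ℝ) 1) : |f₁ t - f₁ 0 - t * f₂ 0| ≤ C := by
    have hderiv (s : ℝ) : HasDerivAt (fun s => f₁ s - s * f₂ 0) (f₂ s - f₂ 0) s := by
      simpa using (hf₁ s).fun_sub ((hasDerivAt_id s).mul_const (f₂ 0))
    convert abs_sub_le_of_abs_deriv_le hderiv (fun s hs => h₂ hs) ht using 2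
    ring
  have hderiv (s : ℝ) : HasDerivAt (fun s => f s - s * f₁ 0 - s ^ 2 * (f₂ 0 / 2))
      (f₁ s - f₁ 0 - s * f₂ 0) s := by
    refine (((hf s).sub ((hasDerivAt_id s).mul_const (f₁ 0))).sub
      (((hasDerivAt_id s).pow 2).mul_const (f₂ 0 / 2))).congr_deriv ?_
    simp
    ring
  convert abs_sub_le_of_abs_deriv_le hderiv (fun s hs => h₁ hs) (right_mem_Icc.2 zero_le_one)
    using 2
  ring

/-- The derivative of `u` in the direction `v`, as a function on which `CkBound` can act. -/
def dirDeriv (v : ℝ^d) (u : ℝ^d → ℝ) (x : ℝ^d) : ℝ := ∑ i, v i * pd i u x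

theorem hasDerivAt_comp_line (hu : Smooth u) (x v : ℝ^d) (t : ℝ) :
    HasDerivAt (fun t : ℝ => u (x + t • v)) (dirDeriv v u (x + t • v)) t := by
  have hline : HasDerivAt (fun t : ℝ => x + t • v) v t := by
    simpa using ((hasDerivAt_id t).smul_const v).const_add x
  have := (hu.differentiable (x + t • v)).hasFDerivAt.comp_hasDerivAt t hline
  rwa [fderiv_eq_sum] at this

protected theorem Smooth.dirDeriv (hu : Smooth u) (v : ℝ^d) : Smooth (dirDeriv v u) :=
  ContDiff.sum fun i _ => contDiff_const.mul (hu.pd i)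

protected theorem CkBound.dirDeriv {k : ℕ} (hu : Smooth u) (h : CkBound (k + 1) S u) (v : ℝ^d) :
    CkBound k ((∑ i, |v i|) * S) (dirDeriv v u) := by
  rw [Finset.sum_mul]
  exact CkBound.sum (fun i _ => contDiff_const.mul (hu.pd i)) fun i _ =>
    CkBound.const_mul (hu.pd i) (h.2 i)

theorem dirDeriv_dirDeriv (hu : Smooth u) (v x : ℝ^d) :
    dirDeriv v (dirDeriv v u) x = hessForm u x v := by
  have hpd (i : Fin d) : pd i (dirDeriv v u) = fun x => ∑ j, v j * pd i (pd j u) x := by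
    rw [show dirDeriv v u = fun x => ∑ j, v j * pd j u x from rfl,
      pd_sum fun j _ => (differentiable_const _).fun_mul (hu.pd j).differentiable]
    simp only [pd_const_mul (hu.pd _).differentiable]
  simp only [dirDeriv, hessForm, hpd, Finset.mul_sum]
  exact Finset.sum_congr rfl fun i _ => Finset.sum_congr rfl fun j _ => by ring

theorem CkBound.abs_add_sub_le (hu : Smooth u) (h : CkBound 1 S u) (x v : ℝ^d) :
    |u (x + v) - u x| ≤ (∑ i, |v i|) * S := by
  simpa using abs_sub_le_of_abs_deriv_le (hasDerivAt_comp_line hu x v)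
    (fun t _ => (h.dirDeriv hu v).abs_le (x + t • v)) (right_mem_Icc.2 zero_le_one)

theorem CkBound.abs_hessForm_le (hu : Smooth u) (h : CkBound 2 S u) (x v : ℝ^d) :
    |hessForm u x v| ≤ (∑ i, |v i|) ^ 2 * S := by
  rw [← dirDeriv_dirDeriv hu, sq, mul_assoc]
  exact (((h.dirDeriv hu v).dirDeriv (hu.dirDeriv v) v).abs_le x)

theorem CkBound.abs_taylor_le (hu : Smooth u) (h : CkBound 3 S u) (x v : ℝ^d) :
    |u (x + v) - u x - dirDeriv v u x - hessForm u x v / 2| ≤ (∑ i, |v i|) ^ 3 * S := by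
  have hu₁ := hu.dirDeriv v
  have hu₂ := hu₁.dirDeriv v
  have := abs_taylor_two_remainder_le (hasDerivAt_comp_line hu x v)
    (hasDerivAt_comp_line hu₁ x v) (hasDerivAt_comp_line hu₂ x v)
    fun t => (((h.dirDeriv hu v).dirDeriv hu₁ v).dirDeriv hu₂ v).abs_le (x + t • v)
  simpa [dirDeriv_dirDeriv hu, pow_succ, mul_assoc] using this

end Taylor

section Walk

theorem hessForm_add_add_hessForm_sub (u : ℝ^d → ℝ) (x : ℝ^d) (v w : Fin d → ℝ) :
    hessForm u x (v + w) + hessForm u x (v - w) = 2 * hessForm u x v + 2 * hessForm u x w := by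
  simp only [hessForm, mul_sum, ← sum_add_distrib]
  exact sum_congr rfl fun i _ => sum_congr rfl fun j _ => by
    simp only [Pi.add_apply, Pi.sub_apply]; ring

theorem hessForm_smul (u : ℝ^d → ℝ) (x : ℝ^d) (c : ℝ) (v : Fin d → ℝ) :
    hessForm u x (c • v) = c ^ 2 * hessForm u x v := by
  simp only [hessForm, mul_sum, Pi.smul_apply, smul_eq_mul]
  exact sum_congr rfl fun i _ => sum_congr rfl fun j _ => by ring

theorem hessForm_single (u : ℝ^d → ℝ) (x : ℝ^d) (i : Fin d) :
    hessForm u x (Pi.single i 1) = pd i (pd i u) x := by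
  simp [hessForm, Pi.single_apply]

variable {U u : ℝ^d → ℝ} {S K η : ℝ}

/-- The jumps `±√(2d) η eᵢ`, whose uniform law has covariance `2 η² I`. -/
def walkNoise (η : ℝ) (p : Fin d × Bool) : ℝ^d :=
  EuclideanSpace.single p.1 (cond p.2 (√(2 * d) * η) (-(√(2 * d) * η)))

/-- The Markov operator approximating `exp (η² L)`, where `L = diffOp U`. -/
def walk (η : ℝ) (U u : ℝ^d → ℝ) : ℝ^d → ℝ := eulerAvg (walkNoise η) (η ^ 2) U u

/-- Displacement of the walk started at `x` which uses the jump number `p`. -/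
def walkStep (η : ℝ) (U : ℝ^d → ℝ) (x : ℝ^d) (p : Fin d × Bool) : ℝ^d :=
  walkNoise η p - η ^ 2 • gradVec U x

protected theorem Smooth.walk (hU : Smooth U) (hu : Smooth u) (η : ℝ) : Smooth (walk η U u) :=
  hU.eulerAvg hu _ _

theorem walk_eq_expect (η : ℝ) (U u : ℝ^d → ℝ) (x : ℝ^d) :
    walk η U u x = 𝔼 p, u (x + walkStep η U x p) := by
  simp only [walk, eulerAvg, eulerStep, walkStep, add_sub_assoc', add_sub_right_comm]

theorem sum_abs_walkStep_le (hη : 0 ≤ η) (hη₁ : η ≤ 1) {x : ℝ^d} (hK : ∀ i, |pd i U x| ≤ K)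
    (p : Fin d × Bool) : ∑ i, |walkStep η U x p i| ≤ (√(2 * d) + d * K) * η := by
  have hnoise : ∑ i, |walkNoise (d := d) η p i| = √(2 * d) * η := by
    obtain ⟨j, _ | _⟩ := p <;>
      simp [walkNoise, apply_ite abs, abs_mul, abs_of_nonneg, hη]
  have hdrift : ∑ i, |η ^ 2 * pd i U x| ≤ d * K * η := by
    refine (sum_le_card_nsmul univ _ (K * η) fun i _ => ?_).trans (by simp [mul_assoc])
    rw [abs_mul, abs_of_nonneg (sq_nonneg η), mul_comm]
    exact mul_le_mul (hK i) (by nlinarith) (sq_nonneg η) ((abs_nonneg _).trans (hK i))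
  calc ∑ i, |walkStep η U x p i| ≤ ∑ i, (|walkNoise η p i| + |η ^ 2 * pd i U x|) :=
        sum_le_sum fun i _ => abs_sub _ _
    _ ≤ (√(2 * d) + d * K) * η := by rw [sum_add_distrib, hnoise]; linarith

variable [NeZero d]

theorem expect_dirDeriv_walkStep (η : ℝ) (U u : ℝ^d → ℝ) (x : ℝ^d) :
    𝔼 p, dirDeriv (walkStep η U x p) u x = -(η ^ 2 * gradDot U u x) := by
  have hpair (i : Fin d) : dirDeriv (walkStep η U x (i, true)) u x
      + dirDeriv (walkStep η U x (i, false)) u x = -(2 * (η ^ 2 * gradDot U u x)) := by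
    simp only [dirDeriv, walkStep, walkNoise, gradDot, gradVec, ← sum_add_distrib, mul_sum,
      ← sum_neg_distrib]
    refine sum_congr rfl fun j _ => ?_
    by_cases hij : j = i <;> simp [hij] <;> ring
  have hd : (d : ℝ) ≠ 0 := NeZero.ne _
  rw [Fintype.expect_eq_sum_div_card, Fintype.sum_prod_type]
  simp only [Fintype.sum_bool, hpair, sum_const, card_univ, Fintype.card_prod, Fintype.card_fin,
    Fintype.card_bool, nsmul_eq_mul, Nat.cast_mul, Nat.cast_ofNat]
  field_simp

theorem expect_hessForm_walkStep (η : ℝ) (U u : ℝ^d → ℝ) (x : ℝ^d) :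
    𝔼 p, hessForm u x (walkStep η U x p)
      = 2 * η ^ 2 * lap u x + η ^ 4 * hessForm u x (gradVec U x) := by
  have hpair (i : Fin d) : hessForm u x (walkStep η U x (i, true))
      + hessForm u x (walkStep η U x (i, false))
      = 2 * (2 * d * η ^ 2 * pd i (pd i u) x) + 2 * (η ^ 4 * hessForm u x (gradVec U x)) := by
    have htrue : ⇑(walkStep η U x (i, true))
        = -η ^ 2 • ⇑(gradVec U x) + (√(2 * d) * η) • Pi.single i 1 := by
      ext j
      by_cases hij : j = i <;> simp [walkStep, walkNoise, hij, sub_eq_neg_add]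
    have hfalse : ⇑(walkStep η U x (i, false))
        = -η ^ 2 • ⇑(gradVec U x) - (√(2 * d) * η) • Pi.single i 1 := by
      ext j
      by_cases hij : j = i <;> simp [walkStep, walkNoise, hij, sub_eq_neg_add, add_comm]
    rw [htrue, hfalse, hessForm_add_add_hessForm_sub, hessForm_smul, hessForm_smul,
      hessForm_single, mul_pow, sq_sqrt (by positivity)]
    ring
  have hd : (d : ℝ) ≠ 0 := NeZero.ne _
  rw [Fintype.expect_eq_sum_div_card, Fintype.sum_prod_type]
  simp only [Fintype.sum_bool, hpair, sum_const, card_univ, Fintype.card_prod, Fintype.card_fin,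
    Fintype.card_bool, nsmul_eq_mul, Nat.cast_mul, Nat.cast_ofNat, sum_add_distrib, ← mul_sum]
  rw [lap]
  field_simp

theorem walk_sub_self (η : ℝ) (U u : ℝ^d → ℝ) (x : ℝ^d) :
    walk η U u x - u x = 𝔼 p, (u (x + walkStep η U x p) - u x) := by
  rw [walk_eq_expect, expect_sub_distrib, Fintype.expect_const]

theorem abs_walk_sub_le (hu : Smooth u) (hS : CkBound 1 S u) (hη : 0 ≤ η) (hη₁ : η ≤ 1) {x : ℝ^d}
    (hK : ∀ i, |pd i U x| ≤ K) : |walk η U u x - u x| ≤ (√(2 * d) + d * K) * S * η := by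
  rw [walk_sub_self]
  refine (abs_expect_le _ _).trans (expect_le univ_nonempty fun p _ => ?_)
  refine (hS.abs_add_sub_le hu x _).trans ?_
  linarith [mul_le_mul_of_nonneg_right (sum_abs_walkStep_le hη hη₁ hK p) hS.nonneg]

theorem abs_walk_sub_sub_diffOp_le (hu : Smooth u) (hS : CkBound 3 S u) (hη : 0 ≤ η)
    (hη₁ : η ≤ 1) {x : ℝ^d} (hK : ∀ i, |pd i U x| ≤ K) :
    |walk η U u x - u x - η ^ 2 * diffOp U u x|
      ≤ ((√(2 * d) + d * K) ^ 3 + (d * K) ^ 2) * S * η ^ 3 := by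
  set r : Fin d × Bool → ℝ := fun p => u (x + walkStep η U x p) - u x
    - dirDeriv (walkStep η U x p) u x - hessForm u x (walkStep η U x p) / 2
  have hr : |𝔼 p, r p| ≤ (√(2 * d) + d * K) ^ 3 * S * η ^ 3 := by
    refine (abs_expect_le _ _).trans (expect_le univ_nonempty fun p _ => ?_)
    refine (hS.abs_taylor_le hu x _).trans ?_
    have := pow_le_pow_left₀ (sum_nonneg fun i _ => abs_nonneg _)
      (sum_abs_walkStep_le hη hη₁ hK p) 3
    rw [mul_pow] at this
    linarith [mul_le_mul_of_nonneg_right this hS.nonneg]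
  have hsplit : 𝔼 p, r p = walk η U u x - u x - η ^ 2 * diffOp U u x
      - η ^ 4 * hessForm u x (gradVec U x) / 2 := by
    simp only [r, expect_sub_distrib, expect_dirDeriv_walkStep, ← expect_div,
      expect_hessForm_walkStep, walk_eq_expect, Fintype.expect_const, diffOp_eq]
    ring
  have hdrift : |hessForm u x (gradVec U x)| ≤ (d * K) ^ 2 * S := by
    refine ((hS.of_le (by norm_num)).abs_hessForm_le hu x _).trans
      (mul_le_mul_of_nonneg_right (pow_le_pow_left₀ (sum_nonneg fun i _ => abs_nonneg _) ?_ 2)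
        hS.nonneg)
    simpa [gradVec] using sum_le_card_nsmul univ _ K fun i _ => hK i
  calc |walk η U u x - u x - η ^ 2 * diffOp U u x|
      = |𝔼 p, r p + η ^ 4 * hessForm u x (gradVec U x) / 2| := by rw [hsplit]; ring_nf
    _ ≤ |𝔼 p, r p| + η ^ 4 * |hessForm u x (gradVec U x)| / 2 := by
        refine (abs_add_le _ _).trans_eq ?_
        rw [abs_div, abs_mul, abs_of_nonneg (by positivity : 0 ≤ η ^ 4), abs_two]
    _ ≤ (√(2 * d) + d * K) ^ 3 * S * η ^ 3 + η ^ 3 * ((d * K) ^ 2 * S) := by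
        have hη4 : η ^ 4 ≤ η ^ 3 := pow_le_pow_of_le_one hη hη₁ (by norm_num)
        have := mul_le_mul hη4 hdrift (abs_nonneg _) (by positivity)
        have := mul_nonneg (by positivity : 0 ≤ η ^ 4) (abs_nonneg (hessForm u x (gradVec U x)))
        linarith
    _ = _ := by ring

end Walk

/-- The finite measure `exp (-U) dx`; `gibbs U` is its normalisation. -/
def expMeasure (U : ℝ^d → ℝ) : Measure (ℝ^d) :=
  volume.withDensity fun x => ENNReal.ofReal (exp (-U x))

theorem integral_expMeasure {U : ℝ^d → ℝ} (hU : Continuous U) (f : ℝ^d → ℝ) :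
    ∫ x, f x ∂expMeasure U = ∫ x, f x * exp (-U x) := by
  rw [expMeasure, integral_withDensity_eq_integral_toReal_smul (by fun_prop) (by simp)]
  simp only [ENNReal.toReal_ofReal (exp_pos _).le, smul_eq_mul, mul_comm]

theorem integrable_expMeasure_iff {U : ℝ^d → ℝ} (hU : Continuous U) {f : ℝ^d → ℝ} :
    Integrable f (expMeasure U) ↔ Integrable fun x => f x * exp (-U x) := by
  rw [expMeasure, integrable_withDensity_iff (by fun_prop) (by simp)]
  simp only [ENNReal.toReal_ofReal (exp_pos _).le]

theorem isFiniteMeasure_expMeasure {U : ℝ^d → ℝ} (hU : Integrable fun x => exp (-U x)) :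
    IsFiniteMeasure (expMeasure U) :=
  isFiniteMeasure_withDensity_ofReal hU.2

theorem integrable_of_continuous_of_abs_le {μ : Measure (ℝ^d)} [IsFiniteMeasure μ]
    {f : ℝ^d → ℝ} {C : ℝ} (hf : Continuous f) (hC : ∀ x, |f x| ≤ C) : Integrable f μ :=
  .of_bound hf.aestronglyMeasurable C (.of_forall hC)

/-- Potentials for which the Markov semigroup of `diffOp U` is approximated by `walk` uniformly on
`ℝᵈ`: all derivatives, including the first ones, are bounded. -/
structure TamePotential (U : ℝ^d → ℝ) : Prop where
  smooth : Smooth U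
  exists_ckBound : ∀ k, ∃ S, ∀ i, CkBound k S (pd i U)
  integrable_exp : Integrable fun x => exp (-U x)

namespace TamePotential

variable {U u ψ : ℝ^d → ℝ} {S T : ℝ}

theorem exists_abs_pd_le (hU : TamePotential U) : ∃ K, ∀ i x, |pd i U x| ≤ K :=
  hU.exists_ckBound 0

theorem integrable (hU : TamePotential U) {f : ℝ^d → ℝ} {C : ℝ} (hf : Continuous f)
    (hC : ∀ x, |f x| ≤ C) : Integrable f (expMeasure U) :=
  haveI := isFiniteMeasure_expMeasure hU.integrable_exp
  integrable_of_continuous_of_abs_le hf hC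

theorem integrable_mul (hU : TamePotential U) {f g : ℝ^d → ℝ} {C C' : ℝ} (hf : Continuous f)
    (hg : Continuous g) (hC : ∀ x, |f x| ≤ C) (hC' : ∀ x, |g x| ≤ C') :
    Integrable (fun x => f x * g x) (expMeasure U) :=
  hU.integrable (C := C * C') (hf.mul hg) fun x => by
    rw [abs_mul]
    exact mul_le_mul (hC x) (hC' x) (abs_nonneg _) ((abs_nonneg _).trans (hC x))

theorem integrable_mul_pd_mul (hU : TamePotential U) (hψ : Smooth ψ) (hψT : CkBound 0 T ψ)
    (hu : Smooth u) (huS : CkBound 0 S u) (i : Fin d) :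
    Integrable (fun x => ψ x * (pd i U x * u x)) (expMeasure U) := by
  obtain ⟨K, hK⟩ := hU.exists_abs_pd_le
  exact hU.integrable_mul hψ.continuous ((hU.smooth.pd i).continuous.mul hu.continuous) hψT
    fun x => (abs_mul _ _).trans_le <|
      mul_le_mul (hK i x) (huS x) (abs_nonneg _) ((abs_nonneg _).trans (hK i x))

theorem integral_mul_pd_sub (hU : TamePotential U) (hψ : Smooth ψ) (hψT : CkBound 1 T ψ)
    (hu : Smooth u) (huS : CkBound 1 S u) (i : Fin d) :
    ∫ x, (ψ x * pd i u x - ψ x * (pd i U x * u x)) ∂expMeasure U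
      = -∫ x, pd i ψ x * u x ∂expMeasure U := by
  have hUc := hU.smooth.continuous
  have hw : Differentiable ℝ fun x => exp (-U x) := hU.smooth.differentiable.neg.exp
  have hpd : pd i (fun x => ψ x * exp (-U x))
      = fun x => pd i ψ x * exp (-U x) - ψ x * (pd i U x * exp (-U x)) := by
    have hexp (x : ℝ^d) : HasDerivAt (fun s => exp (-s)) (-exp (-U x)) (U x) := by
      simpa using (hasDerivAt_neg (U x)).exp
    rw [pd_mul hψ.differentiable hw,
      pd_comp (φ' := fun s => -exp (-s)) hU.smooth.differentiable hexp]
    funext x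
    ring
  have hψu := hU.integrable_mul hψ.continuous hu.continuous hψT.1 huS.1
  have hψ'u := hU.integrable_mul (hψ.pd i).continuous hu.continuous (hψT.2 i) huS.1
  have hψu' := hU.integrable_mul hψ.continuous (hu.pd i).continuous hψT.1 (huS.2 i)
  have hψU := hU.integrable_mul_pd_mul hψ hψT.1 hu huS.1 i
  rw [integral_sub hψu' hψU, sub_eq_iff_eq_add, neg_add_eq_sub, ← integral_sub hψU hψ'u]
  simp only [integral_expMeasure hUc]
  rw [integrable_expMeasure_iff hUc] at *
  have hparts : ∫ x, ψ x * exp (-U x) * pd i u x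
      = -∫ x, pd i (fun x => ψ x * exp (-U x)) x * u x := by
    refine integral_mul_fderiv_eq_neg_fderiv_mul_of_integrable ?_ ?_ ?_
      (fun x _ => (hψ.differentiable.fun_mul hw) x) (fun x _ => hu.differentiable x)
    · change Integrable fun x => pd i (fun x => ψ x * exp (-U x)) x * u x
      rw [hpd]
      exact (hψ'u.sub hψU).congr (.of_forall fun x => by simp only [Pi.sub_apply]; ring)
    · exact hψu'.congr (.of_forall fun x => mul_right_comm _ _ _)
    · exact hψu.congr (.of_forall fun x => mul_right_comm _ _ _)
  calc ∫ x, ψ x * pd i u x * exp (-U x) = ∫ x, ψ x * exp (-U x) * pd i u x := by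
        simp only [mul_right_comm]
    _ = ∫ x, (ψ x * (pd i U x * u x) - pd i ψ x * u x) * exp (-U x) := by
        rw [hparts, hpd, ← integral_neg]
        exact integral_congr_ae (.of_forall fun x => by ring)

theorem integral_mul_diffOp (hU : TamePotential U) (hψ : Smooth ψ) (hψT : CkBound 1 T ψ)
    (hu : Smooth u) (huS : CkBound 2 S u) :
    ∫ x, ψ x * diffOp U u x ∂expMeasure U = -∫ x, gradDot ψ u x ∂expMeasure U := by
  have hint (i : Fin d) : Integrable (fun x => ψ x * pd i (pd i u) x
      - ψ x * (pd i U x * pd i u x)) (expMeasure U) :=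
    (hU.integrable_mul hψ.continuous ((hu.pd i).pd i).continuous hψT.1 ((huS.2 i).2 i)).sub
      (hU.integrable_mul_pd_mul hψ hψT.1 (hu.pd i) (huS.2 i).1 i)
  have hint' (i : Fin d) :=
    hU.integrable_mul (hψ.pd i).continuous (hu.pd i).continuous (hψT.2 i) (huS.2 i).1
  calc ∫ x, ψ x * diffOp U u x ∂expMeasure U
      = ∫ x, ∑ i, (ψ x * pd i (pd i u) x - ψ x * (pd i U x * pd i u x)) ∂expMeasure U := by
        simp only [diffOp, lap, mul_sub, mul_sum, sum_sub_distrib]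
    _ = -∫ x, gradDot ψ u x ∂expMeasure U := by
        rw [integral_finsetSum _ fun i _ => hint i]
        simp only [gradDot]
        rw [integral_finsetSum _ fun i _ => hint' i, ← sum_neg_distrib]
        exact sum_congr rfl fun i _ => hU.integral_mul_pd_sub hψ hψT (hu.pd i) (huS.2 i) i

theorem integral_mul_diffOp_comm (hU : TamePotential U) (hψ : Smooth ψ) (hψT : CkBound 2 T ψ)
    (hu : Smooth u) (huS : CkBound 2 S u) :
    ∫ x, ψ x * diffOp U u x ∂expMeasure U = ∫ x, u x * diffOp U ψ x ∂expMeasure U := by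
  rw [hU.integral_mul_diffOp hψ hψT.pred hu huS, hU.integral_mul_diffOp hu huS.pred hψ hψT]
  simp only [gradDot_comm]

theorem integral_diffOp (hU : TamePotential U) (hu : Smooth u) (huS : CkBound 2 S u) :
    ∫ x, diffOp U u x ∂expMeasure U = 0 := by
  simpa [gradDot, pd_const] using
    hU.integral_mul_diffOp contDiff_const (CkBound.const (c := 1) le_rfl) hu huS

theorem exists_abs_diffOp_le (hU : TamePotential U) (huS : CkBound 2 S u) :
    ∃ C, ∀ x, |diffOp U u x| ≤ C := by
  obtain ⟨K, hK⟩ := hU.exists_abs_pd_le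
  refine ⟨∑ _i : Fin d, S + ∑ _i : Fin d, K * S, fun x => (abs_sub _ _).trans (add_le_add ?_ ?_)⟩
  · exact (abs_sum_le_sum_abs _ _).trans (sum_le_sum fun i _ => (huS.2 i).2 i x)
  · refine (abs_sum_le_sum_abs _ _).trans (sum_le_sum fun i _ => ?_)
    rw [abs_mul]
    exact mul_le_mul (hK i x) ((huS.2 i).1 x) (abs_nonneg _) ((abs_nonneg _).trans (hK i x))

end TamePotential

/-- `s log (s / m) - s + m`, the integrand of the relative entropy of a function of value `s` with
respect to the constant `m`. -/
def relEnt (m s : ℝ) : ℝ := m * InformationTheory.klFun (s / m)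

theorem relEnt_add_le {m a b : ℝ} (hm : 0 < m) (ha : 0 < a) (hb : 0 < b) :
    relEnt m a + (b - a) * log (a / m) ≤ relEnt m b := by
  have hgap : relEnt m b - (relEnt m a + (b - a) * log (a / m))
      = a * InformationTheory.klFun (b / a) := by
    simp only [relEnt, InformationTheory.klFun, log_div ha.ne' hm.ne', log_div hb.ne' hm.ne',
      log_div hb.ne' ha.ne']
    field_simp
    ring
  have := mul_nonneg ha.le (InformationTheory.klFun_nonneg (div_nonneg hb.le ha.le))
  linarith

theorem continuous_relEnt (m : ℝ) : Continuous (relEnt m) :=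
  continuous_const.mul (InformationTheory.continuous_klFun.comp (continuous_id.div_const m))

theorem exists_abs_relEnt_le (m S : ℝ) : ∃ C, ∀ s, |s| ≤ S → |relEnt m s| ≤ C :=
  ((isCompact_Icc (a := -S) (b := S)).exists_bound_of_continuousOn
    (continuous_relEnt m).continuousOn).imp fun _ hC s hs => hC s (abs_le.1 hs)

theorem hasDerivAt_log_div {m s : ℝ} (hm : m ≠ 0) (hs : s ≠ 0) :
    HasDerivAt (fun s => log (s / m)) s⁻¹ s := by
  refine (((hasDerivAt_id' s).div_const m).log (div_ne_zero hs hm)).congr_deriv ?_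
  field_simp

theorem gradDot_log_div {u : ℝ^d → ℝ} {m : ℝ} (hu : Smooth u) (hpos : ∀ x, 0 < u x) (hm : m ≠ 0)
    (x : ℝ^d) : gradDot (fun y => log (u y / m)) u x = fisher u x := by
  rw [gradDot_comm, gradDot_comp_right hu.differentiable (φ' := fun s => s⁻¹)
    fun y => hasDerivAt_log_div hm (hpos y).ne', ← gradSq_eq_gradDot, fisher, div_eq_inv_mul]

theorem CkBound.exists_log_div (S : ℝ) {m ε : ℝ} (hm : 0 < m) (hε : 0 < ε) :
    ∃ T, ∀ u : ℝ^d → ℝ, Smooth u → (∀ x, ε ≤ u x) → CkBound 1 S u →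
      CkBound 1 T fun x => log (u x / m) := by
  refine ⟨max (max |log (ε / m)| |log (S / m)|) (ε⁻¹ * S), fun u hu hεu hS => ⟨fun x => ?_,
    fun i => ?_⟩⟩
  · have hpos : 0 < u x := hε.trans_le (hεu x)
    have hlower : ε / m ≤ u x / m := div_le_div_of_nonneg_right (hεu x) hm.le
    have hupper : u x / m ≤ S / m := div_le_div_of_nonneg_right (abs_le.1 (hS.abs_le x)).2 hm.le
    exact (abs_le_max_abs_abs (log_le_log (by positivity) hlower)
      (log_le_log (by positivity) hupper)).trans (le_max_left _ _)
  · rw [pd_comp (φ' := fun s => s⁻¹) hu.differentiable fun x =>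
      hasDerivAt_log_div hm.ne' (hε.trans_le (hεu x)).ne']
    intro x
    rw [abs_mul, abs_inv, abs_of_pos (hε.trans_le (hεu x))]
    exact (mul_le_mul (inv_anti₀ hε (hεu x)) ((hS.2 i) x) (abs_nonneg _)
      (inv_nonneg.2 hε.le)).trans (le_max_right _ _)

theorem second_order_step_le {η c β q v A Q T a S : ℝ} (hη : 0 ≤ η) (hη₁ : η ≤ 1) (hc : 0 ≤ c)
    (hq : |q| ≤ Q) (hβ : 0 ≤ β) (hβT : β ≤ T) (hAv : |A - v| ≤ a * η) (hA : 0 ≤ A) (hAS : A ≤ S) :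
    (β - η ^ 2 * q + c * η ^ 4 * β) * A
      ≤ β * (A - v) + (β - η ^ 2 * q) * v + (Q * a + c * T * S) * η ^ 3 := by
  have hdrift : -(q * (A - v)) ≤ Q * (a * η) := by
    refine (neg_le_abs _).trans ?_
    rw [abs_mul]
    exact mul_le_mul hq hAv (abs_nonneg _) ((abs_nonneg q).trans hq)
  have hβA : β * A ≤ T * S := mul_le_mul hβT hAS hA (hβ.trans hβT)
  calc (β - η ^ 2 * q + c * η ^ 4 * β) * A
      = β * (A - v) + (β - η ^ 2 * q) * v + (η ^ 2 * -(q * (A - v)) + c * η ^ 4 * (β * A)) := by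
        ring
    _ ≤ β * (A - v) + (β - η ^ 2 * q) * v
        + (η ^ 2 * (Q * (a * η)) + c * η ^ 3 * (T * S)) := by
        have hpow : η ^ 4 ≤ η ^ 3 := pow_le_pow_of_le_one hη hη₁ (by norm_num)
        gcongr
    _ = _ := by ring

/-- `B` is a weight for which the weighted Fisher information decays at rate `κ` along the
semigroup of `diffOp U`, up to the error density `e`: the curvature of `U` dominates
`diffOp U B + κ B - e`. -/
structure FisherWeight (U : ℝ^d → ℝ) (κ : ℝ) (B e : ℝ^d → ℝ) : Prop where
  smooth : Smooth B
  nonneg : ∀ x, 0 ≤ B x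
  exists_ckBound : ∃ S, CkBound 2 S B
  error_continuous : Continuous e
  error_nonneg : ∀ x, 0 ≤ e x
  exists_error_le : ∃ C, ∀ x, e x ≤ C
  curvature : ∀ x v, (diffOp U B x + κ * B x - e x) * ∑ i, v i ^ 2 ≤ 2 * B x * hessForm U x v

namespace TamePotential

variable {U u B e : ℝ^d → ℝ} {κ : ℝ}

theorem integrable_relEnt (hU : TamePotential U) (m : ℝ) {S : ℝ} (hu : Continuous u)
    (huS : ∀ x, |u x| ≤ S) : Integrable (fun x => relEnt m (u x)) (expMeasure U) := by
  obtain ⟨C, hC⟩ := exists_abs_relEnt_le m S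
  exact hU.integrable ((continuous_relEnt m).comp hu) fun x => hC _ (huS x)

variable [NeZero d]

theorem exists_abs_walk_sub_le (hU : TamePotential U) : ∃ C, 0 ≤ C ∧
    ∀ η, 0 ≤ η → η ≤ 1 → ∀ u S, Smooth u → CkBound 1 S u → ∀ x,
      |walk η U u x - u x| ≤ C * S * η := by
  obtain ⟨K, hK⟩ := hU.exists_abs_pd_le
  have hK0 : 0 ≤ K := (abs_nonneg _).trans (hK 0 0)
  exact ⟨_, by positivity, fun η hη hη₁ u S hu hS x => abs_walk_sub_le hu hS hη hη₁ fun i => hK i x⟩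

theorem exists_abs_walk_sub_sub_diffOp_le (hU : TamePotential U) : ∃ C, 0 ≤ C ∧
    ∀ η, 0 ≤ η → η ≤ 1 → ∀ u S, Smooth u → CkBound 3 S u → ∀ x,
      |walk η U u x - u x - η ^ 2 * diffOp U u x| ≤ C * S * η ^ 3 := by
  obtain ⟨K, hK⟩ := hU.exists_abs_pd_le
  have hK0 : 0 ≤ K := (abs_nonneg _).trans (hK 0 0)
  exact ⟨_, by positivity, fun η hη hη₁ u S hu hS x =>
    abs_walk_sub_sub_diffOp_le hu hS hη hη₁ fun i => hK i x⟩

theorem exists_mul_fisher_walk_le (hU : TamePotential U) : ∃ c, 0 ≤ c ∧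
    ∀ η u, Smooth u → (∀ x, 0 < u x) → ∀ x β q, 0 ≤ β →
      (∀ v : Fin d → ℝ, q * ∑ i, v i ^ 2 ≤ 2 * β * hessForm U x v) →
      β * fisher (walk η U u) x ≤ (β - η ^ 2 * q + c * η ^ 4 * β) * walk η U (fisher u) x := by
  obtain ⟨K, hK⟩ := hU.exists_ckBound 1
  refine ⟨d * (d * K ^ 2), by positivity, fun η u hu hpos x β q hβ hq => ?_⟩
  have := mul_fisher_eulerAvg_le hU.smooth hu hpos (sq_nonneg η) (walkNoise η) hβ
    (fun i j => (hK j).2 i x) hq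
  rwa [← pow_mul, mul_comm (η ^ (2 * 2))] at this

theorem integrable_mul_walk_sub (hU : TamePotential U) {ψ : ℝ^d → ℝ} {T S : ℝ} (hψ : Continuous ψ)
    (hψT : ∀ x, |ψ x| ≤ T) (hu : Smooth u) (huS : ∀ x, |u x| ≤ S) (η : ℝ) :
    Integrable (fun x => ψ x * (walk η U u x - u x)) (expMeasure U) :=
  hU.integrable_mul hψ ((hU.smooth.walk hu η).continuous.sub hu.continuous) hψT fun x =>
    (abs_sub _ _).trans (add_le_add (abs_eulerAvg_le huS x) (huS x))

theorem exists_abs_integral_mul_walk_sub_le (hU : TamePotential U) (T S : ℝ) : ∃ C, 0 ≤ C ∧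
    ∀ η, 0 ≤ η → η ≤ 1 → ∀ ψ u, Continuous ψ → (∀ x, |ψ x| ≤ T) → Smooth u → CkBound 3 S u →
      |∫ x, ψ x * (walk η U u x - u x) ∂expMeasure U
        - η ^ 2 * ∫ x, ψ x * diffOp U u x ∂expMeasure U| ≤ C * η ^ 3 := by
  obtain ⟨C, hC, hgen⟩ := hU.exists_abs_walk_sub_sub_diffOp_le
  refine ⟨|T| * C * |S| * (expMeasure U).real Set.univ, by positivity,
    fun η hη hη₁ ψ u hψ hψT hu hS => ?_⟩
  obtain ⟨C₂, hC₂⟩ := hU.exists_abs_diffOp_le (hS.of_le (by norm_num : 2 ≤ 3))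
  have hwalk := hU.integrable_mul_walk_sub hψ hψT hu hS.abs_le η
  have hL := hU.integrable_mul hψ (hU.smooth.diffOp hu).continuous hψT hC₂
  rw [← integral_const_mul, ← integral_sub hwalk (hL.const_mul _), ← Real.norm_eq_abs]
  have hpoint (x : ℝ^d) : ‖ψ x * (walk η U u x - u x) - η ^ 2 * (ψ x * diffOp U u x)‖
      ≤ |T| * (C * S * η ^ 3) := by
    rw [Real.norm_eq_abs, show ψ x * (walk η U u x - u x) - η ^ 2 * (ψ x * diffOp U u x)
      = ψ x * (walk η U u x - u x - η ^ 2 * diffOp U u x) by ring, abs_mul]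
    exact mul_le_mul ((hψT x).trans (le_abs_self T)) (hgen η hη hη₁ u S hu hS x) (abs_nonneg _)
      (abs_nonneg _)
  have := isFiniteMeasure_expMeasure hU.integrable_exp
  refine (norm_integral_le_of_norm_le_const (.of_forall hpoint)).trans_eq ?_
  rw [abs_of_nonneg hS.nonneg]
  ring

theorem exists_abs_integral_walk_sub_le (hU : TamePotential U) (S : ℝ) : ∃ C, 0 ≤ C ∧
    ∀ η, 0 ≤ η → η ≤ 1 → ∀ u, Smooth u → CkBound 3 S u →
      |∫ x, walk η U u x ∂expMeasure U - ∫ x, u x ∂expMeasure U| ≤ C * η ^ 3 := by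
  obtain ⟨C, hC, hgen⟩ := hU.exists_abs_integral_mul_walk_sub_le 1 S
  refine ⟨C, hC, fun η hη hη₁ u hu hS => ?_⟩
  have := hgen η hη hη₁ (fun _ => 1) u continuous_const (by simp) hu hS
  simp only [one_mul, hU.integral_diffOp hu (hS.of_le (by norm_num)), mul_zero, sub_zero] at this
  rwa [integral_sub (hU.integrable (hU.smooth.walk hu η).continuous (abs_eulerAvg_le hS.abs_le))
    (hU.integrable hu.continuous hS.abs_le)] at this

theorem exists_integral_relEnt_sub_le (hU : TamePotential U) (m S : ℝ) {ε : ℝ} (hm : 0 < m)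
    (hε : 0 < ε) : ∃ C, 0 ≤ C ∧
    ∀ η, 0 ≤ η → η ≤ 1 → ∀ u, Smooth u → (∀ x, ε ≤ u x) → CkBound 3 S u →
      ∫ x, relEnt m (u x) ∂expMeasure U - ∫ x, relEnt m (walk η U u x) ∂expMeasure U
        ≤ η ^ 2 * ∫ x, fisher u x ∂expMeasure U + C * η ^ 3 := by
  obtain ⟨T, hT⟩ := CkBound.exists_log_div (d := d) S hm hε
  obtain ⟨C, hC, hgen⟩ := hU.exists_abs_integral_mul_walk_sub_le T S
  refine ⟨C, hC, fun η hη hη₁ u hu hεu hS => ?_⟩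
  have hpos (x : ℝ^d) : 0 < u x := hε.trans_le (hεu x)
  have hlog : Smooth fun x => log (u x / m) :=
    ContDiff.log (hu.div_const m) fun x => (div_pos (hpos x) hm).ne'
  have hlogT := hT u hu hεu (hS.of_le (by norm_num))
  have hdissipation : ∫ x, log (u x / m) * diffOp U u x ∂expMeasure U
      = -∫ x, fisher u x ∂expMeasure U := by
    rw [hU.integral_mul_diffOp hlog hlogT hu (hS.of_le (by norm_num))]
    simp only [gradDot_log_div hu hpos hm.ne']
  have hconvex : ∫ x, relEnt m (u x) ∂expMeasure U - ∫ x, relEnt m (walk η U u x) ∂expMeasure U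
      ≤ -∫ x, log (u x / m) * (walk η U u x - u x) ∂expMeasure U := by
    have hint := integrable_relEnt hU m hu.continuous hS.abs_le
    have hint' := integrable_relEnt hU m (hU.smooth.walk hu η).continuous
      (abs_eulerAvg_le hS.abs_le)
    rw [← integral_sub hint hint', ← integral_neg]
    refine integral_mono (hint.sub hint')
      (hU.integrable_mul_walk_sub hlog.continuous hlogT.abs_le hu hS.abs_le η).neg fun x => ?_
    have := relEnt_add_le hm (hpos x) (hε.trans_le (le_eulerAvg hεu x) : 0 < walk η U u x)
    linarith
  have := abs_le.1 (hgen η hη hη₁ _ u hlog.continuous hlogT.abs_le hu hS)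
  rw [hdissipation] at this
  linarith [this.1]

theorem exists_mul_fisher_walk_le_add (hU : TamePotential U) (hB : FisherWeight U κ B e)
    (S : ℝ) {ε : ℝ} (hε : 0 < ε) : ∃ D, 0 ≤ D ∧
    ∀ η, 0 ≤ η → η ≤ 1 → ∀ u, Smooth u → (∀ x, ε ≤ u x) → CkBound 4 S u → ∀ x,
      B x * fisher (walk η U u) x ≤ B x * (walk η U (fisher u) x - fisher u x)
        + (B x - η ^ 2 * (diffOp U B x + κ * B x - e x)) * fisher u x + D * η ^ 3 := by
  obtain ⟨T, hT⟩ := hB.exists_ckBound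
  obtain ⟨L, hL⟩ := hU.exists_abs_diffOp_le hT
  obtain ⟨E, hE⟩ := hB.exists_error_le
  obtain ⟨S', hS'⟩ := CkBound.exists_fisher (d := d) 3 S hε
  obtain ⟨c, hc, hstep⟩ := hU.exists_mul_fisher_walk_le
  obtain ⟨C, hC, hdiff⟩ := hU.exists_abs_walk_sub_le
  have hT₀ : 0 ≤ T := hT.nonneg
  have hL₀ : 0 ≤ L := (abs_nonneg _).trans (hL 0)
  have hE₀ : 0 ≤ E := (hB.error_nonneg 0).trans (hE 0)
  refine ⟨(L + |κ| * T + E) * (C * |S'|) + c * T * |S'|, by positivity,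
    fun η hη hη₁ u hu hεu hS x => ?_⟩
  have hv : CkBound 3 S' (fisher u) := hS' u hu hεu hS
  have hpos (x : ℝ^d) : 0 < u x := hε.trans_le (hεu x)
  set v := fisher u x
  set A := walk η U (fisher u) x
  set q := diffOp U B x + κ * B x - e x
  have hq : |q| ≤ L + |κ| * T + E := by
    refine (abs_sub _ _).trans (add_le_add ((abs_add_le _ _).trans (add_le_add (hL x) ?_)) ?_)
    · rw [abs_mul]
      exact mul_le_mul_of_nonneg_left (hT.abs_le x) (abs_nonneg _)
    · exact (abs_of_nonneg (hB.error_nonneg x)).trans_le (hE x)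
  have hAv : |A - v| ≤ C * |S'| * η := by
    rw [abs_of_nonneg hv.nonneg]
    exact hdiff η hη hη₁ _ S' (hu.fisher hpos) (hv.of_le (by norm_num)) x
  have hAS : A ≤ |S'| :=
    (le_abs_self A).trans ((abs_eulerAvg_le hv.abs_le x).trans (le_abs_self S'))
  exact (hstep η u hu hpos x _ q (hB.nonneg x) (hB.curvature x)).trans
    (second_order_step_le hη hη₁ hc hq (hB.nonneg x) ((le_abs_self _).trans (hT.abs_le x)) hAv
      (le_eulerAvg (fisher_nonneg hpos) x) hAS)

theorem exists_integral_mul_fisher_walk_le (hU : TamePotential U) (hB : FisherWeight U κ B e)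
    (S : ℝ) {ε : ℝ} (hε : 0 < ε) : ∃ C, 0 ≤ C ∧
    ∀ η, 0 ≤ η → η ≤ 1 → ∀ u, Smooth u → (∀ x, ε ≤ u x) → CkBound 4 S u →
      ∫ x, B x * fisher (walk η U u) x ∂expMeasure U
        ≤ (1 - κ * η ^ 2) * ∫ x, B x * fisher u x ∂expMeasure U
          + η ^ 2 * ∫ x, e x * fisher u x ∂expMeasure U + C * η ^ 3 := by
  have := isFiniteMeasure_expMeasure hU.integrable_exp
  obtain ⟨T, hT⟩ := hB.exists_ckBound
  obtain ⟨L, hL⟩ := hU.exists_abs_diffOp_le hT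
  obtain ⟨E, hE⟩ := hB.exists_error_le
  obtain ⟨S', hS'⟩ := CkBound.exists_fisher (d := d) 3 S hε
  obtain ⟨D, hD, hstep⟩ := hU.exists_mul_fisher_walk_le_add hB S hε
  obtain ⟨C, hC, hgen⟩ := hU.exists_abs_integral_mul_walk_sub_le T S'
  refine ⟨C + D * (expMeasure U).real Set.univ, by positivity, fun η hη hη₁ u hu hεu hS => ?_⟩
  have hpos (x : ℝ^d) : 0 < u x := hε.trans_le (hεu x)
  have hv : CkBound 3 S' (fisher u) := hS' u hu hεu hS
  have hvs : Smooth (fisher u) := hu.fisher hpos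
  have hiB := hU.integrable_mul hB.smooth.continuous hvs.continuous hT.abs_le hv.abs_le
  have hie := hU.integrable_mul hB.error_continuous hvs.continuous
    (fun x => (abs_of_nonneg (hB.error_nonneg x)).trans_le (hE x)) hv.abs_le
  have hiL := hU.integrable_mul hvs.continuous (hU.smooth.diffOp hB.smooth).continuous hv.abs_le hL
  have hiw := hU.integrable_mul_walk_sub hB.smooth.continuous hT.abs_le hvs hv.abs_le η
  have hi₁ := hiw.fun_add (hiB.const_mul (1 - κ * η ^ 2))
  have hi₂ : Integrable (fun x => B x * (walk η U (fisher u) x - fisher u x)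
      + (1 - κ * η ^ 2) * (B x * fisher u x) - η ^ 2 * (fisher u x * diffOp U B x))
      (expMeasure U) := hi₁.sub (hiL.const_mul (η ^ 2))
  have hi₃ := hi₂.fun_add (hie.const_mul (η ^ 2))
  have hsplit : ∫ x, B x * fisher (walk η U u) x ∂expMeasure U
      ≤ ∫ x, (B x * (walk η U (fisher u) x - fisher u x) + (1 - κ * η ^ 2) * (B x * fisher u x)
        - η ^ 2 * (fisher u x * diffOp U B x) + η ^ 2 * (e x * fisher u x) + D * η ^ 3)
          ∂expMeasure U := by
    refine integral_mono_of_nonneg (.of_forall fun x => mul_nonneg (hB.nonneg x)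
      (fisher_nonneg (fun y => hε.trans_le (le_eulerAvg hεu y)) x))
      (hi₃.fun_add (integrable_const _)) (.of_forall fun x => ?_)
    linarith [hstep η hη hη₁ u hu hεu hS x]
  rw [integral_add hi₃ (integrable_const _), integral_add hi₂ (hie.const_mul _),
    integral_sub hi₁ (hiL.const_mul _), integral_add hiw (hiB.const_mul _), integral_const_mul,
    integral_const_mul, integral_const_mul, integral_const, smul_eq_mul] at hsplit
  have hfirst := abs_le.1 (hgen η hη hη₁ B _ hB.smooth.continuous hT.abs_le hvs hv)
  rw [hU.integral_mul_diffOp_comm hB.smooth hT hvs (hv.of_le (by norm_num))] at hfirst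
  linarith [hfirst.2]

end TamePotential

theorem mul_sum_range_le {x : ℕ → ℝ} {q s : ℝ} {n : ℕ}
    (h : ∀ k < n, x (k + 1) ≤ (1 - q) * x k + s) :
    q * ∑ k ∈ range n, x k ≤ x 0 - x n + n * s := by
  calc q * ∑ k ∈ range n, x k = ∑ k ∈ range n, q * x k := mul_sum _ _ _
    _ ≤ ∑ k ∈ range n, (x k - x (k + 1) + s) :=
        sum_le_sum fun k hk => by linarith [h k (mem_range.1 hk)]
    _ = x 0 - x n + n * s := by rw [sum_add_distrib, sum_range_sub']; simp

theorem last_le_add_mul {x : ℕ → ℝ} {s : ℝ} {n : ℕ} (hs : 0 ≤ s)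
    (h : ∀ k < n, x (k + 1) ≤ x k + s) {k : ℕ} (hk : k ≤ n) : x n ≤ x k + n * s := by
  have hsum : ∑ i ∈ Ico k n, (x (i + 1) - x i) ≤ ∑ _i ∈ Ico k n, s :=
    sum_le_sum fun i hi => by linarith [h i (mem_Ico.1 hi).2]
  rw [sum_Ico_sub _ hk, sum_const, Nat.card_Ico, nsmul_eq_mul, Nat.cast_sub hk] at hsum
  nlinarith [(Nat.cast_nonneg k : (0 : ℝ) ≤ k)]

theorem mul_last_le_sum_range_add {x : ℕ → ℝ} {s : ℝ} {n : ℕ} (hs : 0 ≤ s)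
    (h : ∀ k < n, x (k + 1) ≤ x k + s) : n * x n ≤ ∑ k ∈ range n, x k + n * (n * s) := by
  calc n * x n = ∑ _k ∈ range n, x n := by simp
    _ ≤ ∑ k ∈ range n, (x k + n * s) :=
        sum_le_sum fun k hk => last_le_add_mul hs h (mem_range.1 hk).le
    _ = ∑ k ∈ range n, x k + n * (n * s) := by simp [sum_add_distrib]

theorem mul_sum_range_le_of_decay {x : ℕ → ℝ} {κ η T s : ℝ} {n : ℕ} (hκ : 0 < κ)
    (hx : ∀ k, 0 ≤ x k) (hT : n * η ^ 2 = T)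
    (h : ∀ k < n, x (k + 1) ≤ (1 - κ * η ^ 2) * x k + η ^ 2 * s) :
    η ^ 2 * ∑ k ∈ range n, x k ≤ (x 0 + T * s) / κ := by
  rw [le_div_iff₀ hκ, ← hT]
  linarith [mul_sum_range_le h, hx n]

theorem last_le_of_decay {x : ℕ → ℝ} {κ η T s : ℝ} {n : ℕ} (hκ : 0 < κ) (hs : 0 ≤ s) (hT₀ : 0 < T)
    (hx : ∀ k, 0 ≤ x k) (hT : n * η ^ 2 = T)
    (h : ∀ k < n, x (k + 1) ≤ (1 - κ * η ^ 2) * x k + η ^ 2 * s) :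
    x n ≤ x 0 / (κ * T) + (1 / κ + T) * s := by
  have hdecr (k : ℕ) (hk : k < n) : x (k + 1) ≤ x k + η ^ 2 * s := by
    linarith [h k hk, mul_nonneg (mul_nonneg hκ.le (sq_nonneg η)) (hx k)]
  have hlast := mul_le_mul_of_nonneg_left
    (mul_last_le_sum_range_add (mul_nonneg (sq_nonneg η) hs) hdecr) (sq_nonneg η)
  have hsum := mul_sum_range_le_of_decay hκ hx hT h
  rw [show x 0 / (κ * T) + (1 / κ + T) * s = ((x 0 + T * s) / κ + T * (T * s)) / T by
    field_simp; ring, le_div_iff₀ hT₀]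
  calc x n * T = η ^ 2 * (n * x n) := by rw [← hT]; ring
    _ ≤ η ^ 2 * ∑ k ∈ range n, x k + n * η ^ 2 * (n * η ^ 2 * s) := by linarith
    _ ≤ (x 0 + T * s) / κ + T * (T * s) := by rw [hT]; linarith

theorem exists_nat_mul_sq_eq {T η₀ : ℝ} (hT : 0 < T) (hη₀ : 0 < η₀) :
    ∃ (n : ℕ) (η : ℝ), 0 < η ∧ η ≤ η₀ ∧ n * η ^ 2 = T := by
  obtain ⟨n, hn⟩ := exists_nat_gt (T / η₀ ^ 2)
  have hn₀ : (0 : ℝ) < n := (by positivity : 0 < T / η₀ ^ 2).trans hn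
  refine ⟨n, √(T / n), by positivity, Real.sqrt_le_iff.2 ⟨hη₀.le, ?_⟩, ?_⟩
  · rw [div_le_iff₀ hn₀, ← div_le_iff₀' (by positivity)]
    exact hn.le
  · rw [Real.sq_sqrt (by positivity), mul_div_cancel₀ _ hn₀.ne']

namespace TamePotential

variable {U g B e : ℝ^d → ℝ} {κ ρ ε : ℝ}

theorem integral_fisher_le (hU : TamePotential U) (A : ℝ) {S Φ : ℝ} {u : ℝ^d → ℝ}
    (hB : Continuous B) (hBS : ∀ x, |B x| ≤ S) (hu : Smooth u) (hpos : ∀ x, 0 < u x)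
    (hΦ : ∀ x, fisher u x ≤ Φ) :
    ∫ x, fisher u x ∂expMeasure U ≤ A * ∫ x, B x * fisher u x ∂expMeasure U
      + Φ * ∫ x, max (1 - A * B x) 0 ∂expMeasure U := by
  have hf := (hu.fisher hpos).continuous
  have hfΦ (x : ℝ^d) : |fisher u x| ≤ Φ :=
    (abs_of_nonneg (fisher_nonneg hpos x)).trans_le (hΦ x)
  have hiB := (hU.integrable_mul hB hf hBS hfΦ).const_mul A
  have hi₁ : Integrable (fun x => max (1 - A * B x) 0) (expMeasure U) :=
    ((hU.integrable continuous_const fun _ => abs_one.le).sub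
      ((hU.integrable hB hBS).const_mul A)).pos_part
  rw [← integral_const_mul, ← integral_const_mul, ← integral_add hiB (hi₁.const_mul Φ)]
  refine integral_mono (hU.integrable hf hfΦ) (hiB.add (hi₁.const_mul Φ)) fun x => ?_
  have h₁ := mul_le_mul_of_nonneg_right (hΦ x) (le_max_right (1 - A * B x) 0)
  have h₂ := mul_le_mul_of_nonneg_left (le_max_left (1 - A * B x) 0) (fisher_nonneg hpos x)
  simp only
  linarith

variable [NeZero d]

theorem exists_walk_iterate_bound (hU : TamePotential U) (hg : Smooth g) {k : ℕ}
    (hgS : CkBound k S g) (T : ℝ) : ∃ S', ∀ η, 0 ≤ η → η ≤ 1 → ∀ j : ℕ, j * η ^ 2 ≤ T →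
      CkBound k S' ((walk η U)^[j] g) := by
  obtain ⟨K, hK⟩ := hU.exists_ckBound (k + 1)
  obtain ⟨S', hS'⟩ := CkBound.exists_eulerAvg_iterate (ι := Fin d × Bool) hU.smooth
    (fun i j => (hK j).2 i) hg hgS T
  exact ⟨S', fun η hη hη₁ j hj => hS' _ _ (sq_nonneg η) (pow_le_one₀ hη hη₁) j hj⟩

theorem exists_fisher_walk_iterate_le (hU : TamePotential U)
    (hcurv : ∀ x v, -ρ * ∑ i, v i ^ 2 ≤ hessForm U x v) : ∃ η₀, 0 < η₀ ∧
    ∀ η, 0 ≤ η → η ≤ η₀ → ∀ ε, 0 < ε → ∀ u, Smooth u → (∀ x, ε ≤ u x) →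
      ∀ Φ, (∀ x, fisher u x ≤ Φ) → ∀ (k : ℕ) (x),
        fisher ((walk η U)^[k] u) x ≤ exp ((2 * ρ + 1) * (k * η ^ 2)) * Φ := by
  obtain ⟨c, hc, hstep⟩ := hU.exists_mul_fisher_walk_le
  refine ⟨(√(c + 1))⁻¹, by positivity, fun η hη hη₀ ε hε u hu hεu Φ hΦ k => ?_⟩
  have hcη : c * η ^ 2 ≤ 1 := by
    have h₁ : η ^ 2 ≤ (c + 1)⁻¹ := by
      simpa [Real.sq_sqrt (by positivity : 0 ≤ c + 1)] using pow_le_pow_left₀ hη hη₀ 2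
    rw [← one_div, le_div_iff₀ (by positivity)] at h₁
    linarith [sq_nonneg η]
  have hfactor : 1 - η ^ 2 * (-2 * ρ) + c * η ^ 4 * 1 ≤ exp ((2 * ρ + 1) * η ^ 2) := by
    have := mul_le_mul_of_nonneg_right hcη (sq_nonneg η)
    linarith [add_one_le_exp ((2 * ρ + 1) * η ^ 2)]
  induction k with
  | zero => simpa using hΦ
  | succ k ih =>
    intro x
    have hpos (y : ℝ^d) : 0 < (walk η U)^[k] u y := hε.trans_le (le_eulerAvg_iterate hεu k y)
    rw [Function.iterate_succ_apply']
    calc fisher (walk η U ((walk η U)^[k] u)) x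
        ≤ (1 - η ^ 2 * (-2 * ρ) + c * η ^ 4 * 1) * walk η U (fisher ((walk η U)^[k] u)) x :=
          (one_mul _).ge.trans <| hstep η _ (hU.smooth.eulerAvg_iterate hu k) hpos x 1 (-2 * ρ)
            zero_le_one fun v => by linarith [hcurv x v]
      _ ≤ exp ((2 * ρ + 1) * η ^ 2) * (exp ((2 * ρ + 1) * (k * η ^ 2)) * Φ) :=
          mul_le_mul hfactor (eulerAvg_le ih x) (le_eulerAvg (fisher_nonneg hpos) x) (exp_pos _).le
      _ = exp ((2 * ρ + 1) * ((k + 1 : ℕ) * η ^ 2)) * Φ := by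
          rw [← mul_assoc, ← exp_add]
          push_cast
          ring_nf

theorem exists_integral_relEnt_sub_iterate_le (hU : TamePotential U) (hg : Smooth g)
    (hgS : CkBound 3 S g) {m : ℝ} (hm : 0 < m) (hε : 0 < ε) (hεg : ∀ x, ε ≤ g x) (T : ℝ) :
    ∃ C, 0 ≤ C ∧ ∀ η, 0 ≤ η → η ≤ 1 → ∀ n : ℕ, n * η ^ 2 ≤ T →
      ∫ x, relEnt m (g x) ∂expMeasure U - ∫ x, relEnt m ((walk η U)^[n] g x) ∂expMeasure U
        ≤ η ^ 2 * ∑ k ∈ range n, ∫ x, fisher ((walk η U)^[k] g) x ∂expMeasure U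
          + n * (C * η ^ 3) := by
  obtain ⟨S', hS'⟩ := hU.exists_walk_iterate_bound hg hgS T
  obtain ⟨C, hC, hstep⟩ := hU.exists_integral_relEnt_sub_le m S' hm hε
  refine ⟨C, hC, fun η hη hη₁ n hn => ?_⟩
  have hdrop (k : ℕ) (hk : k ∈ range n) := hstep η hη hη₁ _ (hU.smooth.eulerAvg_iterate hg k)
    (le_eulerAvg_iterate hεg k) (hS' η hη hη₁ k ((mul_le_mul_of_nonneg_right
      (Nat.cast_le.2 (mem_range.1 hk).le) (sq_nonneg η)).trans hn))
  calc _ = ∑ k ∈ range n, (∫ x, relEnt m ((walk η U)^[k] g x) ∂expMeasure U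
        - ∫ x, relEnt m ((walk η U)^[k + 1] g x) ∂expMeasure U) :=
        (sum_range_sub' (fun k => ∫ x, relEnt m ((walk η U)^[k] g x) ∂expMeasure U) n).symm
    _ ≤ ∑ k ∈ range n, (η ^ 2 * ∫ x, fisher ((walk η U)^[k] g) x ∂expMeasure U + C * η ^ 3) := by
        simp only [Function.iterate_succ_apply']
        exact sum_le_sum hdrop
    _ = _ := by simp [sum_add_distrib, mul_sum]

theorem exists_abs_integral_iterate_sub_le (hU : TamePotential U) (hg : Smooth g)
    (hgS : CkBound 3 S g) (T : ℝ) :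
    ∃ C, 0 ≤ C ∧ ∀ η, 0 ≤ η → η ≤ 1 → ∀ n : ℕ, n * η ^ 2 ≤ T →
      |∫ x, (walk η U)^[n] g x ∂expMeasure U - ∫ x, g x ∂expMeasure U| ≤ n * (C * η ^ 3) := by
  obtain ⟨S', hS'⟩ := hU.exists_walk_iterate_bound hg hgS T
  obtain ⟨C, hC, hstep⟩ := hU.exists_abs_integral_walk_sub_le S'
  refine ⟨C, hC, fun η hη hη₁ n hn => ?_⟩
  have hdrift (k : ℕ) (hk : k ∈ range n) := hstep η hη hη₁ _ (hU.smooth.eulerAvg_iterate hg k)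
    (hS' η hη hη₁ k ((mul_le_mul_of_nonneg_right
      (Nat.cast_le.2 (mem_range.1 hk).le) (sq_nonneg η)).trans hn))
  have htele := sum_range_sub (fun k => ∫ x, (walk η U)^[k] g x ∂expMeasure U) n
  simp only [Function.iterate_succ_apply', Function.iterate_zero_apply] at htele
  rw [← htele]
  exact (abs_sum_le_sum_abs _ _).trans ((sum_le_sum hdrift).trans_eq (by simp))

theorem exists_integral_mul_fisher_iterate_succ_le (hU : TamePotential U)
    (hB : FisherWeight U κ B e) (hg : Smooth g) (hgS : CkBound 4 S g) (hε : 0 < ε)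
    (hεg : ∀ x, ε ≤ g x) (hρ : 0 ≤ ρ) (hcurv : ∀ x v, -ρ * ∑ i, v i ^ 2 ≤ hessForm U x v)
    {T Ψ : ℝ} (hΨ : ∀ x, exp ((2 * ρ + 1) * T) * fisher g x ≤ Ψ) :
    ∃ C η₀, 0 ≤ C ∧ 0 < η₀ ∧ ∀ η, 0 ≤ η → η ≤ η₀ → ∀ n : ℕ, n * η ^ 2 ≤ T → ∀ k < n,
      (∀ x, fisher ((walk η U)^[k] g) x ≤ Ψ) ∧
      ∫ x, B x * fisher ((walk η U)^[k + 1] g) x ∂expMeasure U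
        ≤ (1 - κ * η ^ 2) * ∫ x, B x * fisher ((walk η U)^[k] g) x ∂expMeasure U
          + η ^ 2 * (Ψ * ∫ x, e x ∂expMeasure U + C * η) := by
  obtain ⟨S', hS'⟩ := hU.exists_walk_iterate_bound hg hgS T
  obtain ⟨C, hC, hstep⟩ := hU.exists_integral_mul_fisher_walk_le hB S' hε
  obtain ⟨η₀, hη₀, hsup⟩ := hU.exists_fisher_walk_iterate_le hcurv
  obtain ⟨E, hE⟩ := hB.exists_error_le
  refine ⟨C, η₀ ⊓ 1, hC, by positivity, fun η hη hηle n hn k hk => ?_⟩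
  have hkT : k * η ^ 2 ≤ T :=
    (mul_le_mul_of_nonneg_right (Nat.cast_le.2 hk.le) (sq_nonneg η)).trans hn
  have hpos (x : ℝ^d) : 0 < (walk η U)^[k] g x := hε.trans_le (le_eulerAvg_iterate hεg k x)
  have hΨ₀ : 0 ≤ Ψ := (mul_nonneg (exp_pos _).le
    (fisher_nonneg (fun x => hε.trans_le (hεg x)) 0)).trans (hΨ 0)
  have hfisher (x : ℝ^d) : fisher ((walk η U)^[k] g) x ≤ Ψ := by
    refine (hsup η hη (hηle.trans inf_le_left) ε hε g hg hεg (Ψ / exp ((2 * ρ + 1) * T))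
      (fun y => (le_div_iff₀' (exp_pos _)).2 (hΨ y)) k x).trans ?_
    rw [mul_div_left_comm, ← exp_sub]
    refine mul_le_of_le_one_right hΨ₀ (exp_le_one_iff.2 ?_)
    linarith [mul_le_mul_of_nonneg_left hkT (by linarith : 0 ≤ 2 * ρ + 1)]
  refine ⟨hfisher, ?_⟩
  have herror : ∫ x, e x * fisher ((walk η U)^[k] g) x ∂expMeasure U
      ≤ Ψ * ∫ x, e x ∂expMeasure U := by
    rw [← integral_const_mul]
    refine integral_mono_of_nonneg (.of_forall fun x =>
      mul_nonneg (hB.error_nonneg x) (fisher_nonneg hpos x)) ((hU.integrable hB.error_continuous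
        fun x => (abs_of_nonneg (hB.error_nonneg x)).trans_le (hE x)).const_mul _)
      (.of_forall fun x => (mul_comm _ _).trans_le
        (mul_le_mul_of_nonneg_right (hfisher x) (hB.error_nonneg x)))
  rw [Function.iterate_succ_apply']
  have := hstep η hη (hηle.trans inf_le_right) ((walk η U)^[k] g)
    (hU.smooth.eulerAvg_iterate hg k) (le_eulerAvg_iterate hεg k)
    (hS' η hη (hηle.trans inf_le_right) k hkT)
  linarith [mul_le_mul_of_nonneg_left herror (sq_nonneg η)]

theorem exists_iterate_relaxation (hU : TamePotential U) (hB : FisherWeight U κ B e)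
    (hκ : 0 < κ) (hρ : 0 ≤ ρ) (hcurv : ∀ x v, -ρ * ∑ i, v i ^ 2 ≤ hessForm U x v) (hg : Smooth g)
    {S : ℝ} (hgS : CkBound 4 S g) (hε : 0 < ε) (hεg : ∀ x, ε ≤ g x) {A T Ψ m : ℝ}
    (hΨ : ∀ x, exp ((2 * ρ + 1) * T) * fisher g x ≤ Ψ) (hA : 0 ≤ A) (hT : 0 < T) (hm : 0 < m) :
    ∃ C η₀, 0 ≤ C ∧ 0 < η₀ ∧ ∀ η, 0 ≤ η → η ≤ η₀ → ∀ n : ℕ, n * η ^ 2 = T →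
      ∫ x, relEnt m (g x) ∂expMeasure U
        ≤ A / κ * (∫ x, B x * fisher g x ∂expMeasure U
            + T * (Ψ * ∫ x, e x ∂expMeasure U + C * η))
          + T * (Ψ * ∫ x, max (1 - A * B x) 0 ∂expMeasure U + C * η)
          + ∫ x, relEnt m ((walk η U)^[n] g x) ∂expMeasure U ∧
      ∫ x, B x * fisher ((walk η U)^[n] g) x ∂expMeasure U
        ≤ (∫ x, B x * fisher g x ∂expMeasure U) / (κ * T)
          + (1 / κ + T) * (Ψ * ∫ x, e x ∂expMeasure U + C * η) := by
  obtain ⟨S', hS'⟩ := hB.exists_ckBound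
  obtain ⟨C, hC, hent⟩ :=
    hU.exists_integral_relEnt_sub_iterate_le hg (hgS.of_le (by norm_num)) hm hε hεg T
  obtain ⟨C', η₀, hC', hη₀, hdecay⟩ :=
    hU.exists_integral_mul_fisher_iterate_succ_le hB hg hgS hε hεg hρ hcurv hΨ
  refine ⟨max C C', η₀ ⊓ 1, le_max_of_le_left hC, by positivity, fun η hη hη_le n hn => ?_⟩
  have hpos (k : ℕ) (x : ℝ^d) : 0 < (walk η U)^[k] g x := hε.trans_le (le_eulerAvg_iterate hεg k x)
  have hE : 0 ≤ ∫ x, e x ∂expMeasure U := integral_nonneg hB.error_nonneg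
  have hΨ₀ : 0 ≤ Ψ := (mul_nonneg (exp_pos _).le (fisher_nonneg (hpos 0) 0)).trans (hΨ 0)
  have hx (k : ℕ) : 0 ≤ ∫ x, B x * fisher ((walk η U)^[k] g) x ∂expMeasure U :=
    integral_nonneg fun x => mul_nonneg (hB.nonneg x) (fisher_nonneg (hpos k) x)
  have hdecay (k : ℕ) (hk : k < n) := hdecay η hη (hη_le.trans inf_le_left) n hn.le k hk
  have hrec (k : ℕ) (hk : k < n) := (hdecay k hk).2
  have hsum := mul_le_mul_of_nonneg_left (mul_sum_range_le_of_decay hκ hx hn hrec) hA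
  have hlast := last_le_of_decay hκ (by positivity) hT hx hn hrec
  have hfisher := sum_le_sum fun k hk => hU.integral_fisher_le (u := (walk η U)^[k] g) A
    hB.smooth.continuous hS'.abs_le (hU.smooth.eulerAvg_iterate hg k) (hpos k)
    (hdecay k (mem_range.1 hk)).1
  rw [sum_add_distrib, ← mul_sum, sum_const, card_range, nsmul_eq_mul] at hfisher
  have hfisher := mul_le_mul_of_nonneg_left hfisher (sq_nonneg η)
  have hCη : C * η ≤ max C C' * η := mul_le_mul_of_nonneg_right (le_max_left _ _) hη
  have hCη' : C' * η ≤ max C C' * η := mul_le_mul_of_nonneg_right (le_max_right _ _) hη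
  simp only [Function.iterate_zero_apply] at hsum hlast
  refine ⟨?_, hlast.trans (by gcongr)⟩
  set I := ∫ x, B x * fisher g x ∂expMeasure U
  set E := ∫ x, e x ∂expMeasure U
  set J := ∫ x, max (1 - A * B x) 0 ∂expMeasure U
  set R := ∫ x, relEnt m ((walk η U)^[n] g x) ∂expMeasure U
  calc ∫ x, relEnt m (g x) ∂expMeasure U
      ≤ η ^ 2 * ∑ k ∈ range n, ∫ x, fisher ((walk η U)^[k] g) x ∂expMeasure U
        + n * (C * η ^ 3) + R := by linarith [hent η hη (hη_le.trans inf_le_right) n hn.le]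
    _ ≤ A * ((I + T * (Ψ * E + C' * η)) / κ) + n * η ^ 2 * (Ψ * J + C * η) + R := by linarith
    _ = A / κ * (I + T * (Ψ * E + C' * η)) + T * (Ψ * J + C * η) + R := by rw [hn]; ring
    _ ≤ _ := by gcongr

theorem exists_relaxation (hU : TamePotential U) (hB : FisherWeight U κ B e) (hκ : 0 < κ)
    (hρ : 0 ≤ ρ) (hcurv : ∀ x v, -ρ * ∑ i, v i ^ 2 ≤ hessForm U x v) (hg : Smooth g) {S M : ℝ}
    (hgS : CkBound 4 S g) (hε : 0 < ε) (hεg : ∀ x, ε ≤ g x) (hgM : ∀ x, g x ≤ M)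
    {A T Ψ δ m : ℝ} (hΨ : ∀ x, exp ((2 * ρ + 1) * T) * fisher g x ≤ Ψ)
    (hA : 0 ≤ A) (hT : 0 < T) (hδ : 0 < δ) (hm : 0 < m) :
    ∃ w, Smooth w ∧ (∀ x, ε ≤ w x) ∧ (∀ x, w x ≤ M) ∧
      ∫ x, relEnt m (g x) ∂expMeasure U
        ≤ A / κ * (∫ x, B x * fisher g x ∂expMeasure U + T * (Ψ * ∫ x, e x ∂expMeasure U + δ))
          + T * (Ψ * ∫ x, max (1 - A * B x) 0 ∂expMeasure U + δ)
          + ∫ x, relEnt m (w x) ∂expMeasure U ∧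
      ∫ x, B x * fisher w x ∂expMeasure U
        ≤ (∫ x, B x * fisher g x ∂expMeasure U) / (κ * T)
          + (1 / κ + T) * (Ψ * ∫ x, e x ∂expMeasure U + δ) ∧
      |∫ x, w x ∂expMeasure U - ∫ x, g x ∂expMeasure U| ≤ T * δ := by
  obtain ⟨C, η₀, hC, hη₀, hrelax⟩ :=
    hU.exists_iterate_relaxation hB hκ hρ hcurv hg hgS hε hεg hΨ hA hT hm
  obtain ⟨C', hC', hmean⟩ :=
    hU.exists_abs_integral_iterate_sub_le hg (hgS.of_le (by norm_num)) T
  obtain ⟨n, η, hη, hη_le, hn⟩ := exists_nat_mul_sq_eq hT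
    (show 0 < η₀ ⊓ 1 ⊓ (δ / (C + C' + 1)) by positivity)
  obtain ⟨⟨hηη₀, hη₁⟩, hηδ⟩ : (η ≤ η₀ ∧ η ≤ 1) ∧ η ≤ δ / (C + C' + 1) := by
    simpa only [le_inf_iff] using hη_le
  rw [le_div_iff₀' (by positivity)] at hηδ
  have hCη : C * η ≤ δ := by linarith [mul_nonneg hC' hη.le]
  have hCη' : C' * η ≤ δ := by linarith [mul_nonneg hC hη.le]
  obtain ⟨hent, hlast⟩ := hrelax η hη.le hηη₀ n hn
  refine ⟨(walk η U)^[n] g, hU.smooth.eulerAvg_iterate hg n, le_eulerAvg_iterate hεg n,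
    eulerAvg_iterate_le hgM n, hent.trans (by gcongr), hlast.trans (by gcongr),
    (hmean η hη.le hη₁ n hn.le).trans ?_⟩
  calc n * (C' * η ^ 3) = T * (C' * η) := by rw [← hn]; ring
    _ ≤ T * δ := by gcongr

end TamePotential

section LocalPoincare

variable {w : ℝ^d → ℝ}

theorem sq_integral_le_integral_sq {φ : ℝ → ℝ} (hφ : Continuous φ) :
    (∫ t in (0 : ℝ)..1, φ t) ^ 2 ≤ ∫ t in (0 : ℝ)..1, φ t ^ 2 := by
  set c := ∫ t in (0 : ℝ)..1, φ t
  have hvar : 0 ≤ ∫ t in (0 : ℝ)..1, (φ t ^ 2 - 2 * c * φ t + c ^ 2) :=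
    intervalIntegral.integral_nonneg zero_le_one fun t _ => by nlinarith [sq_nonneg (φ t - c)]
  rw [intervalIntegral.integral_add (by apply Continuous.intervalIntegrable; fun_prop) (by simp),
    intervalIntegral.integral_sub (by apply Continuous.intervalIntegrable; fun_prop)
      (by apply Continuous.intervalIntegrable; fun_prop),
    intervalIntegral.integral_const_mul, intervalIntegral.integral_const] at hvar
  norm_num at hvar
  linarith

theorem sq_fderiv_le (x z : ℝ^d) : fderiv ℝ w x z ^ 2 ≤ ‖z‖ ^ 2 * gradSq w x := by
  rw [fderiv_eq_sum, EuclideanSpace.real_norm_sq_eq]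
  exact sum_mul_sq_le_sq_mul_sq _ _ _

theorem sq_sub_le_integral_gradSq (hw : Smooth w) (x z : ℝ^d) :
    (w (x + z) - w x) ^ 2 ≤ ‖z‖ ^ 2 * ∫ t in (0 : ℝ)..1, gradSq w (x + t • z) := by
  have hderiv (t : ℝ) :
      HasDerivAt (fun t : ℝ => w (x + t • z)) (fderiv ℝ w (x + t • z) z) t := by
    have hline : HasDerivAt (fun t : ℝ => x + t • z) z t := by
      simpa using ((hasDerivAt_id t).smul_const z).const_add x
    exact (hw.differentiable _).hasFDerivAt.comp_hasDerivAt t hline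
  have hcont : Continuous fun t : ℝ => fderiv ℝ w (x + t • z) z :=
    ((hw.continuous_fderiv (by simp)).comp (by fun_prop)).clm_apply continuous_const
  have hgrad : Continuous fun t : ℝ => gradSq w (x + t • z) :=
    hw.gradSq.continuous.comp (by fun_prop)
  calc (w (x + z) - w x) ^ 2
      = (∫ t in (0 : ℝ)..1, fderiv ℝ w (x + t • z) z) ^ 2 := by
        rw [intervalIntegral.integral_eq_sub_of_hasDerivAt (fun t _ => hderiv t)
          (hcont.intervalIntegrable _ _)]
        simp
    _ ≤ ∫ t in (0 : ℝ)..1, fderiv ℝ w (x + t • z) z ^ 2 := sq_integral_le_integral_sq hcont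
    _ ≤ ∫ t in (0 : ℝ)..1, ‖z‖ ^ 2 * gradSq w (x + t • z) :=
        intervalIntegral.integral_mono_on zero_le_one ((hcont.pow 2).intervalIntegrable _ _)
          ((hgrad.const_smul (‖z‖ ^ 2)).intervalIntegrable _ _) fun t _ => sq_fderiv_le _ _
    _ = _ := intervalIntegral.integral_const_mul _ _

theorem ofReal_sq_sub_le_lintegral (hw : Smooth w) (x z : ℝ^d) :
    ENNReal.ofReal ((w (x + z) - w x) ^ 2)
      ≤ ENNReal.ofReal (‖z‖ ^ 2)
        * ∫⁻ t in Ioc (0 : ℝ) 1, ENNReal.ofReal (gradSq w (x + t • z)) := by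
  have hgrad : Continuous fun t : ℝ => gradSq w (x + t • z) :=
    hw.gradSq.continuous.comp (by fun_prop)
  rw [← ofReal_integral_eq_lintegral_ofReal
    (hgrad.integrableOn_Icc.mono_set Ioc_subset_Icc_self) (.of_forall fun t => gradSq_nonneg _ _),
    ← ENNReal.ofReal_mul (sq_nonneg _), ← intervalIntegral.integral_of_le zero_le_one]
  exact ENNReal.ofReal_le_ofReal (sq_sub_le_integral_gradSq hw x z)

/- The segment from `y` to `x = y + z` is parametrised by `z`: for fixed `z` and `t` the map
`y ↦ y + t • z` preserves Lebesgue measure. -/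
theorem lintegral_lintegral_lintegral_add_smul {G : ℝ^d → ENNReal} (hG : Measurable G)
    (s : Set (ℝ^d)) :
    ∫⁻ y, ∫⁻ z in s, ∫⁻ t in Ioc (0 : ℝ) 1, G (y + t • z) = volume s * ∫⁻ y, G y := by
  have hline (z : ℝ^d) : ∫⁻ y, ∫⁻ t in Ioc (0 : ℝ) 1, G (y + t • z) = ∫⁻ y, G y := by
    rw [lintegral_lintegral_swap (by fun_prop)]
    simp only [lintegral_add_right_eq_self, lintegral_const, Measure.restrict_apply_univ]
    simp
  rw [lintegral_lintegral_swap
    (Measurable.lintegral_prod_right' (f := fun p : (ℝ^d × ℝ^d) × ℝ => G (p.1.1 + p.2 • p.1.2))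
      (by fun_prop)).aemeasurable]
  simp only [hline, lintegral_const, Measure.restrict_apply_univ, mul_comm]

theorem setLIntegral_sq_sub_le (hw : Smooth w) {r : ℝ} {y : ℝ^d}
    (hy : y ∈ Metric.closedBall (0 : ℝ^d) r) :
    ∫⁻ x in Metric.closedBall 0 r, ENNReal.ofReal ((w x - w y) ^ 2)
      ≤ ENNReal.ofReal ((2 * r) ^ 2) * ∫⁻ z in Metric.closedBall 0 (2 * r),
        ∫⁻ t in Ioc (0 : ℝ) 1, (Metric.closedBall 0 r).indicator
          (fun x => ENNReal.ofReal (gradSq w x)) (y + t • z) := by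
  rw [← lintegral_indicator measurableSet_closedBall, ← lintegral_add_left_eq_self _ y,
    ← lintegral_const_mul' _ _ ENNReal.ofReal_ne_top,
    ← lintegral_indicator measurableSet_closedBall]
  refine lintegral_mono fun z => ?_
  by_cases hz : y + z ∈ Metric.closedBall 0 r
  swap
  · simp only [indicator_of_notMem hz, zero_le]
  have hz_norm : ‖z‖ ≤ 2 * r := by
    have := norm_sub_le (y + z) y
    rw [mem_closedBall_zero_iff] at hy hz
    rw [add_sub_cancel_left] at this
    linarith
  have hsegment : ∫⁻ t in Ioc (0 : ℝ) 1, (Metric.closedBall 0 r).indicator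
        (fun x => ENNReal.ofReal (gradSq w x)) (y + t • z)
      = ∫⁻ t in Ioc (0 : ℝ) 1, ENNReal.ofReal (gradSq w (y + t • z)) :=
    setLIntegral_congr_fun measurableSet_Ioc fun t ht => indicator_of_mem
      ((convex_closedBall 0 r).add_smul_mem hy hz ⟨ht.1.le, ht.2⟩) _
  simp only [indicator_of_mem hz, hsegment, indicator_of_mem (mem_closedBall_zero_iff.2 hz_norm)]
  refine (ofReal_sq_sub_le_lintegral hw y z).trans ?_
  gcongr

theorem lintegral_lintegral_sq_sub_le (hw : Smooth w) (r : ℝ) :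
    ∫⁻ y in Metric.closedBall (0 : ℝ^d) r, ∫⁻ x in Metric.closedBall 0 r,
        ENNReal.ofReal ((w x - w y) ^ 2)
      ≤ ENNReal.ofReal ((2 * r) ^ 2) * (volume (Metric.closedBall (0 : ℝ^d) (2 * r))
        * ∫⁻ x in Metric.closedBall 0 r, ENNReal.ofReal (gradSq w x)) := by
  have hG : Measurable ((Metric.closedBall (0 : ℝ^d) r).indicator
      fun x => ENNReal.ofReal (gradSq w x)) :=
    hw.gradSq.continuous.measurable.ennreal_ofReal.indicator measurableSet_closedBall
  rw [← lintegral_indicator measurableSet_closedBall (fun x => ENNReal.ofReal (gradSq w x)),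
    ← lintegral_lintegral_lintegral_add_smul hG, ← lintegral_const_mul' _ _ ENNReal.ofReal_ne_top]
  exact (setLIntegral_mono' measurableSet_closedBall fun y hy => setLIntegral_sq_sub_le hw hy).trans
    (setLIntegral_le_lintegral _ _)

theorem exists_setLIntegral_sq_sub_le {r : ℝ} (hr : 0 < r) : ∃ C : NNReal, ∀ w : ℝ^d → ℝ,
    Smooth w → ∃ y ∈ Metric.closedBall (0 : ℝ^d) r,
      ∫⁻ x in Metric.closedBall 0 r, ENNReal.ofReal ((w x - w y) ^ 2)
        ≤ C * ∫⁻ x in Metric.closedBall (0 : ℝ^d) r, ENNReal.ofReal (gradSq w x) := by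
  set D := Metric.closedBall (0 : ℝ^d) r
  have hD₀ : volume D ≠ 0 := (Metric.measure_closedBall_pos _ _ hr).ne'
  have hD : volume D ≠ ⊤ := measure_closedBall_lt_top.ne
  set C := (volume D)⁻¹ * (ENNReal.ofReal ((2 * r) ^ 2)
    * volume (Metric.closedBall (0 : ℝ^d) (2 * r)))
  have hC : C ≠ ⊤ := ENNReal.mul_ne_top (ENNReal.inv_ne_top.2 hD₀)
    (ENNReal.mul_ne_top ENNReal.ofReal_ne_top measure_closedBall_lt_top.ne)
  refine ⟨C.toNNReal, fun w hw => ?_⟩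
  have hwm := hw.continuous.measurable
  obtain ⟨y, hy, hle⟩ := exists_le_setLAverage hD₀ hD
    (Measurable.lintegral_prod_right' (ν := volume.restrict D)
      (f := fun p : ℝ^d × ℝ^d => ENNReal.ofReal ((w p.2 - w p.1) ^ 2)) (by fun_prop)).aemeasurable
  refine ⟨y, hy, hle.trans ?_⟩
  rw [setLAverage_eq, ENNReal.div_eq_inv_mul, ENNReal.coe_toNNReal hC, mul_assoc, mul_assoc]
  gcongr
  exact lintegral_lintegral_sq_sub_le hw r

theorem exists_setIntegral_sq_sub_le {r : ℝ} (hr : 0 < r) : ∃ C : NNReal, ∀ w : ℝ^d → ℝ,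
    Smooth w → ∃ y, ∫ x in Metric.closedBall (0 : ℝ^d) r, (w x - w y) ^ 2
        ≤ C * ∫ x in Metric.closedBall (0 : ℝ^d) r, gradSq w x := by
  obtain ⟨C, hC⟩ := exists_setLIntegral_sq_sub_le (d := d) hr
  refine ⟨C, fun w hw => ?_⟩
  obtain ⟨y, -, hy⟩ := hC w hw
  have hint {f : ℝ^d → ℝ} (hf : Continuous f) :
      IntegrableOn f (Metric.closedBall (0 : ℝ^d) r) :=
    hf.continuousOn.integrableOn_compact (isCompact_closedBall 0 r)
  rw [← ofReal_integral_eq_lintegral_ofReal (hint (f := fun x => (w x - w y) ^ 2)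
      (by have := hw.continuous; fun_prop)) (.of_forall fun x => sq_nonneg _),
    ← ofReal_integral_eq_lintegral_ofReal (hint hw.gradSq.continuous)
      (.of_forall fun x => gradSq_nonneg _ _), ← ENNReal.ofReal_coe_nnreal,
    ← ENNReal.ofReal_mul C.coe_nonneg] at hy
  exact ⟨y, (ENNReal.ofReal_le_ofReal_iff (mul_nonneg C.coe_nonneg
    (setIntegral_nonneg measurableSet_closedBall fun x _ => gradSq_nonneg _ _))).1 hy⟩

theorem setIntegral_expMeasure {U : ℝ^d → ℝ} (hU : Continuous U) (f : ℝ^d → ℝ) {s : Set (ℝ^d)}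
    (hs : MeasurableSet s) : ∫ x in s, f x ∂expMeasure U = ∫ x in s, f x * exp (-U x) := by
  rw [expMeasure, setIntegral_withDensity_eq_setIntegral_toReal_smul (by fun_prop) (by simp) _ hs]
  simp only [ENNReal.toReal_ofReal (exp_pos _).le, smul_eq_mul, mul_comm]

theorem setIntegral_expMeasure_congr {U V : ℝ^d → ℝ} (hU : Continuous U) (hV : Continuous V)
    (f : ℝ^d → ℝ) {s : Set (ℝ^d)} (hs : MeasurableSet s) (hUV : EqOn U V s) :
    ∫ x in s, f x ∂expMeasure U = ∫ x in s, f x ∂expMeasure V := by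
  rw [setIntegral_expMeasure hU f hs, setIntegral_expMeasure hV f hs]
  exact setIntegral_congr_fun hs fun x hx => by rw [hUV hx]

theorem exists_setIntegral_expMeasure_sq_sub_le {V : ℝ^d → ℝ} (hV : Continuous V) {r : ℝ}
    (hr : 0 < r) : ∃ C, 0 ≤ C ∧ ∀ w : ℝ^d → ℝ, Smooth w → ∃ y,
      ∫ x in Metric.closedBall 0 r, (w x - w y) ^ 2 ∂expMeasure V
        ≤ C * ∫ x in Metric.closedBall 0 r, gradSq w x ∂expMeasure V := by
  obtain ⟨C, hC⟩ := exists_setIntegral_sq_sub_le (d := d) hr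
  have hD := isCompact_closedBall (0 : ℝ^d) r
  obtain ⟨K, hK⟩ := hD.exists_bound_of_continuousOn hV.continuousOn
  have hint {f : ℝ^d → ℝ} (hf : Continuous f) : IntegrableOn f (Metric.closedBall (0 : ℝ^d) r) :=
    hf.continuousOn.integrableOn_compact hD
  have hupper {f : ℝ^d → ℝ} (hf : Continuous f) (hf₀ : ∀ x, 0 ≤ f x) :
      ∫ x in Metric.closedBall 0 r, f x * exp (-V x)
        ≤ exp K * ∫ x in Metric.closedBall 0 r, f x := by
    rw [← integral_const_mul]
    refine setIntegral_mono_on (hint (by fun_prop)) (hint (by fun_prop))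
      measurableSet_closedBall fun x hx => ?_
    rw [mul_comm]
    exact mul_le_mul_of_nonneg_right (exp_le_exp.2 (neg_le.1 (abs_le.1 (hK x hx)).1)) (hf₀ x)
  have hlower {f : ℝ^d → ℝ} (hf : Continuous f) (hf₀ : ∀ x, 0 ≤ f x) :
      ∫ x in Metric.closedBall 0 r, f x
        ≤ exp K * ∫ x in Metric.closedBall 0 r, f x * exp (-V x) := by
    rw [← integral_const_mul]
    refine setIntegral_mono_on (hint hf) (hint (by fun_prop)) measurableSet_closedBall
      fun x hx => ?_
    have : 1 ≤ exp K * exp (-V x) := by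
      rw [← exp_add, one_le_exp_iff]
      linarith [(abs_le.1 (hK x hx)).2]
    linarith [mul_le_mul_of_nonneg_left this (hf₀ x)]
  refine ⟨exp K * (C * exp K), by positivity, fun w hw => (hC w hw).imp fun y hy => ?_⟩
  have hwc := hw.continuous
  rw [setIntegral_expMeasure hV _ measurableSet_closedBall,
    setIntegral_expMeasure hV _ measurableSet_closedBall, mul_assoc, mul_assoc]
  refine (hupper (by fun_prop) fun x => sq_nonneg _).trans ?_
  gcongr
  exact hy.trans (mul_le_mul_of_nonneg_left (hlower hw.gradSq.continuous (gradSq_nonneg w))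
    C.coe_nonneg)

end LocalPoincare

theorem relEnt_le_sq_sub_div {m s : ℝ} (hm : 0 < m) (hs : 0 < s) :
    relEnt m s ≤ (s - m) ^ 2 / m := by
  have hlog := mul_le_mul_of_nonneg_left (log_le_sub_one_of_pos (div_pos hs hm)) hs.le
  calc relEnt m s = s * log (s / m) + m - s := by
        rw [relEnt, InformationTheory.klFun]
        field_simp
    _ ≤ s * (s / m - 1) + m - s := by linarith
    _ = (s - m) ^ 2 / m := by
        field_simp
        ring

theorem integral_sq_sub_le {α : Type*} [MeasurableSpace α] {μ : Measure α} [IsFiniteMeasure μ]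
    [NeZero μ] {w : α → ℝ} (hw : MemLp w 2 μ) (c m : ℝ) :
    ∫ x, (w x - m) ^ 2 ∂μ
      ≤ ∫ x, (w x - c) ^ 2 ∂μ + (∫ x, w x ∂μ - m * μ.real univ) ^ 2 / μ.real univ := by
  have hZ : 0 < μ.real univ := measureReal_univ_pos
  have hexpand (c : ℝ) : ∫ x, (w x - c) ^ 2 ∂μ
      = ∫ x, w x ^ 2 ∂μ - 2 * c * ∫ x, w x ∂μ + c ^ 2 * μ.real univ := by
    have hsq := hw.integrable_sq
    have hw₁ : Integrable (fun x => 2 * c * w x) μ := (hw.integrable one_le_two).const_mul (2 * c)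
    calc ∫ x, (w x - c) ^ 2 ∂μ = ∫ x, (w x ^ 2 - 2 * c * w x + c ^ 2) ∂μ := by
          congr with x
          ring
      _ = _ := by
          rw [integral_add (by exact hsq.sub hw₁) (integrable_const _), integral_sub hsq hw₁,
            integral_const_mul, integral_const, smul_eq_mul, mul_comm (c ^ 2)]
  rw [hexpand, hexpand]
  have hmin : 0 ≤ (c * μ.real univ - ∫ x, w x ∂μ) ^ 2 / μ.real univ := by positivity
  have : (∫ x, w x ∂μ - m * μ.real univ) ^ 2 / μ.real univ
      = (∫ x, w x ∂μ) ^ 2 / μ.real univ - 2 * m * ∫ x, w x ∂μ + m ^ 2 * μ.real univ := by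
    field_simp
    ring
  have : (c * μ.real univ - ∫ x, w x ∂μ) ^ 2 / μ.real univ
      = (∫ x, w x ∂μ) ^ 2 / μ.real univ - 2 * c * ∫ x, w x ∂μ + c ^ 2 * μ.real univ := by
    field_simp
    ring
  linarith

theorem neZero_expMeasure {U : ℝ^d → ℝ} (hU : Continuous U) : NeZero (expMeasure U) := by
  refine ⟨fun h => ?_⟩
  rw [expMeasure, withDensity_eq_zero_iff (by fun_prop)] at h
  obtain ⟨x, hx⟩ := h.exists
  exact (ENNReal.ofReal_pos.2 (exp_pos (-U x))).ne' hx

namespace TamePotential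

variable {U B w : ℝ^d → ℝ} {M : ℝ}

theorem setIntegral_gradSq_le (hU : TamePotential U) (hB : Continuous B) (hB₀ : ∀ x, 0 ≤ B x)
    (hBc : HasCompactSupport B) {A : ℝ} {s : Set (ℝ^d)} (hs : MeasurableSet s)
    (hAB : ∀ x ∈ s, 1 ≤ A * B x) (hA : 0 ≤ A) (hw : Smooth w) (hw₀ : ∀ x, 0 < w x)
    (hwM : ∀ x, w x ≤ M) :
    ∫ x in s, gradSq w x ∂expMeasure U ≤ M * A * ∫ x, B x * fisher w x ∂expMeasure U := by
  have := isFiniteMeasure_expMeasure hU.integrable_exp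
  have hint : Integrable (fun x => M * A * (B x * fisher w x)) (expMeasure U) :=
    ((hB.mul (hw.fisher hw₀).continuous).integrable_of_hasCompactSupport
      hBc.mul_right).const_mul _
  have hM : 0 ≤ M := (hw₀ 0).le.trans (hwM 0)
  have hnonneg (x : ℝ^d) : 0 ≤ M * A * (B x * fisher w x) :=
    mul_nonneg (mul_nonneg hM hA) (mul_nonneg (hB₀ x) (fisher_nonneg hw₀ x))
  rw [← integral_const_mul]
  refine le_trans ?_ (setIntegral_le_integral (s := s) hint (.of_forall hnonneg))
  refine integral_mono_of_nonneg (.of_forall fun x => gradSq_nonneg w x) hint.integrableOn ?_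
  filter_upwards [ae_restrict_mem hs] with x hx
  calc gradSq w x = 1 * (w x * fisher w x) := by
        rw [fisher, mul_div_cancel₀ _ (hw₀ x).ne', one_mul]
    _ ≤ A * B x * (M * fisher w x) :=
        mul_le_mul (hAB x hx) (mul_le_mul_of_nonneg_right (hwM x) (fisher_nonneg hw₀ x))
          (mul_nonneg (hw₀ x).le (fisher_nonneg hw₀ x)) (zero_le_one.trans (hAB x hx))
    _ = M * A * (B x * fisher w x) := by ring

theorem integral_sq_sub_le_add (hU : TamePotential U) {D : ℝ^d → ℝ} (hD : Integrable D)
    (hUD : ∀ x, exp (-U x) ≤ D x) (hw : Continuous w) (hw₀ : ∀ x, 0 ≤ w x) (hwM : ∀ x, w x ≤ M)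
    (y : ℝ^d) {s : Set (ℝ^d)} (hs : MeasurableSet s) :
    ∫ x, (w x - w y) ^ 2 ∂expMeasure U
      ≤ ∫ x in s, (w x - w y) ^ 2 ∂expMeasure U + M ^ 2 * ∫ x in sᶜ, D x := by
  have hle (x : ℝ^d) : (w x - w y) ^ 2 ≤ M ^ 2 :=
    sq_le_sq' (by linarith [hw₀ x, hwM y]) (by linarith [hw₀ y, hwM x])
  have hint : Integrable (fun x => (w x - w y) ^ 2) (expMeasure U) :=
    hU.integrable (by fun_prop) fun x => (abs_of_nonneg (sq_nonneg _)).trans_le (hle x)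
  rw [← integral_add_compl hs hint, setIntegral_expMeasure hU.smooth.continuous _ hs.compl,
    ← integral_const_mul]
  refine add_le_add_right ?_ _
  exact integral_mono_of_nonneg (.of_forall fun x => mul_nonneg (sq_nonneg _) (exp_pos _).le)
    (hD.const_mul _).integrableOn (.of_forall fun x =>
      mul_le_mul (hle x) (hUD x) (exp_pos _).le (sq_nonneg M))

theorem integral_relEnt_le (hU : TamePotential U) (hw : Continuous w) (hw₀ : ∀ x, 0 < w x)
    (hwM : ∀ x, w x ≤ M) {m : ℝ} (hm : 0 < m) (c : ℝ) :
    ∫ x, relEnt m (w x) ∂expMeasure U ≤ (∫ x, (w x - c) ^ 2 ∂expMeasure U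
      + (∫ x, w x ∂expMeasure U - m * (expMeasure U).real univ) ^ 2
        / (expMeasure U).real univ) / m := by
  have := isFiniteMeasure_expMeasure hU.integrable_exp
  have := neZero_expMeasure hU.smooth.continuous
  have hwM' (x : ℝ^d) : |w x| ≤ M := (abs_of_pos (hw₀ x)).trans_le (hwM x)
  have hw₂ : MemLp w 2 (expMeasure U) :=
    .of_bound hw.aestronglyMeasurable M (.of_forall hwM')
  have hint : Integrable (fun x => (w x - m) ^ 2 / m) (expMeasure U) :=
    ((hw₂.sub (memLp_const m)).integrable_sq).div_const m
  calc ∫ x, relEnt m (w x) ∂expMeasure U ≤ ∫ x, (w x - m) ^ 2 / m ∂expMeasure U :=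
        integral_mono (hU.integrable_relEnt m hw hwM') hint
          fun x => relEnt_le_sq_sub_div hm (hw₀ x)
    _ = (∫ x, (w x - m) ^ 2 ∂expMeasure U) / m := integral_div _ _
    _ ≤ _ := by
        gcongr
        exact integral_sq_sub_le hw₂ c m

variable {e g : ℝ^d → ℝ} {κ ρ ε A T Ψ δ m P : ℝ}

theorem integral_relEnt_le_of_fisherWeight [NeZero d] (hU : TamePotential U)
    (hB : FisherWeight U κ B e) (hBc : HasCompactSupport B) (hκ : 0 < κ) (hρ : 0 ≤ ρ)
    (hcurv : ∀ x v, -ρ * ∑ i, v i ^ 2 ≤ hessForm U x v)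
    {D : ℝ^d → ℝ} (hD : Integrable D) (hUD : ∀ x, exp (-U x) ≤ D x)
    {s : Set (ℝ^d)} (hs : MeasurableSet s) (hAB : ∀ x ∈ s, 1 ≤ A * B x) (hP : 0 ≤ P)
    (hpoincare : ∀ w : ℝ^d → ℝ, Smooth w → ∃ y,
      ∫ x in s, (w x - w y) ^ 2 ∂expMeasure U ≤ P * ∫ x in s, gradSq w x ∂expMeasure U)
    (hg : Smooth g) {S : ℝ} (hgS : CkBound 4 S g) (hε : 0 < ε) (hεg : ∀ x, ε ≤ g x)
    (hgM : ∀ x, g x ≤ M) (hΨ : ∀ x, exp ((2 * ρ + 1) * T) * fisher g x ≤ Ψ)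
    (hA : 0 ≤ A) (hT : 0 < T) (hδ : 0 < δ) (hm : 0 < m) :
    ∫ x, relEnt m (g x) ∂expMeasure U
      ≤ A / κ * (∫ x, B x * fisher g x ∂expMeasure U + T * (Ψ * ∫ x, e x ∂expMeasure U + δ))
        + T * (Ψ * ∫ x, max (1 - A * B x) 0 ∂expMeasure U + δ)
        + (P * (M * A * ((∫ x, B x * fisher g x ∂expMeasure U) / (κ * T)
              + (1 / κ + T) * (Ψ * ∫ x, e x ∂expMeasure U + δ)))
            + M ^ 2 * (∫ x in sᶜ, D x)
            + (|∫ x, g x ∂expMeasure U - m * (expMeasure U).real univ| + T * δ) ^ 2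
              / (expMeasure U).real univ) / m := by
  obtain ⟨w, hw, hεw, hwM, hent, hfisher, hmean⟩ :=
    hU.exists_relaxation hB hκ hρ hcurv hg hgS hε hεg hgM hΨ hA hT hδ hm
  have hw₀ (x : ℝ^d) : 0 < w x := hε.trans_le (hεw x)
  have hM : 0 ≤ M := (hw₀ 0).le.trans (hwM 0)
  obtain ⟨y, hy⟩ := hpoincare w hw
  refine hent.trans (add_le_add_right ?_ _)
  refine (hU.integral_relEnt_le hw.continuous hw₀ hwM hm (w y)).trans ?_
  have hmean' : |∫ x, w x ∂expMeasure U - m * (expMeasure U).real univ|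
      ≤ |∫ x, g x ∂expMeasure U - m * (expMeasure U).real univ| + T * δ := by
    have := abs_sub_le (∫ x, w x ∂expMeasure U) (∫ x, g x ∂expMeasure U)
      (m * (expMeasure U).real univ)
    linarith
  gcongr ?_ / m
  refine add_le_add ?_ ?_
  · refine (hU.integral_sq_sub_le_add hD hUD hw.continuous (fun x => (hw₀ x).le) hwM y hs).trans ?_
    gcongr
    refine hy.trans (mul_le_mul_of_nonneg_left ?_ hP)
    refine (hU.setIntegral_gradSq_le hB.smooth.continuous hB.nonneg hBc hs hAB hA hw hw₀ hwM).trans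
      (mul_le_mul_of_nonneg_left hfisher (by positivity))
  · rw [← sq_abs]
    gcongr

end TamePotential

theorem tendsto_integral_expMeasure {V D f' : ℝ^d → ℝ} {U f : ℕ → ℝ^d → ℝ} {C : ℝ}
    (hU : ∀ n, Continuous (U n)) (hV : Continuous V) (hD : Integrable D)
    (hUD : ∀ n x, exp (-U n x) ≤ D x) (hUV : ∀ x, ∀ᶠ n in Filter.atTop, U n x = V x)
    (hf : ∀ n, Continuous (f n)) (hfC : ∀ n x, |f n x| ≤ C)
    (hlim : ∀ x, ∀ᶠ n in Filter.atTop, f n x = f' x) :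
    Filter.Tendsto (fun n => ∫ x, f n x ∂expMeasure (U n)) Filter.atTop
      (nhds (∫ x, f' x ∂expMeasure V)) := by
  simp only [integral_expMeasure hV, fun n => integral_expMeasure (hU n)]
  refine tendsto_integral_of_dominated_convergence (fun x => C * D x)
    (fun n => ((hf n).mul (hU n).neg.rexp).aestronglyMeasurable)
    (hD.const_mul C) (fun n => .of_forall fun x => ?_) (.of_forall fun x => ?_)
  · rw [norm_mul, Real.norm_eq_abs, Real.norm_eq_abs, abs_of_pos (exp_pos _)]
    exact mul_le_mul (hfC n x) (hUD n x) (exp_pos _).le ((abs_nonneg _).trans (hfC n x))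
  · refine tendsto_const_nhds.congr' ?_
    filter_upwards [hlim x, hUV x] with n hn hUn
    rw [hn, hUn]

theorem tendsto_setIntegral_compl_closedBall {α : Type*} [PseudoMetricSpace α]
    [MeasurableSpace α] [OpensMeasurableSpace α] {μ : Measure α} {f : α → ℝ}
    (hf : Integrable f μ) (c : α) :
    Filter.Tendsto (fun r => ∫ x in (Metric.closedBall c r)ᶜ, f x ∂μ) Filter.atTop (nhds 0) := by
  have hempty : ⋂ r, (Metric.closedBall c r)ᶜ = ∅ :=
    iInter_eq_empty_iff.2 fun x => ⟨dist x c, by simp⟩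
  simpa [hempty] using tendsto_setIntegral_of_antitone
    (s := fun r => (Metric.closedBall c r)ᶜ) (fun r => measurableSet_closedBall.compl)
    (fun r s hrs => compl_subset_compl.2 (Metric.closedBall_subset_closedBall hrs))
    ⟨0, hf.integrableOn⟩

/-- Tame potentials `U n` with compactly supported weights `B n` that agree with `V` and `b` on any
ball for large `n`, with uniform decay rate `κ` and asymptotically negligible errors. -/
structure TameExhaustion (V b : ℝ^d → ℝ) (κ ρ : ℝ) (U B e : ℕ → ℝ^d → ℝ) : Prop where
  tame : ∀ n, TamePotential (U n)
  fisherWeight : ∀ n, FisherWeight (U n) κ (B n) (e n)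
  hasCompactSupport : ∀ n, HasCompactSupport (B n)
  exists_weight_le : ∃ C, ∀ n x, B n x ≤ C
  curvature : ∀ n x v, -ρ * ∑ i, v i ^ 2 ≤ hessForm (U n) x v
  exists_exp_le : ∃ D : ℝ^d → ℝ, Integrable D ∧ ∀ n x, exp (-U n x) ≤ D x
  eventually_eq : ∀ r, ∀ᶠ n in Filter.atTop, ∀ x ∈ Metric.closedBall (0 : ℝ^d) r,
    U n x = V x ∧ B n x = b x
  tendsto_error : Filter.Tendsto (fun n => ∫ x, e n x ∂expMeasure (U n)) Filter.atTop (nhds 0)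

namespace TameExhaustion

variable {V b g : ℝ^d → ℝ} {κ ρ ε M A m : ℝ} {U B e : ℕ → ℝ^d → ℝ}

theorem eventually_eq_at (h : TameExhaustion V b κ ρ U B e) (x : ℝ^d) :
    ∀ᶠ n in Filter.atTop, U n x = V x ∧ B n x = b x :=
  (h.eventually_eq ‖x‖).mono fun _ hn => hn x (mem_closedBall_zero_iff.2 le_rfl)

theorem tendsto_integral (h : TameExhaustion V b κ ρ U B e) (hV : Continuous V)
    {f : ℕ → ℝ^d → ℝ} {f' : ℝ^d → ℝ} {C : ℝ} (hf : ∀ n, Continuous (f n))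
    (hfC : ∀ n x, |f n x| ≤ C) (hlim : ∀ x, ∀ᶠ n in Filter.atTop, f n x = f' x) :
    Filter.Tendsto (fun n => ∫ x, f n x ∂expMeasure (U n)) Filter.atTop
      (nhds (∫ x, f' x ∂expMeasure V)) := by
  obtain ⟨D, hD, hUD⟩ := h.exists_exp_le
  exact tendsto_integral_expMeasure (fun n => (h.tame n).smooth.continuous) hV hD hUD
    (fun x => (h.eventually_eq_at x).mono fun _ hn => hn.1) hf hfC hlim

theorem tendsto_real_univ (h : TameExhaustion V b κ ρ U B e) (hV : Continuous V) :
    Filter.Tendsto (fun n => (expMeasure (U n)).real univ) Filter.atTop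
      (nhds ((expMeasure V).real univ)) := by
  simpa using h.tendsto_integral hV (fun _ => continuous_const) (fun _ _ => abs_one.le)
    fun _ => .of_forall fun _ => rfl

theorem tendsto_integral_weight_mul (h : TameExhaustion V b κ ρ U B e) (hV : Continuous V)
    {f : ℝ^d → ℝ} {F : ℝ} (hf : Continuous f) (hF : ∀ x, |f x| ≤ F) :
    Filter.Tendsto (fun n => ∫ x, B n x * f x ∂expMeasure (U n)) Filter.atTop
      (nhds (∫ x, b x * f x ∂expMeasure V)) := by
  obtain ⟨C, hC⟩ := h.exists_weight_le
  refine h.tendsto_integral hV (C := C * F)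
    (fun n => (h.fisherWeight n).smooth.continuous.mul hf) (fun n x => ?_)
    fun x => (h.eventually_eq_at x).mono fun n hn => by rw [hn.2]
  have hB := (h.fisherWeight n).nonneg x
  rw [abs_mul, abs_of_nonneg hB]
  exact mul_le_mul (hC n x) (hF x) (abs_nonneg _) (hB.trans (hC n x))

theorem tendsto_integral_defect (h : TameExhaustion V b κ ρ U B e) (hV : Continuous V)
    (hA : 0 ≤ A) (hAb : ∀ x, 1 ≤ A * b x) :
    Filter.Tendsto (fun n => ∫ x, max (1 - A * B n x) 0 ∂expMeasure (U n)) Filter.atTop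
      (nhds 0) := by
  have := h.tendsto_integral hV (f := fun n x => max (1 - A * B n x) 0) (f' := fun _ => 0) (C := 1)
    (fun n => by have := (h.fisherWeight n).smooth.continuous; fun_prop)
    (fun n x => by
      rw [abs_of_nonneg (le_max_right _ _)]
      exact max_le (sub_le_self _ (mul_nonneg hA ((h.fisherWeight n).nonneg x))) zero_le_one)
    fun x => (h.eventually_eq_at x).mono fun n hn => by
      rw [hn.2, max_eq_right (sub_nonpos.2 (hAb x))]
  simpa using this

theorem setIntegral_sq_sub_le (h : TameExhaustion V b κ ρ U B e) (hV : Continuous V) {n : ℕ}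
    {s : Set (ℝ^d)} (hs : MeasurableSet s) (hn : ∀ x ∈ s, U n x = V x) {P : ℝ} {w : ℝ^d → ℝ}
    (hP : ∃ y, ∫ x in s, (w x - w y) ^ 2 ∂expMeasure V ≤ P * ∫ x in s, gradSq w x ∂expMeasure V) :
    ∃ y, ∫ x in s, (w x - w y) ^ 2 ∂expMeasure (U n)
      ≤ P * ∫ x in s, gradSq w x ∂expMeasure (U n) := by
  simpa only [setIntegral_expMeasure_congr (h.tame n).smooth.continuous hV _ hs hn] using hP

variable [NeZero d]

theorem exists_integral_relEnt_le_of_time (h : TameExhaustion V b κ ρ U B e) (hV : Continuous V)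
    {D : ℝ^d → ℝ} (hD : Integrable D) (hUD : ∀ n x, exp (-U n x) ≤ D x)
    (hVD : Integrable fun x => exp (-V x)) (hκ : 0 < κ) (hρ : 0 ≤ ρ)
    (hA : 0 ≤ A) (hAb : ∀ x, 1 ≤ A * b x) (hg : Smooth g) {S : ℝ} (hgS : CkBound 4 S g)
    (hε : 0 < ε) (hεg : ∀ x, ε ≤ g x) (hm : 0 < m)
    (hmean : ∫ x, g x ∂expMeasure V = m * (expMeasure V).real univ) {r : ℝ} (hr : 0 < r) :
    ∃ P, ∀ T, 0 < T → ∫ x, relEnt m (g x) ∂expMeasure V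
      ≤ A / κ * ∫ x, b x * fisher g x ∂expMeasure V
        + (P * (S * A * ((∫ x, b x * fisher g x ∂expMeasure V) / (κ * T)))
          + S ^ 2 * ∫ x in (Metric.closedBall 0 r)ᶜ, D x) / m := by
  have := isFiniteMeasure_expMeasure hVD
  have := neZero_expMeasure hV
  obtain ⟨P, hP, hpoincare⟩ := exists_setIntegral_expMeasure_sq_sub_le hV hr
  obtain ⟨F, hF⟩ := CkBound.exists_fisher (d := d) 3 S hε
  obtain ⟨R, hR⟩ := exists_abs_relEnt_le m S
  have hFg (x : ℝ^d) : |fisher g x| ≤ F := (hF g hg hεg hgS).abs_le x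
  refine ⟨P, fun T hT => ?_⟩
  have hδ : Filter.Tendsto (fun n : ℕ => 1 / ((n : ℝ) + 1)) Filter.atTop (nhds 0) :=
    tendsto_one_div_add_atTop_nhds_zero_nat
  have hH := h.tendsto_integral hV (fun _ => (continuous_relEnt m).comp hg.continuous)
    (fun _ x => hR _ (hgS.abs_le x)) fun x => .of_forall fun _ => rfl
  have hG := h.tendsto_integral hV (fun _ => hg.continuous) (fun _ => hgS.abs_le)
    fun x => .of_forall fun _ => rfl
  have hZ := h.tendsto_real_univ hV
  have hI := h.tendsto_integral_weight_mul hV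
    (hg.fisher fun x => hε.trans_le (hεg x)).continuous hFg
  have herr := (h.tendsto_error.const_mul (exp ((2 * ρ + 1) * T) * F)).add hδ
  have hdefect :=
    ((h.tendsto_integral_defect hV hA hAb).const_mul (exp ((2 * ρ + 1) * T) * F)).add hδ
  have hdeviation := (((hG.sub (hZ.const_mul m)).abs.add (hδ.const_mul T)).pow 2).div hZ
    measureReal_univ_pos.ne'
  have hbound := (((hI.add (herr.const_mul T)).const_mul (A / κ)).add (hdefect.const_mul T)).add
    ((((((hI.div_const (κ * T)).add (herr.const_mul (1 / κ + T))).const_mul (S * A)).const_mul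
      P).add_const (S ^ 2 * ∫ x in (Metric.closedBall 0 r)ᶜ, D x)).add hdeviation |>.div_const m)
  refine (le_of_tendsto_of_tendsto hH hbound ?_).trans_eq (by simp [hmean])
  filter_upwards [h.eventually_eq r] with n hn
  exact (h.tame n).integral_relEnt_le_of_fisherWeight (h.fisherWeight n) (h.hasCompactSupport n)
    hκ hρ (h.curvature n) hD (hUD n) measurableSet_closedBall
    (fun x hx => by rw [(hn x hx).2]; exact hAb x) hP
    (fun w hw => h.setIntegral_sq_sub_le hV measurableSet_closedBall (fun x hx => (hn x hx).1)
      (hpoincare w hw))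
    hg hgS hε hεg (fun x => (le_abs_self _).trans (hgS.abs_le x))
    (fun x => mul_le_mul_of_nonneg_left ((le_abs_self _).trans (hFg x)) (exp_pos _).le)
    hA hT Nat.one_div_pos_of_nat hm

theorem integral_relEnt_le (h : TameExhaustion V b κ ρ U B e) (hV : Continuous V)
    (hVD : Integrable fun x => exp (-V x)) (hκ : 0 < κ) (hρ : 0 ≤ ρ) (hA : 0 ≤ A)
    (hAb : ∀ x, 1 ≤ A * b x) (hg : Smooth g) {S : ℝ} (hgS : CkBound 4 S g)
    (hε : 0 < ε) (hεg : ∀ x, ε ≤ g x) (hm : 0 < m)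
    (hmean : ∫ x, g x ∂expMeasure V = m * (expMeasure V).real univ) :
    ∫ x, relEnt m (g x) ∂expMeasure V ≤ A / κ * ∫ x, b x * fisher g x ∂expMeasure V := by
  obtain ⟨D, hD, hUD⟩ := h.exists_exp_le
  have hradius (r : ℝ) (hr : 0 < r) : ∫ x, relEnt m (g x) ∂expMeasure V
      ≤ A / κ * ∫ x, b x * fisher g x ∂expMeasure V
        + (S ^ 2 * ∫ x in (Metric.closedBall 0 r)ᶜ, D x) / m := by
    obtain ⟨P, hP⟩ :=
      h.exists_integral_relEnt_le_of_time hV hD hUD hVD hκ hρ hA hAb hg hgS hε hεg hm hmean hr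
    set I := ∫ x, b x * fisher g x ∂expMeasure V
    have hT : Filter.Tendsto (fun T => I / (κ * T)) Filter.atTop (nhds 0) :=
      tendsto_const_nhds.div_atTop (Filter.tendsto_id.const_mul_atTop hκ)
    have hbound := (((hT.const_mul (S * A)).const_mul P).add_const
      (S ^ 2 * ∫ x in (Metric.closedBall 0 r)ᶜ, D x)).div_const m
    refine (ge_of_tendsto (hbound.const_add (A / κ * I))
      ((Filter.eventually_gt_atTop 0).mono hP)).trans_eq (by simp)
  have htail := tendsto_setIntegral_compl_closedBall hD 0
  refine (ge_of_tendsto (((htail.const_mul (S ^ 2)).div_const m).const_add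
    (A / κ * ∫ x, b x * fisher g x ∂expMeasure V))
    ((Filter.eventually_gt_atTop 0).mono hradius)).trans_eq (by simp)

end TameExhaustion

section Bracket

/-- The Japanese bracket `⟨x⟩ = √(1 + |x|²)`, a smooth strictly convex substitute for the norm. -/
def bracket (x : ℝ^d) : ℝ := √(1 + ‖x‖ ^ 2)

variable (x : ℝ^d)

theorem bracket_sq : bracket x ^ 2 = 1 + ‖x‖ ^ 2 := sq_sqrt (by positivity)

theorem one_le_bracket : 1 ≤ bracket x := one_le_sqrt.2 (by nlinarith [sq_nonneg ‖x‖])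

theorem bracket_pos : 0 < bracket x := zero_lt_one.trans_le (one_le_bracket x)

theorem norm_le_bracket : ‖x‖ ≤ bracket x := le_sqrt_of_sq_le (by linarith)

theorem bracket_le_one_add_norm : bracket x ≤ 1 + ‖x‖ :=
  sqrt_le_iff.2 ⟨by positivity, by nlinarith [norm_nonneg x]⟩

theorem smooth_bracket : Smooth (bracket : ℝ^d → ℝ) :=
  (contDiff_const.add (contDiff_norm_sq ℝ)).sqrt fun x => by positivity

theorem smooth_inv_bracket : Smooth fun x : ℝ^d => (bracket x)⁻¹ :=
  smooth_bracket.inv fun x => (bracket_pos x).ne'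

theorem pd_bracket (i : Fin d) : pd i bracket = fun x : ℝ^d => x i * (bracket x)⁻¹ := by
  funext x
  have h := (((hasStrictFDerivAt_norm_sq x).hasFDerivAt.const_add 1).sqrt
    (by positivity : 1 + ‖x‖ ^ 2 ≠ 0)).fderiv
  change fderiv ℝ (fun y : ℝ^d => √(1 + ‖y‖ ^ 2)) x _ = _
  simp only [h, one_div, _root_.mul_inv_rev, _root_.smul_apply, coe_innerSL_apply,
    EuclideanSpace.inner_single_right, ringHom_apply, one_mul, nsmul_eq_mul, Nat.cast_ofNat,
    smul_eq_mul, bracket]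
  ring

theorem pd_inv_bracket (i : Fin d) : pd i (fun x : ℝ^d => (bracket x)⁻¹)
    = fun x => -1 * ((bracket x)⁻¹ * (bracket x)⁻¹ * pd i bracket x) := by
  rw [pd_inv smooth_bracket.differentiable fun x => (bracket_pos x).ne']
  funext x
  ring

theorem pd_coord (i k : Fin d) : pd k (fun x : ℝ^d => x i) = fun _ => if i = k then 1 else 0 := by
  funext x
  rw [pd, show fderiv ℝ (fun x : ℝ^d => x i) x = EuclideanSpace.proj i from
    (EuclideanSpace.proj (𝕜 := ℝ) i : ℝ^d →L[ℝ] ℝ).fderiv]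
  simp

theorem pd_pd_bracket (i k : Fin d) : pd k (pd i bracket) = fun x : ℝ^d =>
    (if i = k then 1 else 0) * (bracket x)⁻¹
      + -1 * (pd i bracket x * pd k bracket x * (bracket x)⁻¹) := by
  have hcoord : Differentiable ℝ fun x : ℝ^d => x i := by fun_prop
  rw [pd_bracket, pd_mul hcoord smooth_inv_bracket.differentiable, pd_coord, pd_inv_bracket]
  funext x
  simp only [pd_bracket]
  ring

theorem abs_pd_bracket_le (i : Fin d) : |pd i bracket x| ≤ 1 := by
  rw [pd_bracket, abs_mul, abs_of_pos (inv_pos.2 (bracket_pos x)), ← div_eq_mul_inv,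
    div_le_one (bracket_pos x)]
  exact (PiLp.norm_apply_le x i).trans (norm_le_bracket x)

theorem abs_inv_bracket_le : |(bracket x)⁻¹| ≤ 1 := by
  rw [abs_of_pos (inv_pos.2 (bracket_pos x))]
  exact inv_le_one_of_one_le₀ (one_le_bracket x)

theorem exists_ckBound_pd_bracket (k : ℕ) :
    ∃ S, CkBound k S (fun x : ℝ^d => (bracket x)⁻¹) ∧
      ∀ i : Fin d, CkBound k S (pd i bracket) := by
  induction k with
  | zero => exact ⟨1, abs_inv_bracket_le, fun i x => abs_pd_bracket_le x i⟩
  | succ k ih =>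
    obtain ⟨S, hinv, hpd⟩ := ih
    have hS := hinv.nonneg
    have hs (i : Fin d) := (smooth_bracket (d := d)).pd i
    have hr := smooth_inv_bracket (d := d)
    set T := |-1| * (2 ^ k * (2 ^ k * (S * S) * S))
    have hT0 : 0 ≤ T := by positivity
    refine ⟨1 + S + T, ⟨fun x => (abs_inv_bracket_le x).trans (by linarith), fun i => ?_⟩,
      fun i => ⟨fun x => (abs_pd_bracket_le x i).trans (by linarith), fun l => ?_⟩⟩
    · rw [pd_inv_bracket]
      exact (CkBound.const_mul ((hr.mul hr).mul (hs i)) (CkBound.mul (hr.mul hr) (hs i)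
        (CkBound.mul hr hr hinv hinv) (hpd i))).mono (by linarith)
    · rw [pd_pd_bracket]
      have hcubic := CkBound.const_mul (c := -1) (((hs i).mul (hs l)).mul hr) (CkBound.mul
        ((hs i).mul (hs l)) hr (CkBound.mul (hs i) (hs l) (hpd i) (hpd l)) hinv)
      refine (CkBound.add (contDiff_const.mul hr) (contDiff_const.mul
        (((hs i).mul (hs l)).mul hr)) (CkBound.const_mul hr hinv) hcubic).mono ?_
      split_ifs <;> simp only [abs_one, abs_zero] <;> linarith

theorem hessForm_bracket (v : Fin d → ℝ) : hessForm bracket x v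
    = (∑ i, v i ^ 2 - (∑ i, pd i bracket x * v i) ^ 2) * (bracket x)⁻¹ := by
  have hterm (i j : Fin d) : v i * pd i (pd j bracket) x * v j
      = (if j = i then v i * v j else 0) * (bracket x)⁻¹
        - (pd i bracket x * v i) * (pd j bracket x * v j) * (bracket x)⁻¹ := by
    rw [pd_pd_bracket]
    split_ifs <;> ring
  simp only [hessForm, hterm, Finset.sum_sub_distrib, ← Finset.sum_mul, sub_mul]
  rw [← Finset.sum_mul_sum, ← sq]
  simp [sq]

theorem gradSq_bracket : gradSq bracket x = 1 - (bracket x ^ 2)⁻¹ := by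
  have h := bracket_sq x
  have hpos := bracket_pos x
  simp only [gradSq, pd_bracket, mul_pow, ← Finset.sum_mul, ← EuclideanSpace.real_norm_sq_eq]
  rw [show ‖x‖ ^ 2 = bracket x ^ 2 - 1 by linarith]
  field_simp

theorem gradSq_bracket_le : gradSq bracket x ≤ 1 := by
  rw [gradSq_bracket]
  exact sub_le_self _ (by positivity)

theorem inv_bracket_pow_mul_le_hessForm (v : Fin d → ℝ) :
    (bracket x ^ 3)⁻¹ * ∑ i, v i ^ 2 ≤ hessForm bracket x v := by
  have hpos := bracket_pos x
  have hCS := Finset.sum_mul_sq_le_sq_mul_sq Finset.univ (fun i => pd i bracket x) v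
  change _ ≤ gradSq bracket x * _ at hCS
  rw [gradSq_bracket] at hCS
  rw [hessForm_bracket, show (bracket x ^ 3)⁻¹ * ∑ i, v i ^ 2
    = (bracket x ^ 2)⁻¹ * (∑ i, v i ^ 2) * (bracket x)⁻¹ by field_simp]
  gcongr
  linarith

end Bracket

section Confinement

/-- The smooth convex ramp with derivative `smoothTransition`: it vanishes on the negative half-line
and has slope one on `[1, ∞)`. -/
def smoothRamp (s : ℝ) : ℝ := ∫ τ in (0 : ℝ)..s, smoothTransition τ

theorem hasDerivAt_smoothRamp (s : ℝ) : HasDerivAt smoothRamp (smoothTransition s) s :=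
  intervalIntegral.integral_hasDerivAt_right (smoothTransition.continuous.intervalIntegrable _ _)
    (smoothTransition.continuous.stronglyMeasurableAtFilter _ _)
    smoothTransition.continuous.continuousAt

theorem hasDerivAt_smoothTransition (s : ℝ) :
    HasDerivAt smoothTransition (deriv smoothTransition s) s :=
  (smoothTransition.contDiff.differentiable (n := 1) one_ne_zero s).hasDerivAt

theorem contDiff_smoothRamp : ContDiff ℝ ∞ smoothRamp := by
  refine contDiff_infty_iff_deriv.2 ⟨fun s => (hasDerivAt_smoothRamp s).differentiableAt, ?_⟩
  rw [show deriv smoothRamp = smoothTransition from funext fun s => (hasDerivAt_smoothRamp s).deriv]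
  exact smoothTransition.contDiff

theorem smoothRamp_of_nonpos {s : ℝ} (h : s ≤ 0) : smoothRamp s = 0 := by
  have hzero : ∫ τ in s..0, smoothTransition τ = ∫ _ in s..0, (0 : ℝ) := by
    refine intervalIntegral.integral_congr fun τ hτ => ?_
    rw [uIcc_of_le h] at hτ
    exact smoothTransition.zero_of_nonpos hτ.2
  rw [smoothRamp, intervalIntegral.integral_symm, hzero]
  simp

theorem smoothRamp_nonneg (s : ℝ) : 0 ≤ smoothRamp s := by
  rcases le_total s 0 with h | h
  · rw [smoothRamp_of_nonpos h]
  · exact intervalIntegral.integral_nonneg h fun τ _ => smoothTransition.nonneg _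

theorem smoothRamp_of_one_le {s : ℝ} (h : 1 ≤ s) : smoothRamp s = smoothRamp 1 + (s - 1) := by
  have hone : ∫ τ in (1 : ℝ)..s, smoothTransition τ = ∫ _ in (1 : ℝ)..s, (1 : ℝ) := by
    refine intervalIntegral.integral_congr fun τ hτ => ?_
    rw [uIcc_of_le h] at hτ
    exact smoothTransition.one_of_one_le hτ.1
  have hint (a b : ℝ) := smoothTransition.continuous.intervalIntegrable (μ := volume) a b
  rw [smoothRamp, ← intervalIntegral.integral_add_adjacent_intervals (hint 0 1) (hint 1 s), hone]
  simp [smoothRamp]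

theorem sub_one_le_smoothRamp {s : ℝ} (h : 1 ≤ s) : s - 1 ≤ smoothRamp s := by
  linarith [smoothRamp_of_one_le h, smoothRamp_nonneg 1]

/-- The profile of all cutoff functions, equal to `1` on `(-∞, 1]` and to `0` on `[2, ∞)`. -/
def cutoffProfile (s : ℝ) : ℝ := 1 - smoothTransition (s - 1)

/-- The smooth cutoff at scale `m`: equal to `1` on `⟨x⟩ ≤ m` and to `0` on `2m ≤ ⟨x⟩`. -/
def cutoff (m : ℝ) (x : ℝ^d) : ℝ := cutoffProfile (m⁻¹ * bracket x)

theorem contDiff_cutoffProfile : ContDiff ℝ ∞ cutoffProfile :=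
  contDiff_const.sub (smoothTransition.contDiff.comp (contDiff_id.sub contDiff_const))

variable {m : ℝ} {x : ℝ^d}

theorem smooth_cutoff (m : ℝ) : Smooth (cutoff m : ℝ^d → ℝ) :=
  contDiff_cutoffProfile.comp (contDiff_const.mul smooth_bracket)

theorem cutoff_nonneg (m : ℝ) (x : ℝ^d) : 0 ≤ cutoff m x :=
  sub_nonneg.2 (smoothTransition.le_one _)

theorem cutoff_le_one (m : ℝ) (x : ℝ^d) : cutoff m x ≤ 1 :=
  sub_le_self _ (smoothTransition.nonneg _)

theorem cutoff_eq_one (hm : 0 < m) (hx : bracket x ≤ m) : cutoff m x = 1 := by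
  have : m⁻¹ * bracket x ≤ 1 := by rwa [inv_mul_le_iff₀ hm, mul_one]
  simp [cutoff, cutoffProfile, smoothTransition.zero_of_nonpos (sub_nonpos.2 this)]

theorem cutoff_eq_zero (hm : 0 < m) (hx : 2 * m ≤ bracket x) : cutoff m x = 0 := by
  have : 2 ≤ m⁻¹ * bracket x := by rwa [le_inv_mul_iff₀ hm, mul_comm]
  have : 1 ≤ m⁻¹ * bracket x - 1 := by linarith
  simp [cutoff, cutoffProfile, smoothTransition.one_of_one_le this]

theorem eventually_bracket_lt {r : ℝ} (hx : bracket x < r) : ∀ᶠ y in nhds x, bracket y < r :=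
  (isOpen_lt smooth_bracket.continuous continuous_const).mem_nhds hx

theorem eventually_lt_bracket {r : ℝ} (hx : r < bracket x) : ∀ᶠ y in nhds x, r < bracket y :=
  (isOpen_lt continuous_const smooth_bracket.continuous).mem_nhds hx

end Confinement

section TameApproximation

theorem hessForm_congr_nhds {u v : ℝ^d → ℝ} {x : ℝ^d} (h : u =ᶠ[nhds x] v) (w : Fin d → ℝ) :
    hessForm u x w = hessForm v x w := by
  simp only [hessForm, fun i j => pd_congr_nhds (pd_eventuallyEq h j) i]

theorem CkBound.neg_mul_le_hessForm {u : ℝ^d → ℝ} {S : ℝ} (hu : Smooth u) (h : CkBound 2 S u)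
    (x : ℝ^d) (v : Fin d → ℝ) : -(d * S) * ∑ i, v i ^ 2 ≤ hessForm u x v := by
  have habs := (abs_le.1 (CkBound.abs_hessForm_le hu h x (WithLp.toLp 2 v))).1
  have hcard := sq_sum_le_card_mul_sum_sq (s := Finset.univ) (f := fun i => |v i|)
  simp only [sq_abs, Finset.card_univ, Fintype.card_fin] at habs hcard
  nlinarith [h.nonneg]

theorem hessForm_add_const_mul {u v : ℝ^d → ℝ} (hu : Smooth u) (hv : Smooth v) (c : ℝ) (x : ℝ^d)
    (w : Fin d → ℝ) :
    hessForm (fun y => u y + c * v y) x w = hessForm u x w + c * hessForm v x w := by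
  have hpd (i j : Fin d) : pd i (pd j fun y => u y + c * v y) x
      = pd i (pd j u) x + c * pd i (pd j v) x := by
    rw [pd_add hu.differentiable (hv.differentiable.const_mul c), pd_const_mul hv.differentiable,
      pd_add (hu.pd j).differentiable ((hv.pd j).differentiable.const_mul c),
      pd_const_mul (hv.pd j).differentiable]
  simp only [hessForm, hpd, Finset.mul_sum, ← Finset.sum_add_distrib]
  exact Finset.sum_congr rfl fun i _ => Finset.sum_congr rfl fun j _ => by ring

theorem hasDerivAt_smoothRamp_sub (R s : ℝ) :
    HasDerivAt (fun s => smoothRamp (s - R)) (smoothTransition (s - R)) s := by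
  simpa using (hasDerivAt_smoothRamp (s - R)).comp_sub_const s R

theorem smooth_smoothRamp_bracket (R : ℝ) : Smooth fun x : ℝ^d => smoothRamp (bracket x - R) :=
  contDiff_smoothRamp.comp (smooth_bracket.sub contDiff_const)

theorem mul_le_hessForm_smoothRamp_bracket (R : ℝ) (x : ℝ^d) (v : Fin d → ℝ) :
    smoothTransition (bracket x - R) * ((bracket x ^ 3)⁻¹ * ∑ i, v i ^ 2)
      ≤ hessForm (fun y => smoothRamp (bracket y - R)) x v := by
  have hderiv (s : ℝ) : HasDerivAt (fun s => smoothTransition (s - R))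
      (deriv smoothTransition (s - R)) s := by
    simpa using (hasDerivAt_smoothTransition (s - R)).comp_sub_const s R
  rw [hessForm_comp smooth_bracket (hasDerivAt_smoothRamp_sub R) hderiv]
  exact (mul_le_mul_of_nonneg_left (inv_bracket_pow_mul_le_hessForm x v)
    (smoothTransition.nonneg _)).trans
    (le_add_of_nonneg_left (mul_nonneg smoothTransition.monotone.deriv_nonneg (sq_nonneg _)))

/-- The potential which agrees with `V` for `⟨x⟩ ≤ R` and is affine in `⟨x⟩` far out: outside
`⟨x⟩ ≤ R + 2` the potential `V` is cut off, and the resulting lack of convexity is compensated by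
the convex function `Λ smoothRamp (⟨x⟩ - R)`. -/
def confine (R Λ : ℝ) (V : ℝ^d → ℝ) (x : ℝ^d) : ℝ :=
  cutoff (R + 2) x * V x + Λ * smoothRamp (bracket x - R)

variable {R Λ S ρ : ℝ} {V : ℝ^d → ℝ} {x : ℝ^d}

protected theorem Smooth.confine (hV : Smooth V) : Smooth (confine R Λ V) :=
  ((smooth_cutoff _).mul hV).add (contDiff_const.mul (smooth_smoothRamp_bracket R))

theorem confine_eq_add (hR : 0 ≤ R) (hx : bracket x ≤ R + 2) :
    confine R Λ V x = V x + Λ * smoothRamp (bracket x - R) := by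
  rw [confine, cutoff_eq_one (by linarith) hx, one_mul]

theorem confine_eq_self (hR : 0 ≤ R) (hx : bracket x ≤ R) : confine R Λ V x = V x := by
  rw [confine_eq_add hR (by linarith), smoothRamp_of_nonpos (by linarith), mul_zero, add_zero]

theorem confine_eq_affine (hR : 0 ≤ R) (hx : 2 * (R + 2) < bracket x) :
    confine R Λ V x + -Λ * bracket x = Λ * (smoothRamp 1 - R - 1) := by
  rw [confine, cutoff_eq_zero (by linarith) hx.le, smoothRamp_of_one_le (by linarith)]
  ring

theorem exists_ckBound_pd_confine (hV : Smooth V) (hR : 0 ≤ R) (k : ℕ) :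
    ∃ S, ∀ i, CkBound k S (pd i (confine R Λ V)) := by
  set w : ℝ^d → ℝ := fun x => confine R Λ V x + -Λ * bracket x with hw
  have hws : Smooth w := hV.confine.add (contDiff_const.mul smooth_bracket)
  obtain ⟨S, hS⟩ := CkBound.exists_of_eq_const_outside (r := 2 * (R + 2)) (k + 1) hws
    fun x hx => confine_eq_affine hR (hx.trans_le (norm_le_bracket x))
  obtain ⟨T, -, hT⟩ := exists_ckBound_pd_bracket (d := d) k
  refine ⟨S + |Λ| * T, fun i => ?_⟩
  have hpd : pd i (confine R Λ V) = fun x => pd i w x + Λ * pd i bracket x := by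
    rw [hw, pd_add hV.confine.differentiable (smooth_bracket.differentiable.const_mul _),
      pd_const_mul smooth_bracket.differentiable]
    funext x
    ring
  rw [hpd]
  exact CkBound.add (hws.pd i) (contDiff_const.mul (smooth_bracket.pd i)) (hS.pd i)
    (CkBound.const_mul (smooth_bracket.pd i) (hT i))

theorem neg_mul_le_hessForm_confine (hV : Smooth V) (hR : 0 ≤ R) (hρ : 0 ≤ ρ) (hΛ : 0 ≤ Λ)
    (hS : CkBound 2 S fun x => cutoff (R + 2) x * V x) (hΛS : d * S * (2 * (R + 2)) ^ 3 ≤ Λ)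
    (hH : ∀ x v, -ρ * ∑ i, v i ^ 2 ≤ hessForm V x v) (x : ℝ^d) (v : Fin d → ℝ) :
    -ρ * ∑ i, v i ^ 2 ≤ hessForm (confine R Λ V) x v := by
  have hW : Smooth fun x => cutoff (R + 2) x * V x := (smooth_cutoff _).mul hV
  have hsum : 0 ≤ ∑ i, v i ^ 2 := Finset.sum_nonneg fun i _ => sq_nonneg _
  have hramp := mul_le_hessForm_smoothRamp_bracket R x v
  have hpos := bracket_pos x
  have hramp' : 0 ≤ hessForm (fun y => smoothRamp (bracket y - R)) x v :=
    (mul_nonneg (smoothTransition.nonneg _) (by positivity)).trans hramp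
  change _ ≤ hessForm (fun y => cutoff (R + 2) y * V y + Λ * smoothRamp (bracket y - R)) x v
  rw [hessForm_add_const_mul hW (smooth_smoothRamp_bracket R)]
  have hρv : -ρ * ∑ i, v i ^ 2 ≤ 0 := mul_nonpos_of_nonpos_of_nonneg (neg_nonpos.2 hρ) hsum
  rcases lt_or_ge (bracket x) (R + 2) with hx | hx
  · have hWV : (fun y => cutoff (R + 2) y * V y) =ᶠ[nhds x] V := by
      filter_upwards [eventually_bracket_lt hx] with y hy
      rw [cutoff_eq_one (by linarith) hy.le, one_mul]
    rw [hessForm_congr_nhds hWV]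
    exact (hH x v).trans (le_add_of_nonneg_right (mul_nonneg hΛ hramp'))
  rcases le_or_gt (bracket x) (2 * (R + 2)) with hx' | hx'
  · rw [smoothTransition.one_of_one_le (by linarith), one_mul] at hramp
    have hWx := CkBound.neg_mul_le_hessForm hW hS x v
    have hcoef : d * S ≤ Λ * (bracket x ^ 3)⁻¹ := by
      rw [← div_eq_mul_inv, le_div_iff₀ (by positivity)]
      exact (by have := hS.nonneg; gcongr : _ ≤ d * S * (2 * (R + 2)) ^ 3).trans hΛS
    have := mul_le_mul_of_nonneg_right hcoef hsum
    have := mul_le_mul_of_nonneg_left hramp hΛ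
    linarith
  · have hW0 : (fun y => cutoff (R + 2) y * V y) =ᶠ[nhds x] fun _ => 0 := by
      filter_upwards [eventually_lt_bracket hx'] with y hy
      rw [cutoff_eq_zero (by linarith) hy.le, zero_mul]
    rw [hessForm_congr_nhds hW0]
    simp only [hessForm, pd_const, mul_zero, zero_mul, Finset.sum_const_zero, zero_add]
    exact hρv.trans (mul_nonneg hΛ hramp')

theorem exp_neg_confine_le (hR : 0 ≤ R) (hS : ∀ x, |cutoff (R + 2) x * V x| ≤ S)
    (hΛ : S + (d + 1) * (R + 2) ≤ Λ) (x : ℝ^d) :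
    exp (-confine R Λ V x) ≤ exp (-V x) + (1 + ‖x‖) ^ (-(d + 1 : ℝ)) := by
  have hS0 := (abs_nonneg _).trans (hS 0)
  have hΛ0 : 0 ≤ Λ := le_trans (by positivity) hΛ
  have hlog : exp (-(d + 1) * log (1 + ‖x‖)) = (1 + ‖x‖) ^ (-(d + 1 : ℝ)) := by
    rw [rpow_def_of_pos (by positivity), mul_comm]
  rcases le_total (bracket x) (R + 2) with hx | hx
  · rw [confine_eq_add hR hx]
    refine le_add_of_le_of_nonneg (exp_le_exp.2 ?_) (by positivity)
    linarith [mul_nonneg hΛ0 (smoothRamp_nonneg (bracket x - R))]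
  · refine le_add_of_nonneg_of_le (exp_pos _).le (hlog ▸ exp_le_exp.2 ?_)
    have hloglin : log (1 + ‖x‖) ≤ (R + 2) * (bracket x - R - 1) := by
      have := log_le_sub_one_of_pos (by positivity : 0 < 1 + ‖x‖)
      nlinarith [norm_le_bracket x]
    have hramp : Λ * (bracket x - R - 1) ≤ Λ * smoothRamp (bracket x - R) :=
      mul_le_mul_of_nonneg_left (sub_one_le_smoothRamp (by linarith)) hΛ0
    have hΛx := mul_le_mul_of_nonneg_right hΛ (by linarith : 0 ≤ bracket x - R - 1)
    have hSx := mul_le_mul_of_nonneg_left (by linarith : 1 ≤ bracket x - R - 1) hS0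
    have hdx := mul_le_mul_of_nonneg_left hloglin (by positivity : 0 ≤ (d + 1 : ℝ))
    have := (abs_le.1 (hS x)).1
    rw [confine]
    linarith

/-- The integrable function dominating the densities of all tame approximations of `V`. -/
def expEnvelope (V : ℝ^d → ℝ) (x : ℝ^d) : ℝ := exp (-V x) + (1 + ‖x‖) ^ (-(d + 1 : ℝ))

theorem integrable_expEnvelope (hV : Integrable fun x => exp (-V x)) :
    Integrable (expEnvelope V) :=
  hV.add (integrable_one_add_norm (by simp))

theorem exists_tamePotential (hV : Smooth V) (hVI : Integrable fun x => exp (-V x)) (hρ : 0 ≤ ρ)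
    (hH : ∀ x v, -ρ * ∑ i, v i ^ 2 ≤ hessForm V x v) (hR : 0 ≤ R) :
    ∃ U, TamePotential U ∧ (∀ x, bracket x ≤ R → U x = V x) ∧
      (∀ x v, -ρ * ∑ i, v i ^ 2 ≤ hessForm U x v) ∧ ∀ x, exp (-U x) ≤ expEnvelope V x := by
  obtain ⟨S, hS⟩ := CkBound.exists_of_eq_const_outside (r := 2 * (R + 2)) (c := 0) 2
    ((smooth_cutoff (R + 2)).mul hV) fun x hx => by
      rw [cutoff_eq_zero (by linarith) (hx.le.trans (norm_le_bracket x)), zero_mul]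
  have hS0 := hS.nonneg
  set Λ := S + (d + 1) * (R + 2) + d * S * (2 * (R + 2)) ^ 3
  have hexp : ∀ x, exp (-confine R Λ V x) ≤ expEnvelope V x :=
    exp_neg_confine_le hR hS.abs_le (le_add_of_nonneg_right (by positivity))
  refine ⟨confine R Λ V, ⟨hV.confine, exists_ckBound_pd_confine hV hR, ?_⟩,
    fun x => confine_eq_self hR, neg_mul_le_hessForm_confine hV hR hρ (by positivity) hS
      (le_add_of_nonneg_left (by positivity)) hH, hexp⟩
  refine (integrable_expEnvelope hVI).mono'
    (hV.confine.continuous.neg.rexp.aestronglyMeasurable) (.of_forall fun x => ?_)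
  simpa using hexp x

end TameApproximation

section LocalizedWeight

theorem hasCompactSupport_deriv_cutoffProfile : HasCompactSupport (deriv cutoffProfile) := by
  refine HasCompactSupport.intro (isCompact_Icc (a := 1) (b := 2)) fun s hs => ?_
  have hconst {c : ℝ} (h : cutoffProfile =ᶠ[nhds s] fun _ => c) : deriv cutoffProfile s = 0 := by
    rw [h.deriv_eq, deriv_const]
  rcases lt_or_ge s 1 with h1 | h1
  · refine hconst (c := 1) ?_
    filter_upwards [Iio_mem_nhds h1] with t ht
    rw [cutoffProfile, smoothTransition.zero_of_nonpos (sub_nonpos.2 (le_of_lt ht)), sub_zero]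
  · have h2 : 2 < s := not_le.1 fun h2 => hs ⟨h1, h2⟩
    refine hconst (c := 0) ?_
    filter_upwards [Ioi_mem_nhds h2] with t ht
    rw [cutoffProfile, smoothTransition.one_of_one_le (by linarith [mem_Ioi.1 ht]), sub_self]

theorem deriv_cutoffProfile_nonpos (s : ℝ) : deriv cutoffProfile s ≤ 0 :=
  Antitone.deriv_nonpos fun _ _ h =>
    sub_le_sub_left (smoothTransition.monotone (sub_le_sub_right h 1)) 1

theorem exists_cutoffProfile_bound : ∃ C, 0 ≤ C ∧ ∀ s, |deriv cutoffProfile s| ≤ C ∧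
    |s * deriv cutoffProfile s| ≤ C ∧ |deriv (deriv cutoffProfile) s| ≤ C := by
  have hsupp := hasCompactSupport_deriv_cutoffProfile
  have hc : ContDiff ℝ ∞ (deriv cutoffProfile) :=
    (contDiff_infty_iff_deriv.1 contDiff_cutoffProfile).2
  obtain ⟨C₁, hC₁⟩ := hsupp.exists_bound_of_continuous hc.continuous
  obtain ⟨C₂, hC₂⟩ := (hsupp.mul_left (f := fun s => s)).exists_bound_of_continuous
    (continuous_id.mul hc.continuous)
  obtain ⟨C₃, hC₃⟩ :=
    hsupp.deriv.exists_bound_of_continuous (contDiff_infty_iff_deriv.1 hc).2.continuous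
  have h0 := fun s => (norm_nonneg _).trans (hC₁ s)
  refine ⟨max C₁ (max C₂ C₃), (h0 0).trans (le_max_left _ _), fun s => ⟨(hC₁ s).trans (by simp),
    (hC₂ s).trans (by simp), (hC₃ s).trans (by simp)⟩⟩

variable {U V b : ℝ^d → ℝ} {κ ρ m G M S : ℝ} {x : ℝ^d}

theorem hasDerivAt_comp_inv_mul {φ φ' : ℝ → ℝ} (hφ : ∀ s, HasDerivAt φ (φ' s) s) (m s : ℝ) :
    HasDerivAt (fun s => φ (m⁻¹ * s)) (m⁻¹ * φ' (m⁻¹ * s)) s := by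
  rw [mul_comm m⁻¹ (φ' _)]
  exact (hφ (m⁻¹ * s)).comp s (by simpa using (hasDerivAt_id s).const_mul m⁻¹)

theorem hasDerivAt_cutoffProfile (s : ℝ) : HasDerivAt cutoffProfile (deriv cutoffProfile s) s :=
  ((contDiff_infty_iff_deriv.1 contDiff_cutoffProfile).1 s).hasDerivAt

theorem hasDerivAt_deriv_cutoffProfile (s : ℝ) :
    HasDerivAt (deriv cutoffProfile) (deriv (deriv cutoffProfile) s) s :=
  have hc := (contDiff_infty_iff_deriv.1 contDiff_cutoffProfile).2
  ((contDiff_infty_iff_deriv.1 hc).1 s).hasDerivAt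

theorem diffOp_cutoff (U : ℝ^d → ℝ) (m : ℝ) (x : ℝ^d) : diffOp U (cutoff m) x
    = m⁻¹ * deriv cutoffProfile (m⁻¹ * bracket x) * diffOp U bracket x
      + m⁻¹ * (m⁻¹ * deriv (deriv cutoffProfile) (m⁻¹ * bracket x)) * gradSq bracket x :=
  diffOp_comp smooth_bracket (hasDerivAt_comp_inv_mul hasDerivAt_cutoffProfile m)
    (fun s => (hasDerivAt_comp_inv_mul hasDerivAt_deriv_cutoffProfile m s).const_mul m⁻¹) x

theorem gradDot_cutoff (b : ℝ^d → ℝ) (m : ℝ) (x : ℝ^d) : gradDot b (cutoff m) x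
    = m⁻¹ * deriv cutoffProfile (m⁻¹ * bracket x) * gradDot b bracket x :=
  gradDot_comp_right (φ' := fun s => m⁻¹ * deriv cutoffProfile (m⁻¹ * s))
    smooth_bracket.differentiable
    (fun y => hasDerivAt_comp_inv_mul hasDerivAt_cutoffProfile m (bracket y)) x

theorem exists_abs_gradDot_cutoff_le (hG : ∀ i x, |pd i b x| ≤ G) :
    ∃ C, ∀ m, 1 ≤ m → ∀ x, |gradDot b (cutoff m) x| ≤ C := by
  obtain ⟨C, hC0, hC⟩ := exists_cutoffProfile_bound
  refine ⟨C * (d * G), fun m hm x => ?_⟩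
  have hdot : |gradDot b bracket x| ≤ d * G := by
    refine (Finset.abs_sum_le_sum_abs _ _).trans
      ((Finset.sum_le_card_nsmul _ _ G fun i _ => ?_).trans (by simp))
    rw [abs_mul]
    exact (mul_le_of_le_one_right (abs_nonneg _) (abs_pd_bracket_le x i)).trans (hG i x)
  rw [gradDot_cutoff, abs_mul, abs_mul, abs_of_pos (by positivity : 0 < m⁻¹)]
  exact mul_le_mul ((mul_le_of_le_one_left (abs_nonneg _) (inv_le_one_of_one_le₀ hm)).trans
    (hC _).1) hdot (abs_nonneg _) hC0

theorem neg_le_dirDeriv_self (hU : Smooth U) (hH : ∀ x v, -ρ * ∑ i, v i ^ 2 ≤ hessForm U x v)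
    (hG : ∑ i, |pd i U 0| ≤ G) (x : ℝ^d) : -(ρ * ‖x‖ ^ 2 + G * ‖x‖) ≤ dirDeriv x U x := by
  have hderiv (t : ℝ) : HasDerivAt (fun t : ℝ => dirDeriv x U (0 + t • x) + ρ * ‖x‖ ^ 2 * t)
      (hessForm U (0 + t • x) x + ρ * ‖x‖ ^ 2) t := by
    rw [← dirDeriv_dirDeriv hU]
    simpa using (hasDerivAt_comp_line (hU.dirDeriv x) 0 x t).fun_add
      ((hasDerivAt_id t).const_mul (ρ * ‖x‖ ^ 2))
  have hmono := monotone_of_hasDerivAt_nonneg hderiv (fun t => by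
    have := hH (0 + t • x) x
    rw [← EuclideanSpace.real_norm_sq_eq] at this
    simp only [Pi.zero_apply]
    linarith) zero_le_one
  simp only [zero_smul, one_smul, zero_add, mul_zero, add_zero, mul_one] at hmono
  have hzero : |dirDeriv x U 0| ≤ G * ‖x‖ := by
    refine (Finset.abs_sum_le_sum_abs _ _).trans (le_trans ?_
      (mul_le_mul_of_nonneg_right hG (norm_nonneg x)))
    rw [Finset.sum_mul]
    refine Finset.sum_le_sum fun i _ => ?_
    rw [abs_mul, mul_comm]
    exact mul_le_mul_of_nonneg_left (PiLp.norm_apply_le x i) (abs_nonneg _)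
  linarith [(abs_le.1 hzero).1]

theorem exists_diffOp_bracket_le (d : ℕ) (hρ : 0 ≤ ρ) (hG : 0 ≤ G) :
    ∃ C, 0 ≤ C ∧ ∀ U : ℝ^d → ℝ, Smooth U → (∀ x v, -ρ * ∑ i, v i ^ 2 ≤ hessForm U x v) →
      (∑ i, |pd i U 0| ≤ G) → ∀ x, diffOp U bracket x ≤ C * bracket x := by
  obtain ⟨S, hS, hpd⟩ := exists_ckBound_pd_bracket (d := d) 1
  have hS0 := hS.nonneg
  refine ⟨d * S + (ρ + G), by positivity, fun U hU hH hUG x => ?_⟩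
  have hj := one_le_bracket x
  have hlap : lap bracket x ≤ d * S :=
    (Finset.sum_le_card_nsmul _ _ S fun i _ => (abs_le.1 (((hpd i).2 i).abs_le x)).2).trans
      (by simp)
  have hdot : gradDot U bracket x = dirDeriv x U x * (bracket x)⁻¹ := by
    simp only [gradDot, dirDeriv, pd_bracket, Finset.sum_mul]
    exact Finset.sum_congr rfl fun i _ => by ring
  have hradial : -((ρ + G) * bracket x) ≤ gradDot U bracket x := by
    rw [hdot, ← div_eq_mul_inv, le_div_iff₀ (bracket_pos x)]
    refine le_trans ?_ (neg_le_dirDeriv_self hU hH hUG x)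
    have hnorm := norm_le_bracket x
    have hsq : ‖x‖ ^ 2 ≤ bracket x ^ 2 := by gcongr
    have hlin : ‖x‖ ≤ bracket x ^ 2 := by nlinarith
    nlinarith [mul_le_mul_of_nonneg_left hsq hρ, mul_le_mul_of_nonneg_left hlin hG]
  have hdS : d * S ≤ d * S * bracket x := le_mul_of_one_le_right (by positivity) hj
  rw [diffOp_eq]
  linarith

/-- Although `diffOp U` has unbounded coefficients, cutoffs are almost subharmonic: the drift of a
semiconvex potential can only push inwards, where the cutoff is larger. -/
theorem exists_neg_le_diffOp_cutoff (d : ℕ) (hρ : 0 ≤ ρ) (hG : 0 ≤ G) :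
    ∃ K, ∀ U : ℝ^d → ℝ, Smooth U → (∀ x v, -ρ * ∑ i, v i ^ 2 ≤ hessForm U x v) →
      (∑ i, |pd i U 0| ≤ G) → ∀ m, 1 ≤ m → ∀ x, -K ≤ diffOp U (cutoff m) x := by
  obtain ⟨C, hC0, hC⟩ := exists_diffOp_bracket_le d hρ hG
  obtain ⟨c, -, hc⟩ := exists_cutoffProfile_bound
  refine ⟨C * c + c, fun U hU hH hUG m hm x => ?_⟩
  obtain ⟨-, hc₁, hc₂⟩ := hc (m⁻¹ * bracket x)
  have hm0 : 0 < m⁻¹ := by positivity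
  have hm1 : m⁻¹ ≤ 1 := inv_le_one_of_one_le₀ hm
  have hfirst : -(C * c) ≤ m⁻¹ * deriv cutoffProfile (m⁻¹ * bracket x) * diffOp U bracket x := by
    refine le_trans ?_ (mul_le_mul_of_nonpos_left (hC U hU hH hUG x)
      (mul_nonpos_of_nonneg_of_nonpos hm0.le (deriv_cutoffProfile_nonpos _)))
    linarith [mul_le_mul_of_nonneg_left (abs_le.1 hc₁).1 hC0]
  have hsecond : |m⁻¹ * (m⁻¹ * deriv (deriv cutoffProfile) (m⁻¹ * bracket x))
      * gradSq bracket x| ≤ c := by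
    rw [abs_mul, abs_mul, abs_mul, abs_of_pos hm0, abs_of_nonneg (gradSq_nonneg _ _)]
    refine (mul_le_of_le_one_right (by positivity) (gradSq_bracket_le x)).trans ?_
    exact (mul_le_of_le_one_left (by positivity) hm1).trans
      ((mul_le_of_le_one_left (abs_nonneg _) hm1).trans hc₂)
  rw [diffOp_cutoff]
  linarith [(abs_le.1 hsecond).1]

end LocalizedWeight

section Exhaustion

variable {U V b D : ℝ^d → ℝ} {κ ρ m M N G C : ℝ}

/-- The localised weight `b χ`, with `χ` the cutoff at scale `m`. -/
def cutoffWeight (b : ℝ^d → ℝ) (m : ℝ) (x : ℝ^d) : ℝ := b x * cutoff m x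

/-- The error `|diffOp U (b χ) - χ diffOp U b|` made by localising the weight `b`, with `χ` the
cutoff at scale `m`. -/
def cutoffError (U b : ℝ^d → ℝ) (m : ℝ) (x : ℝ^d) : ℝ :=
  |b x * diffOp U (cutoff m) x + 2 * gradDot b (cutoff m) x|

theorem cutoff_eventuallyEq_one (hm : 0 < m) {x : ℝ^d} (hx : bracket x < m) :
    cutoff m =ᶠ[nhds x] fun _ => 1 := by
  filter_upwards [eventually_bracket_lt hx] with y hy using cutoff_eq_one hm hy.le

theorem cutoff_eventuallyEq_zero (hm : 0 < m) {x : ℝ^d} (hx : 2 * m < bracket x) :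
    cutoff m =ᶠ[nhds x] fun _ => 0 := by
  filter_upwards [eventually_lt_bracket hx] with y hy using cutoff_eq_zero hm hy.le

theorem gradDot_congr_nhds {u u' v v' : ℝ^d → ℝ} {x : ℝ^d} (hu : u =ᶠ[nhds x] u')
    (hv : v =ᶠ[nhds x] v') : gradDot u v x = gradDot u' v' x := by
  simp only [gradDot, pd_congr_nhds hu, pd_congr_nhds hv]

theorem diffOp_congr_nhds {u u' v v' : ℝ^d → ℝ} {x : ℝ^d} (hu : u =ᶠ[nhds x] u')
    (hv : v =ᶠ[nhds x] v') : diffOp u v x = diffOp u' v' x := by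
  rw [diffOp_eq, diffOp_eq, gradDot_congr_nhds hu hv]
  simp only [lap, fun i => pd_congr_nhds (pd_eventuallyEq hv i) i]

theorem diffOp_const (U : ℝ^d → ℝ) (c : ℝ) (x : ℝ^d) : diffOp U (fun _ => c) x = 0 := by
  simp [diffOp, lap, pd_const]

theorem diffOp_eq_zero_of_eventuallyEq {u : ℝ^d → ℝ} {x : ℝ^d} {c : ℝ} (U : ℝ^d → ℝ)
    (hu : u =ᶠ[nhds x] fun _ => c) : diffOp U u x = 0 := by
  rw [diffOp_congr_nhds .rfl hu, diffOp_const]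

theorem gradDot_eq_zero_of_eventuallyEq {u : ℝ^d → ℝ} {x : ℝ^d} {c : ℝ} (b : ℝ^d → ℝ)
    (hu : u =ᶠ[nhds x] fun _ => c) : gradDot b u x = 0 := by
  rw [gradDot_congr_nhds .rfl hu]
  simp [gradDot, pd_const]

theorem exists_ckBound_cutoff (k : ℕ) (hm : 0 < m) :
    ∃ S, CkBound k S (cutoff m : ℝ^d → ℝ) :=
  CkBound.exists_of_eq_const_outside k (smooth_cutoff m) fun x hx =>
    cutoff_eq_zero hm (le_of_lt (hx.trans_le (norm_le_bracket x)))

theorem exists_cutoffError_le (hU : Smooth U) (hb : Smooth b) (hm : 0 < m) :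
    ∃ C, ∀ x, cutoffError U b m x ≤ C :=
  CkBound.exists_of_eq_const_outside (r := 2 * m) (c := 0) 0
    ((hb.mul (hU.diffOp (smooth_cutoff m))).add (contDiff_const.mul (hb.gradDot (smooth_cutoff m))))
    fun x hx => by
      have hχ := cutoff_eventuallyEq_zero hm (hx.trans_le (norm_le_bracket x))
      rw [diffOp_eq_zero_of_eventuallyEq U hχ, gradDot_eq_zero_of_eventuallyEq b hχ]
      ring

theorem cutoffWeight_curvature (hb : Smooth b) (hm : 0 < m)
    (hUV : ∀ x, bracket x ≤ 3 * m → U x = V x)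
    (hbV : ∀ x v, (diffOp V b x + κ * b x) * ∑ i, v i ^ 2 ≤ 2 * b x * hessForm V x v)
    (x : ℝ^d) (v : Fin d → ℝ) :
    (diffOp U (cutoffWeight b m) x + κ * cutoffWeight b m x - cutoffError U b m x) * ∑ i, v i ^ 2
      ≤ 2 * cutoffWeight b m x * hessForm U x v := by
  have hsum : 0 ≤ ∑ i, v i ^ 2 := Finset.sum_nonneg fun i _ => sq_nonneg _
  rw [show diffOp U (cutoffWeight b m) x = _ from diffOp_mul hb (smooth_cutoff m) x]
  simp only [cutoffWeight, cutoffError]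
  rcases lt_or_ge (bracket x) (3 * m) with hx | hx
  · have hUVx : U =ᶠ[nhds x] V := by
      filter_upwards [eventually_bracket_lt hx] with y hy using hUV y hy.le
    rw [hessForm_congr_nhds hUVx, diffOp_congr_nhds hUVx (.refl _ b)]
    have hχ := mul_le_mul_of_nonneg_left (hbV x v) (cutoff_nonneg m x)
    have herr := mul_le_mul_of_nonneg_right
      (le_abs_self (b x * diffOp U (cutoff m) x + 2 * gradDot b (cutoff m) x)) hsum
    linarith
  · have hχ := cutoff_eventuallyEq_zero (x := x) hm (by linarith)
    rw [diffOp_eq_zero_of_eventuallyEq U hχ, gradDot_eq_zero_of_eventuallyEq b hχ, hχ.eq_of_nhds]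
    simp

theorem fisherWeight_cutoffWeight (hU : Smooth U) (hb : Smooth b) (hb0 : ∀ x, 0 ≤ b x)
    (hm : 0 < m) (hUV : ∀ x, bracket x ≤ 3 * m → U x = V x)
    (hbV : ∀ x v, (diffOp V b x + κ * b x) * ∑ i, v i ^ 2 ≤ 2 * b x * hessForm V x v) :
    FisherWeight U κ (cutoffWeight b m) (cutoffError U b m) where
  smooth := hb.mul (smooth_cutoff m)
  nonneg x := mul_nonneg (hb0 x) (cutoff_nonneg m x)
  exists_ckBound := CkBound.exists_of_eq_const_outside (r := 2 * m) 2 (hb.mul (smooth_cutoff m))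
    fun x hx => (congrArg (b x * ·) (cutoff_eq_zero hm (hx.le.trans (norm_le_bracket x)))).trans
      (mul_zero _)
  error_continuous := ((hb.continuous.mul (hU.diffOp (smooth_cutoff m)).continuous).add
    (continuous_const.mul (hb.gradDot (smooth_cutoff m)).continuous)).abs
  error_nonneg _ := abs_nonneg _
  exists_error_le := exists_cutoffError_le hU hb hm
  curvature := cutoffWeight_curvature hb hm hUV hbV

theorem hasCompactSupport_cutoffWeight (b : ℝ^d → ℝ) (hm : 0 < m) :
    HasCompactSupport (cutoffWeight b m) := by
  refine HasCompactSupport.intro (isCompact_closedBall 0 (2 * m)) fun x hx => ?_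
  rw [mem_closedBall_zero_iff, not_le] at hx
  rw [cutoffWeight, cutoff_eq_zero hm (hx.le.trans (norm_le_bracket x)), mul_zero]

/-- A bound for `cutoffError U b m` up to a multiple of `diffOp U χ`, whose integral vanishes;
unlike `diffOp U χ` itself it is bounded uniformly in `m` and `U`. -/
def cutoffDefect (U b : ℝ^d → ℝ) (M m : ℝ) (x : ℝ^d) : ℝ :=
  2 * M * max (-diffOp U (cutoff m) x) 0 + 2 * |gradDot b (cutoff m) x|

theorem cutoffError_le (hb0 : ∀ x, 0 ≤ b x) (hbM : ∀ x, b x ≤ M) (x : ℝ^d) :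
    cutoffError U b m x ≤ cutoffDefect U b M m x + M * diffOp U (cutoff m) x := by
  have habs : |diffOp U (cutoff m) x|
      = 2 * max (-diffOp U (cutoff m) x) 0 + diffOp U (cutoff m) x := by
    rcases abs_cases (diffOp U (cutoff m) x) with ⟨h, h'⟩ | ⟨h, h'⟩
    · rw [h, max_eq_right (by linarith)]; ring
    · rw [h, max_eq_left (by linarith)]; ring
  calc cutoffError U b m x
      ≤ |b x * diffOp U (cutoff m) x| + |2 * gradDot b (cutoff m) x| := abs_add_le _ _
    _ = b x * |diffOp U (cutoff m) x| + 2 * |gradDot b (cutoff m) x| := by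
        rw [abs_mul, abs_mul, abs_of_nonneg (hb0 x), abs_two]
    _ ≤ M * |diffOp U (cutoff m) x| + 2 * |gradDot b (cutoff m) x| := by
        gcongr; exact hbM x
    _ = _ := by rw [habs, cutoffDefect]; ring

theorem continuous_cutoffDefect (hU : Smooth U) (hb : Smooth b) (M m : ℝ) :
    Continuous (cutoffDefect U b M m) := by
  have hχ := (hU.diffOp (smooth_cutoff m)).continuous
  have hgrad := (hb.gradDot (smooth_cutoff m)).continuous
  unfold cutoffDefect
  fun_prop

theorem cutoffDefect_eq_zero (hm : 0 < m) {x : ℝ^d} (hx : bracket x < m) :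
    cutoffDefect U b M m x = 0 := by
  have hχ := cutoff_eventuallyEq_one hm hx
  simp [cutoffDefect, diffOp_eq_zero_of_eventuallyEq U hχ, gradDot_eq_zero_of_eventuallyEq b hχ]

theorem exists_abs_cutoffDefect_le (hρ : 0 ≤ ρ) (hM : 0 ≤ M) (hG : 0 ≤ G)
    (hb : ∀ i x, |pd i b x| ≤ N) :
    ∃ C, ∀ U : ℝ^d → ℝ, Smooth U → (∀ x v, -ρ * ∑ i, v i ^ 2 ≤ hessForm U x v) →
      (∑ i, |pd i U 0| ≤ G) → ∀ m, 1 ≤ m → ∀ x, |cutoffDefect U b M m x| ≤ C := by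
  obtain ⟨K, hK⟩ := exists_neg_le_diffOp_cutoff d hρ hG
  obtain ⟨T, hT⟩ := exists_abs_gradDot_cutoff_le hb
  refine ⟨2 * M * max K 0 + 2 * T, fun U hU hH hUG m hm x => ?_⟩
  have hmax : max (-diffOp U (cutoff m) x) 0 ≤ max K 0 :=
    max_le_max_right 0 (neg_le.1 (hK U hU hH hUG m hm x))
  rw [cutoffDefect, abs_of_nonneg (by positivity)]
  gcongr
  exact hT m hm x

theorem integral_cutoffError_le (hU : TamePotential U) (hb : Smooth b) (hb0 : ∀ x, 0 ≤ b x)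
    (hbM : ∀ x, b x ≤ M) (hm : 0 < m) (hC : ∀ x, |cutoffDefect U b M m x| ≤ C) :
    ∫ x, cutoffError U b m x ∂expMeasure U ≤ ∫ x, cutoffDefect U b M m x ∂expMeasure U := by
  obtain ⟨S, hS⟩ := exists_ckBound_cutoff (d := d) 2 hm
  obtain ⟨K, hK⟩ := hU.exists_abs_diffOp_le hS
  have hdefect := hU.integrable (continuous_cutoffDefect hU.smooth hb M m) hC
  have hL : Integrable (fun x => M * diffOp U (cutoff m) x) (expMeasure U) :=
    (hU.integrable (hU.smooth.diffOp (smooth_cutoff m)).continuous hK).const_mul M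
  calc ∫ x, cutoffError U b m x ∂expMeasure U
      ≤ ∫ x, (cutoffDefect U b M m x + M * diffOp U (cutoff m) x) ∂expMeasure U :=
        integral_mono_of_nonneg (.of_forall fun _ => abs_nonneg _) (hdefect.add hL)
          (.of_forall (cutoffError_le hb0 hbM))
    _ = ∫ x, cutoffDefect U b M m x ∂expMeasure U := by
        rw [integral_add hdefect hL, integral_const_mul, hU.integral_diffOp (smooth_cutoff m) hS,
          mul_zero, add_zero]

theorem tendsto_integral_cutoffError {U : ℕ → ℝ^d → ℝ} (hV : Continuous V)
    (hU : ∀ n, TamePotential (U n)) (hD : Integrable D) (hUD : ∀ n x, exp (-U n x) ≤ D x)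
    (hUV : ∀ (n : ℕ) x, bracket x ≤ 3 * (n + 1) → U n x = V x)
    (hρ : 0 ≤ ρ) (hH : ∀ n x v, -ρ * ∑ i, v i ^ 2 ≤ hessForm (U n) x v)
    (hb : Smooth b) (hb0 : ∀ x, 0 ≤ b x) (hbM : ∀ x, b x ≤ M) (hbN : ∀ i x, |pd i b x| ≤ N) :
    Filter.Tendsto (fun n : ℕ => ∫ x, cutoffError (U n) b (n + 1) x ∂expMeasure (U n))
      Filter.atTop (nhds 0) := by
  have hG (n : ℕ) : ∑ i, |pd i (U n) 0| ≤ ∑ i, |pd i V 0| := by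
    have hzero : bracket (0 : ℝ^d) < 3 * (n + 1) :=
      (bracket_le_one_add_norm 0).trans_lt (by rw [norm_zero]; linarith [n.cast_nonneg (α := ℝ)])
    have hUV0 : U n =ᶠ[nhds 0] V := by
      filter_upwards [eventually_bracket_lt hzero] with y hy using hUV n y hy.le
    simp only [pd_congr_nhds hUV0, le_refl]
  obtain ⟨C, hC⟩ := exists_abs_cutoffDefect_le hρ ((hb0 0).trans (hbM 0))
    (Finset.sum_nonneg fun i _ => abs_nonneg (pd i V 0)) hbN
  have hdefect (n : ℕ) (x : ℝ^d) : |cutoffDefect (U n) b M (n + 1) x| ≤ C :=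
    hC (U n) (hU n).smooth (hH n) (hG n) _ (by simp) x
  have hlim (r : ℝ) : ∀ᶠ n : ℕ in Filter.atTop, r < n + 1 :=
    (Filter.tendsto_atTop_add_const_right _ 1 tendsto_natCast_atTop_atTop).eventually_gt_atTop r
  have hdefect_lim := tendsto_integral_expMeasure (f' := fun _ => 0)
    (fun n => (hU n).smooth.continuous) hV hD hUD
    (fun x => (hlim (bracket x)).mono fun n hn => hUV n x (by linarith [n.cast_nonneg (α := ℝ)]))
    (fun n => continuous_cutoffDefect (hU n).smooth hb M (n + 1)) hdefect
    fun x => (hlim (bracket x)).mono fun n hn => cutoffDefect_eq_zero (by positivity) hn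
  rw [integral_zero] at hdefect_lim
  exact squeeze_zero (fun n => integral_nonneg fun x => abs_nonneg _)
    (fun n => integral_cutoffError_le (hU n) hb hb0 hbM (by positivity) (hdefect n)) hdefect_lim

theorem exists_tameExhaustion (hV : Smooth V) (hVI : Integrable fun x => exp (-V x)) (hρ : 0 ≤ ρ)
    (hH : ∀ x v, -ρ * ∑ i, v i ^ 2 ≤ hessForm V x v) (hb : Smooth b) (hb0 : ∀ x, 0 ≤ b x)
    (hbM : ∀ x, b x ≤ M) (hbN : ∀ i x, |pd i b x| ≤ N)
    (hbV : ∀ x v, (diffOp V b x + κ * b x) * ∑ i, v i ^ 2 ≤ 2 * b x * hessForm V x v) :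
    ∃ U B e, TameExhaustion V b κ ρ U B e := by
  choose U hU hUV hUH hUD using fun n : ℕ =>
    exists_tamePotential hV hVI hρ hH (by positivity : (0 : ℝ) ≤ 3 * (n + 1))
  refine ⟨U, fun n => cutoffWeight b (n + 1), fun n => cutoffError (U n) b (n + 1), hU,
    fun n => fisherWeight_cutoffWeight (hU n).smooth hb hb0 (by positivity) (hUV n) hbV,
    fun n => hasCompactSupport_cutoffWeight b (by positivity),
    ⟨M, fun n x => (mul_le_of_le_one_right (hb0 x) (cutoff_le_one _ x)).trans (hbM x)⟩,
    hUH, ⟨expEnvelope V, integrable_expEnvelope hVI, hUD⟩, fun r => ?_,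
    tendsto_integral_cutoffError hV.continuous hU (integrable_expEnvelope hVI) hUD hUV hρ hUH hb hb0
      hbM hbN⟩
  filter_upwards [tendsto_natCast_atTop_atTop.eventually_ge_atTop r] with n hn x hx
  have hxn : bracket x ≤ n + 1 := by
    linarith [bracket_le_one_add_norm x, mem_closedBall_zero_iff.1 hx]
  refine ⟨hUV n x (by linarith [n.cast_nonneg (α := ℝ)]), ?_⟩
  rw [cutoffWeight, cutoff_eq_one (by positivity) hxn, mul_one]

end Exhaustion

section Entropy

variable {V b f g : ℝ^d → ℝ} {A M N κ ρ ε : ℝ}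

theorem isProbabilityMeasure_gibbs (hV : Continuous V) (hVI : Integrable fun x => exp (-V x)) :
    IsProbabilityMeasure (gibbs V) := by
  have := isFiniteMeasure_expMeasure hVI
  have := neZero_expMeasure hV
  have hgibbs : gibbs V = (expMeasure V univ)⁻¹ • expMeasure V := by
    simp only [gibbs, expMeasure, withDensity_apply _ MeasurableSet.univ, Measure.restrict_univ]
  rw [hgibbs]
  infer_instance

theorem integral_gibbs (V f : ℝ^d → ℝ) :
    ∫ x, f x ∂gibbs V = ((expMeasure V).real univ)⁻¹ * ∫ x, f x ∂expMeasure V := by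
  rw [gibbs, integral_smul_measure, smul_eq_mul, ENNReal.toReal_inv, measureReal_def, expMeasure,
    withDensity_apply _ MeasurableSet.univ, Measure.restrict_univ]

theorem integral_relEnt_integral {μ : Measure (ℝ^d)} [IsProbabilityMeasure μ]
    (hg : Integrable g μ) (hg' : Integrable (fun x => g x * log (g x)) μ)
    (h0 : ∫ x, g x ∂μ ≠ 0) : ∫ x, relEnt (∫ y, g y ∂μ) (g x) ∂μ = entropy μ g := by
  set m := ∫ x, g x ∂μ with hm
  have hrelEnt (s : ℝ) : relEnt m s = s * log s - s * log m + (m - s) := by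
    rcases eq_or_ne s 0 with rfl | hs
    · simp [relEnt, InformationTheory.klFun]
    · rw [relEnt, InformationTheory.klFun, log_div hs h0]
      field_simp
      ring
  have hgm := hg.mul_const (log m)
  have hlog : Integrable (fun x => g x * log (g x) - g x * log m) μ := hg'.sub hgm
  have hcenter : Integrable (fun x => m - g x) μ := (integrable_const m).sub hg
  simp only [hrelEnt]
  rw [integral_add hlog hcenter, integral_sub hg' hgm, integral_sub (integrable_const m) hg,
    integral_mul_const, ← hm, entropy]
  simp [← hm]

theorem tendsto_entropy {μ : Measure (ℝ^d)} [IsFiniteMeasure μ] {u : ℕ → ℝ^d → ℝ} {C : ℝ}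
    (hu : ∀ n, Continuous (u n)) (hC : ∀ n x, |u n x| ≤ C)
    (hlim : ∀ x, Filter.Tendsto (fun n => u n x) Filter.atTop (nhds (g x))) :
    Filter.Tendsto (fun n => entropy μ (u n)) Filter.atTop (nhds (entropy μ g)) := by
  have hlim' {φ : ℝ → ℝ} (hφ : Continuous φ) : Filter.Tendsto (fun n => ∫ x, φ (u n x) ∂μ)
      Filter.atTop (nhds (∫ x, φ (g x) ∂μ)) := by
    obtain ⟨R, hR⟩ := (isCompact_Icc (a := -C) (b := C)).exists_bound_of_continuousOn
      hφ.continuousOn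
    exact tendsto_integral_of_dominated_convergence (fun _ => R)
      (fun n => (hφ.comp (hu n)).aestronglyMeasurable) (integrable_const R)
      (fun n => .of_forall fun x => hR _ (abs_le.1 (hC n x)))
      (.of_forall fun x => (hφ.tendsto _).comp (hlim x))
  exact (hlim' continuous_mul_log).sub ((continuous_mul_log.tendsto _).comp (hlim' continuous_id))

theorem fisher_sq_add_le (hf : Smooth f) (hε : 0 < ε) (x : ℝ^d) :
    fisher (fun y => f y ^ 2 + ε) x ≤ 4 * gradSq f x := by
  rw [fisher, gradSq_comp (φ := fun s => s ^ 2 + ε) (φ' := fun s => 2 * s) hf.differentiable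
    (fun y => by simpa using (hasDerivAt_pow 2 (f y)).add_const ε), div_le_iff₀ (by positivity)]
  nlinarith [mul_nonneg hε.le (gradSq_nonneg f x)]

theorem TameExhaustion.entropy_gibbs_le [NeZero d] {U : ℕ → ℝ^d → ℝ} {B e : ℕ → ℝ^d → ℝ}
    (h : TameExhaustion V b κ ρ U B e) (hV : Continuous V)
    (hVI : Integrable fun x => exp (-V x)) (hκ : 0 < κ) (hρ : 0 ≤ ρ) (hA : 0 ≤ A)
    (hAb : ∀ x, 1 ≤ A * b x) (hg : Smooth g) {S : ℝ} (hgS : CkBound 4 S g) (hε : 0 < ε)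
    (hεg : ∀ x, ε ≤ g x) :
    entropy (gibbs V) g ≤ A / κ * ∫ x, b x * fisher g x ∂gibbs V := by
  have := isProbabilityMeasure_gibbs hV hVI
  have := isFiniteMeasure_expMeasure hVI
  have := neZero_expMeasure hV
  have hgI : Integrable g (gibbs V) := integrable_of_continuous_of_abs_le hg.continuous hgS.abs_le
  obtain ⟨R, hR⟩ := (isCompact_Icc (a := -S) (b := S)).exists_bound_of_continuousOn
    continuous_mul_log.continuousOn
  have hgI' : Integrable (fun x => g x * log (g x)) (gibbs V) :=
    integrable_of_continuous_of_abs_le (continuous_mul_log.comp hg.continuous)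
      fun x => hR _ (abs_le.1 (hgS.abs_le x))
  have hmean : 0 < ∫ x, g x ∂gibbs V :=
    hε.trans_le ((integral_mono (integrable_const ε) hgI hεg).trans_eq' (by simp))
  have hZ : 0 < (expMeasure V).real univ := measureReal_univ_pos
  rw [← integral_relEnt_integral hgI hgI' hmean.ne', integral_gibbs V,
    integral_gibbs V fun x => b x * _, mul_left_comm]
  refine mul_le_mul_of_nonneg_left ?_ (inv_pos.2 hZ).le
  refine h.integral_relEnt_le hV hVI hκ hρ hA hAb hg hgS hε hεg hmean ?_
  rw [integral_gibbs V g]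
  field_simp

theorem integrable_gradSq {μ : Measure (ℝ^d)} [IsFiniteMeasure μ] (hf : Smooth f)
    (hfc : HasCompactSupport f) : Integrable (gradSq f) μ := by
  have hsupport : HasCompactSupport (gradSq f) :=
    (hfc.fderiv ℝ).mono fun x => mt fun hx : fderiv ℝ f x = 0 => by simp [gradSq, pd, hx]
  exact hf.gradSq.continuous.integrable_of_hasCompactSupport hsupport

theorem TameExhaustion.entropy_gibbs_sq_add_le [NeZero d] {U : ℕ → ℝ^d → ℝ} {B e : ℕ → ℝ^d → ℝ}
    (h : TameExhaustion V b κ ρ U B e) (hV : Continuous V)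
    (hVI : Integrable fun x => exp (-V x)) (hκ : 0 < κ) (hρ : 0 ≤ ρ) (hA : 0 ≤ A)
    (hAb : ∀ x, 1 ≤ A * b x) (hbM : ∀ x, b x ≤ M) (hf : Smooth f) (hfc : HasCompactSupport f)
    (hε : 0 < ε) :
    entropy (gibbs V) (fun x => f x ^ 2 + ε) ≤ 4 * A * M / κ * ∫ x, gradSq f x ∂gibbs V := by
  have := isProbabilityMeasure_gibbs hV hVI
  have hsmooth : Smooth fun x => f x ^ 2 + ε := (hf.pow 2).add contDiff_const
  obtain ⟨r, -, hr⟩ := hfc.exists_pos_le_norm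
  obtain ⟨S, hS⟩ := CkBound.exists_of_eq_const_outside (c := ε) 4 hsmooth
    fun x hx => by rw [hr x hx.le]; ring
  have hεf (x : ℝ^d) : ε ≤ f x ^ 2 + ε := le_add_of_nonneg_left (sq_nonneg _)
  have hb0 (x : ℝ^d) : 0 ≤ b x := (pos_of_mul_pos_right (zero_lt_one.trans_le (hAb x)) hA).le
  have hgradI : Integrable (gradSq f) (gibbs V) := integrable_gradSq hf hfc
  have hfisher0 := fisher_nonneg fun x => hε.trans_le (hεf x)
  have hfisher (x : ℝ^d) : b x * fisher (fun y => f y ^ 2 + ε) x ≤ M * (4 * gradSq f x) :=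
    mul_le_mul (hbM x) (fisher_sq_add_le hf hε x) (hfisher0 x) ((hb0 x).trans (hbM x))
  calc entropy (gibbs V) (fun x => f x ^ 2 + ε)
      ≤ A / κ * ∫ x, b x * fisher (fun y => f y ^ 2 + ε) x ∂gibbs V :=
        h.entropy_gibbs_le hV hVI hκ hρ hA hAb hsmooth hS hε hεf
    _ ≤ A / κ * ∫ x, M * (4 * gradSq f x) ∂gibbs V := by
        refine mul_le_mul_of_nonneg_left ?_ (by positivity)
        exact integral_mono_of_nonneg (.of_forall fun x => mul_nonneg (hb0 x) (hfisher0 x))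
          ((hgradI.const_mul 4).const_mul M) (.of_forall hfisher)
    _ = 4 * A * M / κ * ∫ x, gradSq f x ∂gibbs V := by
        rw [integral_const_mul, integral_const_mul]
        ring

theorem TameExhaustion.entropy_gibbs_sq_le [NeZero d] {U : ℕ → ℝ^d → ℝ} {B e : ℕ → ℝ^d → ℝ}
    (h : TameExhaustion V b κ ρ U B e) (hV : Continuous V)
    (hVI : Integrable fun x => exp (-V x)) (hκ : 0 < κ) (hρ : 0 ≤ ρ) (hA : 0 ≤ A)
    (hAb : ∀ x, 1 ≤ A * b x) (hbM : ∀ x, b x ≤ M) (hf : Smooth f) (hfc : HasCompactSupport f) :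
    entropy (gibbs V) (fun x => f x ^ 2) ≤ 4 * A * M / κ * ∫ x, gradSq f x ∂gibbs V := by
  have := isProbabilityMeasure_gibbs hV hVI
  obtain ⟨F, hF⟩ := hf.continuous.bounded_above_of_compact_support hfc
  have hlim : Filter.Tendsto (fun n : ℕ => entropy (gibbs V) fun x => f x ^ 2 + 1 / ((n : ℝ) + 1))
      Filter.atTop (nhds (entropy (gibbs V) fun x => f x ^ 2)) := by
    refine tendsto_entropy (μ := gibbs V) (C := F ^ 2 + 1)
      (fun n => (hf.continuous.pow 2).add continuous_const) (fun n x => ?_)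
      fun x => by simpa using tendsto_one_div_add_atTop_nhds_zero_nat.const_add (f x ^ 2)
    rw [abs_of_nonneg (by positivity)]
    have hfF := abs_le.1 (hF x)
    exact add_le_add (sq_le_sq' hfF.1 hfF.2) (div_le_one_of_le₀ (by simp) (by positivity))
  exact le_of_tendsto' hlim fun n =>
    h.entropy_gibbs_sq_add_le hV hVI hκ hρ hA hAb hbM hf hfc Nat.one_div_pos_of_nat

end Entropy

section Hessian

variable {V a : ℝ^d → ℝ} {ρ κ : ℝ} {x : ℝ^d}

theorem isHermitian_of_posSemidef_sub_smul_one {H : Matrix (Fin d) (Fin d) ℝ}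
    (h : (H - ρ • 1).PosSemidef) : H.IsHermitian := by
  simpa using h.isHermitian.add (isHermitian_one.smul (IsSelfAdjoint.all ρ))

theorem mul_sum_sq_le_hessForm (h : (hess V x - ρ • 1).PosSemidef) (v : Fin d → ℝ) :
    ρ * ∑ i, v i ^ 2 ≤ hessForm V x v := by
  have hform : v ⬝ᵥ hess V x *ᵥ v = hessForm V x v := by
    simp only [dotProduct, mulVec, Finset.mul_sum, hessForm, hess, of_apply, mul_assoc]
  have hnonneg := h.dotProduct_mulVec_nonneg v
  rw [star_trivial, sub_mulVec, dotProduct_sub, smul_mulVec, one_mulVec, dotProduct_smul, hform,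
    smul_eq_mul, sub_nonneg] at hnonneg
  simpa only [dotProduct, sq] using hnonneg

theorem posSemidef_sub_minEig_smul_one {H : Matrix (Fin d) (Fin d) ℝ} (hH : H.IsHermitian) :
    (H - minEig H • 1).PosSemidef := by
  have hsub : (H - minEig H • (1 : Matrix (Fin d) (Fin d) ℝ)).IsHermitian :=
    hH.sub (isHermitian_one.smul (IsSelfAdjoint.all _))
  have hfin : (spectrum ℝ H).Finite := by
    rw [hH.spectrum_real_eq_range_eigenvalues]
    exact Set.finite_range _
  refine hsub.posSemidef_iff_eigenvalues_nonneg.2 fun i => ?_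
  have hmem : hsub.eigenvalues i + minEig H ∈ spectrum ℝ H := by
    rw [spectrum.add_mem_iff, Algebra.algebraMap_eq_smul_one, neg_add_eq_sub]
    exact hsub.eigenvalues_mem_spectrum_real i
  exact le_add_iff_nonneg_left _ |>.1 (csInf_le hfin.bddBelow hmem)

theorem diffOp_add_mul_inv_mul_le {α D : ℝ} (hH : (hess V x).IsHermitian) (hα : 0 < α)
    (hκ : κ ≤ 2 * minEig (hess V x) - α * D) (v : Fin d → ℝ) :
    (D + κ * α⁻¹) * ∑ i, v i ^ 2 ≤ 2 * α⁻¹ * hessForm V x v := by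
  have hD : D + κ * α⁻¹ ≤ 2 * α⁻¹ * minEig (hess V x) := by
    rw [← div_eq_mul_inv, ← le_sub_iff_add_le', div_le_iff₀ hα]
    refine hκ.trans_eq ?_
    field_simp
  calc (D + κ * α⁻¹) * ∑ i, v i ^ 2
      ≤ 2 * α⁻¹ * minEig (hess V x) * ∑ i, v i ^ 2 := by gcongr
    _ = 2 * α⁻¹ * (minEig (hess V x) * ∑ i, v i ^ 2) := mul_assoc _ _ _
    _ ≤ 2 * α⁻¹ * hessForm V x v := by
        gcongr
        exact mul_sum_sq_le_hessForm (posSemidef_sub_minEig_smul_one hH) v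

theorem abs_pd_le_sqrt_gradSq (u : ℝ^d → ℝ) (i : Fin d) (x : ℝ^d) : |pd i u x| ≤ √(gradSq u x) :=
  abs_le_sqrt (single_le_sum (f := fun j => pd j u x ^ 2) (fun _ _ => sq_nonneg _) (mem_univ i))

theorem abs_pd_inv_le {G M : ℝ} (ha : Differentiable ℝ a) (hpos : ∀ y, 0 < a y)
    (hG : ∀ y, √(gradSq a y) ≤ G) (hM : ∀ y, (a y)⁻¹ ≤ M) (i : Fin d) (x : ℝ^d) :
    |pd i (fun y => (a y)⁻¹) x| ≤ M ^ 2 * G := by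
  rw [pd_inv ha fun y => (hpos y).ne', abs_mul, abs_neg, ← inv_pow, abs_sq]
  have := inv_pos.2 (hpos x)
  gcongr
  exacts [hM x, (abs_pd_le_sqrt_gradSq a i x).trans (hG x)]

end Hessian

end

/-- Feynman–Kac criterion for the logarithmic Sobolev inequality:
if `κ_a = inf { 2 ρ₋(∇²V) - a L(a⁻¹) } > 0` (with `a`, `a⁻¹`, `|∇a|` bounded), then
`Ent_μ(f²) ≤ (4 ‖a‖_∞ ‖a⁻¹‖_∞ / κ_a) ∫ |∇f|² dμ`. -/
theorem lsi_general {d : ℕ} (hd : 1 ≤ d) (V a : EuclideanSpace ℝ (Fin d) → ℝ)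
    (hV : ContDiff ℝ (⊤ : ℕ∞) V)
    (hint : Integrable (fun x => Real.exp (-V x)))
    (hconv : ∃ ρ : ℝ, ∀ x, Matrix.PosSemidef (hess V x - ρ • 1))
    (ha : ContDiff ℝ (⊤ : ℕ∞) a) (hapos : ∀ x, 0 < a x)
    (haB : ∃ M : ℝ, ∀ x, a x ≤ M)
    (hainvB : ∃ M : ℝ, ∀ x, (a x)⁻¹ ≤ M)
    (hgradB : ∃ M : ℝ, ∀ x, Real.sqrt (gradSq a x) ≤ M)
    (hκ : 0 < ⨅ x, (2 * minEig (hess V x) - a x * diffOp V (fun y => (a y)⁻¹) x)) :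
    ∀ f : EuclideanSpace ℝ (Fin d) → ℝ, ContDiff ℝ (⊤ : ℕ∞) f → HasCompactSupport f →
      entropy (gibbs V) (fun x => f x ^ 2) ≤
        (4 * (⨆ x, a x) * (⨆ x, (a x)⁻¹) /
            ⨅ x, (2 * minEig (hess V x) - a x * diffOp V (fun y => (a y)⁻¹) x)) *
          ∫ x, gradSq f x ∂(gibbs V) := by
  intro f hf hfc
  obtain ⟨ρ, hρ⟩ := hconv
  obtain ⟨G, hG⟩ := hgradB
  have : NeZero d := ⟨by omega⟩
  have hκle := ciInf_le (not_imp_comm.1 Real.iInf_of_not_bddBelow hκ.ne')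
  have haA : ∀ x, a x ≤ ⨆ x, a x := le_ciSup (bddAbove_def.2 (haB.imp fun _ h => by simpa using h))
  have haM : ∀ x, (a x)⁻¹ ≤ ⨆ x, (a x)⁻¹ :=
    le_ciSup (bddAbove_def.2 (hainvB.imp fun _ h => by simpa using h))
  have hcurv x v : -max (-ρ) 0 * ∑ i, v i ^ 2 ≤ hessForm V x v :=
    (mul_le_mul_of_nonneg_right (neg_le.1 (le_max_left _ _))
      (sum_nonneg fun _ _ => sq_nonneg _)).trans (mul_sum_sq_le_hessForm (hρ x) v)
  obtain ⟨U, B, e, h⟩ := exists_tameExhaustion hV hint (le_max_right (-ρ) 0) hcurv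
    (ha.inv fun x => (hapos x).ne') (fun x => (inv_pos.2 (hapos x)).le) haM
    (fun i x => abs_pd_inv_le (ha.differentiable (by simp)) hapos hG haM i x)
    fun x => diffOp_add_mul_inv_mul_le (isHermitian_of_posSemidef_sub_smul_one (hρ x)) (hapos x)
      (hκle x)
  exact h.entropy_gibbs_sq_le hV.continuous hint hκ (le_max_right _ _)
    ((hapos 0).le.trans (haA 0))
    (fun x => (mul_inv_cancel₀ (hapos x).ne').symm.trans_le
      (mul_le_mul_of_nonneg_right (haA x) (inv_pos.2 (hapos x)).le)) haM hf hfc
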